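/- Let (ρ, u, B) be a smooth solution of the isentropic compressible MHD system with Navier-slip boundary conditions on Ω. Then for every 2 ≤ p < ∞ there is a constant C depending only on p, μ, and Ω such that: (i) ‖∇𝒫u‖_{L^p} + ‖ω‖_{L^p} ≤ C(‖ρu̇‖_{L²} + ‖B·∇B‖_{L²})^{1−2/p}‖∇u‖_{L²}^{2/p} + C‖∇u‖_{L²}; (ii) ‖F‖_{H¹} ≤ C(‖ρu̇‖_{L²} + ‖∇u‖_{L²} + ‖|B||∇B|‖_{L²} + ‖B‖²_{L⁴}); and (iii) ‖F‖_{L^p} ≤ C[(2μ+λ)‖div u‖_{L²} + ‖P−P̄‖_{L²}]^{2/p}(‖ρu̇‖_{L²} + ‖∇u‖_{L²} + ‖|B||∇B|‖_{L²})^{1−2/p} + C‖B‖²_{L^{2p}}. -/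

import Mathlib

noncomputable section

open MeasureTheory Real Set Filter Topology Bornology

/-- Points of the plane (with an equivalent norm to the Euclidean one). -/
abbrev V2 := Fin 2 → ℝ

namespace MHD

/-- `i`-th partial derivative of a scalar field. -/
def pd (i : Fin 2) (f : V2 → ℝ) (x : V2) : ℝ :=
  fderiv ℝ f x (Pi.single i 1)

/-- Gradient of a scalar field. -/
def grad (f : V2 → ℝ) (x : V2) : V2 := fun i => pd i f x

/-- Divergence of a planar vector field. -/
def div2 (u : V2 → V2) (x : V2) : ℝ := ∑ i, pd i (fun y => u y i) x

/-- (Scalar) curl of a planar vector field. -/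
def curl2 (u : V2 → V2) (x : V2) : ℝ :=
  pd 0 (fun y => u y 1) x - pd 1 (fun y => u y 0) x

/-- Laplacian of a scalar field. -/
def lap (f : V2 → ℝ) (x : V2) : ℝ := ∑ j, pd j (pd j f) x

/-- Euclidean inner product on the plane. -/
def dot (a b : V2) : ℝ := ∑ i, a i * b i

/-- Squared Euclidean norm on the plane. -/
def nsq (a : V2) : ℝ := ∑ i, (a i) ^ 2

/-- Rotation by -90 degrees : `perp (n¹,n²) = (n²,−n¹)`. -/
def perp (v : V2) : V2 := ![v 1, -(v 0)]

/-- Squared Frobenius norm of the spatial gradient of a vector field. -/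
def gnsq (u : V2 → V2) (x : V2) : ℝ := ∑ i, ∑ j, (pd j (fun y => u y i) x) ^ 2

/-- Squared Frobenius norm of the second spatial gradient of a vector field. -/
def g2nsq (u : V2 → V2) (x : V2) : ℝ :=
  ∑ i, ∑ j, ∑ k, (pd k (fun y => pd j (fun z => u z i) y) x) ^ 2

/-- `Lᵖ(Ω)` norm of a scalar field. -/
def LpS (p : ℝ) (Ω : Set V2) (f : V2 → ℝ) : ℝ :=
  (∫ x in Ω, |f x| ^ p) ^ (1 / p)

/-- `Lᵖ(Ω)` norm of a vector field (Euclidean norm pointwise). -/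
def LpV (p : ℝ) (Ω : Set V2) (u : V2 → V2) : ℝ :=
  (∫ x in Ω, (nsq (u x)) ^ (p / 2)) ^ (1 / p)

/-- `Lᵖ(Ω)` norm of the gradient of a vector field. -/
def LpG (p : ℝ) (Ω : Set V2) (u : V2 → V2) : ℝ :=
  (∫ x in Ω, (gnsq u x) ^ (p / 2)) ^ (1 / p)

/-- `Lᵖ(Ω)` norm of the second gradient of a vector field. -/
def LpG2 (p : ℝ) (Ω : Set V2) (u : V2 → V2) : ℝ :=
  (∫ x in Ω, (g2nsq u x) ^ (p / 2)) ^ (1 / p)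

/-- Average of a scalar field over `Ω`. -/
def avg (Ω : Set V2) (f : V2 → ℝ) : ℝ := (∫ x in Ω, f x) / (volume Ω).toReal

/-- Time derivative of a time dependent scalar field. -/
def dt (f : ℝ → V2 → ℝ) (t : ℝ) (x : V2) : ℝ := deriv (fun s => f s x) t

/-- Time derivative of a time dependent vector field. -/
def dtV (u : ℝ → V2 → V2) (t : ℝ) (x : V2) : V2 := fun i => dt (fun s y => u s y i) t x

/-- Material derivative `u̇ = u_t + (u·∇)u` of the velocity field itself. -/
def matD (u : ℝ → V2 → V2) (t : ℝ) (x : V2) : V2 := fun i =>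
  dt (fun s y => u s y i) t x + dot (u t x) (grad (fun y => u t y i) x)

/-- The material derivative `(div u)· = (div u)_t + u·∇ div u`. -/
def divdot (u : ℝ → V2 → V2) (t : ℝ) (x : V2) : ℝ :=
  deriv (fun s => div2 (u s) x) t + dot (u t x) (grad (fun y => div2 (u t) y) x)

/-- Average pressure `P̄` at time `t`. -/
def Pbar (Ω : Set V2) (a γ : ℝ) (ρ : ℝ → V2 → ℝ) (t : ℝ) : ℝ :=
  avg Ω (fun x => a * ρ t x ^ γ)

/-- Effective viscous flux `F = (2μ+λ) div u − (P − P̄) − |B|²/2`. -/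
def Fflux (Ω : Set V2) (a γ μ lam : ℝ) (ρ : ℝ → V2 → ℝ) (u B : ℝ → V2 → V2)
    (t : ℝ) (x : V2) : ℝ :=
  (2 * μ + lam) * div2 (u t) x - (a * ρ t x ^ γ - Pbar Ω a γ ρ t) - nsq (B t x) / 2

/-- Potential energy density `G(ρ)`. -/
def Gpot (a γ ρb : ℝ) (r : ℝ) : ℝ :=
  r * ∫ ξ in ρb..r, (a * ξ ^ γ - a * ρb ^ γ) / ξ ^ 2

/-- Initial total energy `C₀`. -/
def C0 (Ω : Set V2) (a γ : ℝ) (ρ₀ : V2 → ℝ) (u₀ B₀ : V2 → V2) : ℝ :=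
  ∫ x in Ω, (ρ₀ x * nsq (u₀ x) / 2 + nsq (B₀ x) / 2 + Gpot a γ (avg Ω ρ₀) (ρ₀ x))

/-- The time weight `σ(t) = min{1,t}`. -/
def tw (t : ℝ) : ℝ := min 1 t

/-- Smoothness (in time and space) of a time dependent scalar field. -/
def Smooth2 (f : ℝ → V2 → ℝ) : Prop := ContDiff ℝ (⊤ : ℕ∞) (fun p : ℝ × V2 => f p.1 p.2)

/-- Smoothness (in time and space) of a time dependent vector field. -/
def Smooth2V (u : ℝ → V2 → V2) : Prop := ∀ i, Smooth2 (fun t x => u t x i)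

/-- A bounded domain with smooth boundary, given by a smooth defining function `φ`,
with outward unit normal `n` on the boundary. -/
structure SmoothDomain (Ω : Set V2) (n : V2 → V2) : Prop where
  nonempty : Ω.Nonempty
  bounded : IsBounded Ω
  defining : ∃ φ : V2 → ℝ, ContDiff ℝ (⊤ : ℕ∞) φ ∧ Ω = {x | φ x < 0} ∧
      frontier Ω = {x | φ x = 0} ∧
      (∀ x ∈ frontier Ω, grad φ x ≠ 0) ∧
      (∀ x ∈ frontier Ω, n x = (Real.sqrt (nsq (grad φ x)))⁻¹ • grad φ x)

/-- Outward unit normal on the boundary of a convex domain, characterized by the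
supporting hyperplane property. -/
def ConvexOuterNormal (Ω : Set V2) (n : V2 → V2) : Prop :=
  ∀ x ∈ frontier Ω, nsq (n x) = 1 ∧ ∀ y ∈ closure Ω, dot (n x) (y - x) ≤ 0

/-- Membership in `H¹(Ω)` for (a smooth representative of) a vector field. -/
def InH1V (Ω : Set V2) (f : V2 → V2) : Prop :=
  (∀ i, Differentiable ℝ fun x => f x i) ∧
  IntegrableOn (fun x => nsq (f x)) Ω volume ∧ IntegrableOn (fun x => gnsq f x) Ω volume

/-- Classical (pointwise) solution of the isentropic compressible MHD system with
Navier-slip boundary conditions, for times in the set `I`. -/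
structure IsMHDSol (Ω : Set V2) (n : V2 → V2) (a γ μ lam ν : ℝ) (I : Set ℝ)
    (ρ : ℝ → V2 → ℝ) (u B : ℝ → V2 → V2) : Prop where
  mass : ∀ t ∈ I, ∀ x ∈ Ω,
    dt ρ t x + div2 (fun y j => ρ t y * u t y j) x = 0
  momentum : ∀ t ∈ I, ∀ x ∈ Ω, ∀ i,
    dt (fun s y => ρ s y * u s y i) t x
      + (∑ j, pd j (fun y => ρ t y * u t y i * u t y j) x)
      + pd i (fun y => a * ρ t y ^ γ) x
    = μ * lap (fun y => u t y i) x
      + (μ + lam) * pd i (fun y => div2 (u t) y) x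
      + dot (B t x) (grad (fun y => B t y i) x)
      - pd i (fun y => nsq (B t y)) x / 2
  magnetic : ∀ t ∈ I, ∀ x ∈ Ω, ∀ i,
    dt (fun s y => B s y i) t x + dot (u t x) (grad (fun y => B t y i) x)
      - dot (B t x) (grad (fun y => u t y i) x) + B t x i * div2 (u t) x
    = ν * lap (fun y => B t y i) x
  divB : ∀ t ∈ I, ∀ x ∈ Ω, div2 (B t) x = 0
  slipU : ∀ t ∈ I, ∀ x ∈ frontier Ω, dot (u t x) (n x) = 0 ∧ curl2 (u t) x = 0
  slipB : ∀ t ∈ I, ∀ x ∈ frontier Ω, dot (B t x) (n x) = 0 ∧ curl2 (B t) x = 0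


/-! ## Calculus -/

lemma pd_add {f g : V2 → ℝ} {x : V2} (i : Fin 2) (hf : DifferentiableAt ℝ f x)
    (hg : DifferentiableAt ℝ g x) : pd i (fun y => f y + g y) x = pd i f x + pd i g x := by
  unfold pd; rw [fderiv_fun_add hf hg]; rfl

lemma pd_sub {f g : V2 → ℝ} {x : V2} (i : Fin 2) (hf : DifferentiableAt ℝ f x)
    (hg : DifferentiableAt ℝ g x) : pd i (fun y => f y - g y) x = pd i f x - pd i g x := by
  unfold pd; rw [fderiv_fun_sub hf hg]; rfl

lemma pd_neg {f : V2 → ℝ} {x : V2} (i : Fin 2) : pd i (fun y => - f y) x = - pd i f x := by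
  unfold pd; rw [fderiv_fun_neg]; rfl

lemma pd_mul {f g : V2 → ℝ} {x : V2} (i : Fin 2) (hf : DifferentiableAt ℝ f x)
    (hg : DifferentiableAt ℝ g x) :
    pd i (fun y => f y * g y) x = pd i f x * g x + f x * pd i g x := by
  unfold pd; rw [fderiv_fun_mul hf hg]; simp; ring

lemma pd_const (i : Fin 2) (c : ℝ) (x : V2) : pd i (fun _ => c) x = 0 := by
  unfold pd; simp

lemma pd_coord (i j : Fin 2) (x : V2) : pd i (fun y : V2 => y j) x = if i = j then 1 else 0 := by
  unfold pd
  have : HasFDerivAt (fun y : V2 => y j) (ContinuousLinearMap.proj j : V2 →L[ℝ] ℝ) x :=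
    (ContinuousLinearMap.proj j : V2 →L[ℝ] ℝ).hasFDerivAt
  rw [this.fderiv]
  simp [Pi.single_apply, eq_comm]

lemma fderiv_eq_pd (f : V2 → ℝ) (x w : V2) : fderiv ℝ f x w = pd 0 f x * w 0 + pd 1 f x * w 1 := by
  have : w = w 0 • (Pi.single 0 1 : V2) + w 1 • (Pi.single 1 1 : V2) := by
    ext i; fin_cases i <;> simp
  conv_lhs => rw [this]
  rw [map_add, map_smul, map_smul]
  simp only [pd, smul_eq_mul]; ring

lemma cd_pd {f : V2 → ℝ} (hf : ContDiff ℝ (⊤ : ℕ∞) f) (i : Fin 2) :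
    ContDiff ℝ (⊤ : ℕ∞) (pd i f) := by
  have h := hf.fderiv_right (m := (⊤ : ℕ∞)) (by exact_mod_cast le_refl _)
  exact h.clm_apply contDiff_const

lemma c1_pd {f : V2 → ℝ} (hf : ContDiff ℝ 1 f) (i : Fin 2) : Continuous (pd i f) := by
  have h := hf.continuous_fderiv (by norm_num)
  exact h.clm_apply continuous_const

lemma cd_c1 {f : V2 → ℝ} (hf : ContDiff ℝ (⊤ : ℕ∞) f) : ContDiff ℝ 1 f :=
  hf.of_le (by exact_mod_cast le_top)

lemma cd_da {f : V2 → ℝ} (hf : ContDiff ℝ (⊤ : ℕ∞) f) (x : V2) : DifferentiableAt ℝ f x :=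
  (cd_c1 hf).differentiable (by norm_num) x

lemma pd_comm {f : V2 → ℝ} (hf : ContDiff ℝ (⊤ : ℕ∞) f) (i j : Fin 2) (x : V2) :
    pd i (pd j f) x = pd j (pd i f) x := by
  have hs : IsSymmSndFDerivAt ℝ f x :=
    hf.contDiffAt.isSymmSndFDerivAt (by rw [minSmoothness_of_isRCLikeNormedField]; exact WithTop.coe_le_coe.2 le_top)
  have hd : DifferentiableAt ℝ (fderiv ℝ f) x :=
    (hf.fderiv_right (m := (1 : ℕ∞)) (by exact_mod_cast le_top)).differentiable (by norm_num) x
  have key : ∀ i j : Fin 2, pd i (pd j f) x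
      = fderiv ℝ (fderiv ℝ f) x (Pi.single i 1) (Pi.single j 1) := by
    intro i j
    have : pd j f = fun y => fderiv ℝ f y (Pi.single j 1) := rfl
    rw [this]
    unfold pd
    rw [fderiv_clm_apply hd (differentiableAt_const _)]
    simp
  rw [key, key]
  exact hs.eq _ _

/-- equality on an open set gives equality of partial derivatives -/
lemma pd_congr {Ω : Set V2} (ho : IsOpen Ω) {f g : V2 → ℝ} (h : ∀ x ∈ Ω, f x = g x)
    (i : Fin 2) {x : V2} (hx : x ∈ Ω) : pd i f x = pd i g x := by
  unfold pd
  have : f =ᶠ[𝓝 x] g := by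
    filter_upwards [ho.mem_nhds hx] with y hy using h y hy
  rw [this.fderiv_eq]

lemma cd_cont {f : V2 → ℝ} (hf : ContDiff ℝ (⊤ : ℕ∞) f) : Continuous f := hf.continuous

/-- Bundled data: bounded convex domain with defining function. -/
structure Dom (Ω : Set V2) (φ : V2 → ℝ) : Prop where
  ne : Ω.Nonempty
  bdd : IsBounded Ω
  sm : ContDiff ℝ (⊤ : ℕ∞) φ
  eq : Ω = {x | φ x < 0}
  fr : frontier Ω = {x | φ x = 0}
  gr : ∀ x ∈ frontier Ω, grad φ x ≠ 0
  cv : Convex ℝ Ω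

namespace Dom
variable {Ω : Set V2} {φ : V2 → ℝ}

lemma isOpen (D : Dom Ω φ) : IsOpen Ω := by
  rw [D.eq]; exact isOpen_lt D.sm.continuous continuous_const

lemma meas (D : Dom Ω φ) : MeasurableSet Ω := D.isOpen.measurableSet

lemma cpt (D : Dom Ω φ) : IsCompact (closure Ω) := D.bdd.isCompact_closure

lemma mem (D : Dom Ω φ) {x : V2} : x ∈ Ω ↔ φ x < 0 := by
  have := D.eq
  constructor
  · intro h; rw [this] at h; exact h
  · intro h; rw [this]; exact h

lemma memfr (D : Dom Ω φ) {x : V2} : x ∈ frontier Ω ↔ φ x = 0 := by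
  rw [D.fr]; rfl

lemma memcl (D : Dom Ω φ) {x : V2} : x ∈ closure Ω ↔ φ x ≤ 0 := by
  constructor
  · intro h
    by_cases hx : x ∈ Ω
    · exact (D.mem.1 hx).le
    · have : x ∈ frontier Ω := by
        rw [D.isOpen.frontier_eq]; exact ⟨h, hx⟩
      exact (D.memfr.1 this).le
  · intro h
    rcases h.lt_or_eq with h | h
    · exact subset_closure (D.mem.2 h)
    · exact frontier_subset_closure (D.memfr.2 h)

lemma intOn (D : Dom Ω φ) {f : V2 → ℝ} (hf : Continuous f) : IntegrableOn f Ω :=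
  (hf.continuousOn.integrableOn_compact D.cpt).mono_set subset_closure

lemma near (D : Dom Ω φ) {g : V2 → ℝ} (hg : Continuous g) (hpos : ∀ x ∈ frontier Ω, 0 < g x) :
    ∃ e > 0, ∀ x, -e ≤ φ x → φ x ≤ 0 → 0 < g x := by
  have hK : IsCompact (closure Ω ∩ {x | g x ≤ 0}) :=
    D.cpt.inter_right (isClosed_le hg continuous_const)
  rcases (closure Ω ∩ {x | g x ≤ 0}).eq_empty_or_nonempty with h | h
  · refine ⟨1, one_pos, fun x _ h2 => ?_⟩
    by_contra hc
    have : x ∈ closure Ω ∩ {x | g x ≤ 0} := ⟨D.memcl.2 h2, not_lt.1 hc⟩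
    rw [h] at this; exact this
  · obtain ⟨z, hz, hmax⟩ := hK.exists_isMaxOn h D.sm.continuous.continuousOn
    have hz0 : φ z < 0 := by
      rcases (D.memcl.1 hz.1).lt_or_eq with h | h
      · exact h
      · exact absurd (hpos z (D.memfr.2 h)) (not_lt.2 hz.2)
    refine ⟨- φ z / 2, by linarith, fun x h1 h2 => ?_⟩
    by_contra hc
    have : φ x ≤ φ z := hmax ⟨D.memcl.2 h2, not_lt.1 hc⟩
    linarith

end Dom

lemma integral_pd_zero {f : V2 → ℝ} (hf : ContDiff ℝ 1 f) (hc : HasCompactSupport f) (i : Fin 2) :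
    ∫ x, pd i f x = 0 := by
  have hcont := c1_pd hf i
  have hcs : HasCompactSupport (pd i f) := hc.fderiv_apply ℝ _
  have h := integral_mul_fderiv_eq_neg_fderiv_mul_of_integrable (μ := (volume : Measure V2))
    (f := fun _ : V2 => (1:ℝ)) (g := f) (v := Pi.single i 1) (by simp)
    (by have h := hcont.integrable_of_hasCompactSupport (μ := volume) hcs
        simp only [one_mul]; exact h)
    (by simpa using hf.continuous.integrable_of_hasCompactSupport hc)
    (fun _ _ => differentiableAt_const _) (fun x _ => hf.differentiable (by norm_num) x)
  simpa [pd] using h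

/-- cut-off function -/
def cut (φ : V2 → ℝ) (e : ℝ) (x : V2) : ℝ := Real.smoothTransition (- φ x / e - 1)
/-- minus its normal density -/
def cutd (φ : V2 → ℝ) (e : ℝ) (x : V2) : ℝ := deriv Real.smoothTransition (- φ x / e - 1) / e

lemma smT_c1 : ContDiff ℝ 1 Real.smoothTransition :=
  Real.smoothTransition.contDiff (n := 1)

lemma cut_c1 {φ : V2 → ℝ} (hφ : ContDiff ℝ (⊤ : ℕ∞) φ) (e : ℝ) : ContDiff ℝ 1 (cut φ e) := by
  unfold cut
  exact smT_c1.comp ((((cd_c1 hφ).neg).div_const e).sub contDiff_const)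

lemma cutd_cont {φ : V2 → ℝ} (hφ : ContDiff ℝ (⊤ : ℕ∞) φ) (e : ℝ) : Continuous (cutd φ e) := by
  unfold cutd
  have h := smT_c1.continuous_deriv (by norm_num)
  exact (h.comp (((hφ.continuous.neg).div_const e).sub continuous_const)).div_const e

lemma pd_cut {φ : V2 → ℝ} (hφ : ContDiff ℝ (⊤ : ℕ∞) φ) (e : ℝ) (i : Fin 2) (x : V2) :
    pd i (cut φ e) x = - (cutd φ e x * pd i φ x) := by
  have h1 : HasFDerivAt (fun y => - φ y / e - 1) ((-1/e) • fderiv ℝ φ x) x := by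
    have := ((cd_da hφ x).hasFDerivAt.const_mul (-1/e)).sub_const 1
    have h0 : (fun y => - φ y / e - 1) = fun y => -1 / e * φ y - 1 := by
      ext y; ring
    rw [h0]; exact this
  have h2 : HasDerivAt Real.smoothTransition (deriv Real.smoothTransition (- φ x / e - 1))
      (- φ x / e - 1) := (smT_c1.differentiable (by norm_num) _).hasDerivAt
  have h3 := h2.comp_hasFDerivAt x h1
  have : fderiv ℝ (cut φ e) x = _ := h3.fderiv
  unfold pd
  rw [this]
  simp [cutd]; ring

lemma cutd_nonneg (φ : V2 → ℝ) {e : ℝ} (he : 0 < e) (x : V2) : 0 ≤ cutd φ e x :=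
  div_nonneg (Real.smoothTransition.monotone.deriv_nonneg) he.le

lemma smT_deriv_left {s : ℝ} (hs : s < 0) : deriv Real.smoothTransition s = 0 := by
  have : Real.smoothTransition =ᶠ[𝓝 s] fun _ => 0 := by
    filter_upwards [Iio_mem_nhds hs] with y hy using Real.smoothTransition.zero_of_nonpos hy.le
  rw [this.deriv_eq]; simp

lemma smT_deriv_right {s : ℝ} (hs : 1 < s) : deriv Real.smoothTransition s = 0 := by
  have : Real.smoothTransition =ᶠ[𝓝 s] fun _ => 1 := by
    filter_upwards [Ioi_mem_nhds hs] with y hy using Real.smoothTransition.one_of_one_le hy.le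
  rw [this.deriv_eq]; simp

lemma cutd_zero {φ : V2 → ℝ} {e : ℝ} (he : 0 < e) {x : V2} (h : φ x < -(2*e) ∨ 0 ≤ φ x) :
    cutd φ e x = 0 := by
  unfold cutd
  rcases h with h | h
  · rw [smT_deriv_right, zero_div]
    have : 2 < - φ x / e := by rw [lt_div_iff₀ he]; linarith
    linarith
  · rw [smT_deriv_left, zero_div]
    have : - φ x / e ≤ 0 := div_nonpos_of_nonpos_of_nonneg (by linarith) he.le
    linarith

lemma cut_zero {φ : V2 → ℝ} {e : ℝ} (he : 0 < e) {x : V2} (h : -e ≤ φ x) :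
    cut φ e x = 0 := by
  unfold cut
  apply Real.smoothTransition.zero_of_nonpos
  have : - φ x / e ≤ 1 := by rw [div_le_one he]; linarith
  linarith

lemma cut_one {φ : V2 → ℝ} {e : ℝ} (he : 0 < e) {x : V2} (h : φ x ≤ -(2*e)) :
    cut φ e x = 1 := by
  unfold cut
  apply Real.smoothTransition.one_of_one_le
  have : 2 ≤ - φ x / e := by rw [le_div_iff₀ he]; linarith
  linarith

lemma cut_mem (φ : V2 → ℝ) (e : ℝ) (x : V2) : 0 ≤ cut φ e x ∧ cut φ e x ≤ 1 :=
  ⟨Real.smoothTransition.nonneg _, Real.smoothTransition.le_one _⟩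

namespace Dom
variable {Ω : Set V2} {φ : V2 → ℝ}

lemma cut_cs (D : Dom Ω φ) {f : V2 → ℝ}
    (hf : ∀ x, 0 ≤ φ x → f x = 0) : HasCompactSupport f := by
  apply HasCompactSupport.intro D.cpt
  intro x hx
  apply hf
  by_contra h
  exact hx (D.memcl.2 (by linarith))

lemma div2_cont {X : V2 → V2} (hX : ∀ i, ContDiff ℝ 1 fun y => X y i) : Continuous (div2 X) := by
  unfold div2
  exact continuous_finsetSum _ fun i _ => c1_pd (hX i) i

/-- basic cut-off identity -/
lemma cut_id (D : Dom Ω φ) {e : ℝ} (he : 0 < e) {X : V2 → V2}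
    (hX : ∀ i, ContDiff ℝ 1 fun y => X y i) :
    ∫ x in Ω, cut φ e x * div2 X x = ∫ x, cutd φ e x * dot (X x) (grad φ x) := by
  have hout : ∀ x, x ∉ Ω → cut φ e x = 0 := fun x hx =>
    cut_zero he (by have := mt D.mem.2 hx; linarith)
  have h0 : ∫ x in Ω, cut φ e x * div2 X x = ∫ x, cut φ e x * div2 X x := by
    apply setIntegral_eq_integral_of_forall_compl_eq_zero
    intro x hx; rw [hout x hx, zero_mul]
  rw [h0]
  have hcs : ∀ i, HasCompactSupport (fun x => cut φ e x * X x i) := fun i =>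
    D.cut_cs (fun x hx => by rw [cut_zero he (by linarith), zero_mul])
  have hc1 : ∀ i, ContDiff ℝ 1 (fun x => cut φ e x * X x i) := fun i => (cut_c1 D.sm e).mul (hX i)
  have hz : ∫ x, ∑ i, pd i (fun x => cut φ e x * X x i) x = 0 := by
    rw [integral_finsetSum]
    · simp [integral_pd_zero (hc1 _) (hcs _)]
    · intro i _
      exact (c1_pd (hc1 i) i).integrable_of_hasCompactSupport ((hcs i).fderiv_apply ℝ _)
  have hpt : ∀ x, ∑ i, pd i (fun x => cut φ e x * X x i) x
      = cut φ e x * div2 X x - cutd φ e x * dot (X x) (grad φ x) := by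
    intro x
    have : ∀ i, pd i (fun x => cut φ e x * X x i) x = _ := fun i =>
      pd_mul i ((cut_c1 D.sm e).differentiable (by norm_num) x)
        ((hX i).differentiable (by norm_num) x)
    simp only [this, pd_cut D.sm, div2, dot, grad, Fin.sum_univ_two]
    ring
  simp only [hpt] at hz
  rw [integral_sub] at hz
  · linarith
  · apply Continuous.integrable_of_hasCompactSupport
    · exact (cut_c1 D.sm e).continuous.mul (div2_cont hX)
    · exact D.cut_cs (fun x hx => by rw [cut_zero he (by linarith), zero_mul])
  · apply Continuous.integrable_of_hasCompactSupport
    · refine (cutd_cont D.sm e).mul ?_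
      unfold dot grad
      exact continuous_finsetSum _ fun i _ => (hX i).continuous.mul (cd_pd D.sm i).continuous
    · exact D.cut_cs (fun x hx => by rw [cutd_zero he (Or.inr hx), zero_mul])

/-- limit of the cut-off integrals -/
lemma cut_lim (D : Dom Ω φ) {f : V2 → ℝ} (hf : Continuous f) :
    Tendsto (fun k : ℕ => ∫ x in Ω, cut φ (1/((k:ℝ)+1)) x * f x) atTop (𝓝 (∫ x in Ω, f x)) := by
  apply tendsto_integral_of_dominated_convergence (fun x => |f x|)
  · intro k
    exact ((cut_c1 D.sm _).continuous.mul hf).aestronglyMeasurable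
  · exact (D.intOn hf).abs
  · intro k
    filter_upwards with x
    have := cut_mem φ (1/((k:ℝ)+1)) x
    rw [Real.norm_eq_abs, abs_mul, abs_of_nonneg this.1]
    exact mul_le_of_le_one_left (abs_nonneg _) this.2
  · filter_upwards [ae_restrict_mem D.meas] with x hx
    have hx0 := D.mem.1 hx
    apply tendsto_const_nhds.congr'
    have : Tendsto (fun k : ℕ => 1/((k:ℝ)+1)) atTop (𝓝 0) := tendsto_one_div_add_atTop_nhds_zero_nat
    filter_upwards [this.eventually (gt_mem_nhds (show (0:ℝ) < - φ x/2 by linarith))] with k hk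
    rw [cut_one (by positivity) (by linarith), one_mul]

/-- One-sided divergence theorem. -/
lemma div_le (D : Dom Ω φ) {X : V2 → V2} (hX : ∀ i, ContDiff ℝ 1 fun y => X y i)
    (hX0 : ∀ x ∈ frontier Ω, dot (X x) (grad φ x) ≤ 0) : ∫ x in Ω, div2 X x ≤ 0 := by
  have hgc : ∀ i, ContDiff ℝ 1 fun y => grad φ y i := fun i => cd_c1 (cd_pd D.sm i)
  have hXg : Continuous fun x => dot (X x) (grad φ x) := by
    unfold dot
    exact continuous_finsetSum _ fun i _ => (hX i).continuous.mul (hgc i).continuous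
  have hgg : Continuous fun x => dot (grad φ x) (grad φ x) := by
    unfold dot
    exact continuous_finsetSum _ fun i _ => (hgc i).continuous.mul (hgc i).continuous
  have hggpos : ∀ x ∈ frontier Ω, 0 < dot (grad φ x) (grad φ x) := by
    intro x hx
    have h := D.gr x hx
    by_contra hc
    apply h
    simp only [dot, Fin.sum_univ_two] at hc
    have h0 : grad φ x 0 = 0 := by nlinarith [mul_self_nonneg (grad φ x 0), mul_self_nonneg (grad φ x 1)]
    have h1 : grad φ x 1 = 0 := by nlinarith [mul_self_nonneg (grad φ x 0), mul_self_nonneg (grad φ x 1)]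
    ext i; fin_cases i <;> simp [h0, h1]
  -- lower bound for the gradient near the boundary
  obtain ⟨c, hc, e0, he0, hlow⟩ : ∃ c > 0, ∃ e0 > 0, ∀ x, -e0 ≤ φ x → φ x ≤ 0 →
      c < dot (grad φ x) (grad φ x) := by
    rcases (frontier Ω).eq_empty_or_nonempty with h | h
    · obtain ⟨e, he, H⟩ := D.near (g := fun x => dot (grad φ x) (grad φ x) - 1)
        (hgg.sub continuous_const) (by rw [h]; simp)
      exact ⟨1, one_pos, e, he, fun x h1 h2 => by have := H x h1 h2; linarith⟩
    · have hcp : IsCompact (frontier Ω) :=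
        D.cpt.of_isClosed_subset isClosed_frontier frontier_subset_closure
      obtain ⟨z, hz, hmin⟩ := hcp.exists_isMinOn h hgg.continuousOn
      have hzp := hggpos z hz
      obtain ⟨e, he, H⟩ := D.near
        (g := fun x => dot (grad φ x) (grad φ x) - dot (grad φ z) (grad φ z)/2)
        (hgg.sub continuous_const) (fun x hx => by
          have : dot (grad φ z) (grad φ z) ≤ dot (grad φ x) (grad φ x) := hmin hx
          linarith)
      exact ⟨dot (grad φ z) (grad φ z)/2, by linarith, e, he,
        fun x h1 h2 => by have := H x h1 h2; linarith⟩
  set M : ℝ := (∫ x in Ω, |div2 (grad φ) x|) / c with hM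
  have hcut_int : ∀ {e : ℝ}, 0 < e → ∀ {g : V2 → ℝ}, Continuous g →
      Integrable (fun x => cutd φ e x * g x) := by
    intro e he g hg
    refine Continuous.integrable_of_hasCompactSupport (f := fun x => cutd φ e x * g x)
      ((cutd_cont D.sm e).mul hg) ?_
    exact D.cut_cs (fun x hx => by rw [cutd_zero he (Or.inr hx), zero_mul])
  have hmass : ∀ e, 0 < e → 2 * e ≤ e0 → ∫ x, cutd φ e x ≤ M := by
    intro e he he2
    rw [hM, le_div_iff₀ hc]
    calc (∫ x, cutd φ e x) * c = ∫ x, cutd φ e x * c := by rw [integral_mul_const]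
      _ ≤ ∫ x, cutd φ e x * dot (grad φ x) (grad φ x) := by
          apply integral_mono (hcut_int he continuous_const) (hcut_int he hgg)
          intro x
          by_cases hx : φ x < -(2*e) ∨ 0 ≤ φ x
          · simp [cutd_zero he hx]
          · push Not at hx
            exact mul_le_mul_of_nonneg_left (hlow x (by linarith) hx.2.le).le (cutd_nonneg φ he x)
      _ = ∫ x in Ω, cut φ e x * div2 (grad φ) x := (D.cut_id he hgc).symm
      _ ≤ ∫ x in Ω, |div2 (grad φ) x| := by
          apply integral_mono (D.intOn ((cut_c1 D.sm e).continuous.mul (div2_cont hgc)))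
            (D.intOn (div2_cont hgc).abs)
          intro x
          have := cut_mem φ e x
          calc cut φ e x * div2 (grad φ) x ≤ cut φ e x * |div2 (grad φ) x| :=
                mul_le_mul_of_nonneg_left (le_abs_self _) this.1
            _ ≤ _ := mul_le_of_le_one_left (abs_nonneg _) this.2
  have hM0 : 0 ≤ M := div_nonneg (integral_nonneg fun x => abs_nonneg _) hc.le
  -- conclusion
  apply le_of_forall_pos_le_add
  intro d hd
  have hd' : 0 < d / (M+1) := by positivity
  obtain ⟨e1, he1, H1⟩ := D.near (g := fun x => d/(M+1) - dot (X x) (grad φ x))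
    (continuous_const.sub hXg) (fun x hx => by have := hX0 x hx; linarith)
  apply le_of_tendsto (D.cut_lim (div2_cont hX))
  have : Tendsto (fun k : ℕ => 1/((k:ℝ)+1)) atTop (𝓝 0) := tendsto_one_div_add_atTop_nhds_zero_nat
  filter_upwards [this.eventually (gt_mem_nhds (show (0:ℝ) < e0/2 by linarith)),
    this.eventually (gt_mem_nhds (show (0:ℝ) < e1/2 by linarith))] with k hk0 hk1
  have he : 0 < 1/((k:ℝ)+1) := by positivity
  rw [D.cut_id he hX]
  generalize 1/((k:ℝ)+1) = e at *
  calc ∫ x, cutd φ e x * dot (X x) (grad φ x) ≤ ∫ x, cutd φ e x * (d/(M+1)) := by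
        apply integral_mono (hcut_int he hXg) (hcut_int he continuous_const)
        intro x
        by_cases hx : φ x < -(2*e) ∨ 0 ≤ φ x
        · simp [cutd_zero he hx]
        · push Not at hx
          refine mul_le_mul_of_nonneg_left ?_ (cutd_nonneg φ he x)
          have := H1 x (by linarith) hx.2.le
          linarith
    _ = (∫ x, cutd φ e x) * (d/(M+1)) := by rw [integral_mul_const]
    _ ≤ M * (d/(M+1)) := mul_le_mul_of_nonneg_right (hmass e he (by linarith)) hd'.le
    _ ≤ 0 + d := by
        rw [zero_add, mul_div_assoc', div_le_iff₀ (by linarith)]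
        nlinarith

/-- Divergence theorem for tangential fields. -/
lemma div_eq (D : Dom Ω φ) {X : V2 → V2} (hX : ∀ i, ContDiff ℝ 1 fun y => X y i)
    (hX0 : ∀ x ∈ frontier Ω, dot (X x) (grad φ x) = 0) : ∫ x in Ω, div2 X x = 0 := by
  apply le_antisymm (D.div_le hX fun x hx => (hX0 x hx).le)
  have h := D.div_le (X := fun y i => - X y i) (fun i => (hX i).neg) (fun x hx => by
    have := hX0 x hx
    simp only [dot, Fin.sum_univ_two] at this ⊢; linarith)
  have h2 : ∀ x, div2 (fun y i => - X y i) x = - div2 X x := by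
    intro x; simp [div2, pd_neg]
  simp only [h2, integral_neg] at h
  linarith

end Dom

namespace Dom
variable {Ω : Set V2} {φ : V2 → ℝ}

lemma grad_tangent (D : Dom Ω φ) {g : V2 → ℝ} (hg : ContDiff ℝ (⊤ : ℕ∞) g)
    (h0 : ∀ x ∈ frontier Ω, g x = 0) {x : V2} (hx : x ∈ frontier Ω) {w : V2}
    (hw : dot w (grad φ x) = 0) : dot w (grad g x) = 0 := by
  have hxe := D.memfr.1 hx
  have hext : IsLocalExtrOn g {y | φ y = φ x} x := by
    left
    filter_upwards [self_mem_nhdsWithin] with y hy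
    rw [h0 x hx, h0 y (D.memfr.2 (by rw [← hxe]; exact hy))]
  have s1 : HasStrictFDerivAt φ (fderiv ℝ φ x) x :=
    (cd_c1 D.sm).contDiffAt.hasStrictFDerivAt (by norm_num)
  have s2 : HasStrictFDerivAt g (fderiv ℝ g x) x :=
    (cd_c1 hg).contDiffAt.hasStrictFDerivAt (by norm_num)
  obtain ⟨a, b, hab, h⟩ := hext.exists_multipliers_of_hasStrictFDerivAt_1d s1 s2
  have hh : ∀ z, a * fderiv ℝ φ x z + b * fderiv ℝ g x z = 0 := fun z => by
    have := congrArg (fun L => L z) h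
    simpa using this
  have hb : b ≠ 0 := by
    rintro rfl
    have ha : a ≠ 0 := by rintro rfl; exact hab rfl
    apply D.gr x hx
    ext i
    have := hh (Pi.single i 1)
    have h2 : fderiv ℝ φ x (Pi.single i 1) = 0 := by simpa [ha] using this
    exact h2
  have h1 := hh w
  rw [fderiv_eq_pd, fderiv_eq_pd] at h1
  simp only [dot, grad, Fin.sum_univ_two] at hw ⊢
  have : b * (pd 0 g x * w 0 + pd 1 g x * w 1) = 0 := by
    have : pd 0 φ x * w 0 + pd 1 φ x * w 1 = 0 := by linarith
    rw [this] at h1; linarith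
  rcases mul_eq_zero.1 this with h | h
  · exact absurd h hb
  · linarith

lemma normal_neg (D : Dom Ω φ) {x y : V2} (hx : x ∈ frontier Ω) (hy : y ∈ Ω) :
    fderiv ℝ φ x (y - x) ≤ 0 := by
  have hd : HasDerivAt (fun s : ℝ => φ (x + s • (y - x))) (fderiv ℝ φ x (y - x)) 0 := by
    have h1 : HasDerivAt (fun s : ℝ => x + s • (y - x)) (y - x) 0 := by
      simpa using ((hasDerivAt_id (0:ℝ)).smul_const (y - x)).const_add x
    have h2 : HasFDerivAt φ (fderiv ℝ φ x) (x + (0:ℝ) • (y - x)) := by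
      simpa using (cd_da D.sm x).hasFDerivAt
    exact h2.comp_hasDerivAt (0:ℝ) h1
  have hneg : ∀ s : ℝ, 0 < s → s ≤ 1 → φ (x + s • (y - x)) < 0 := by
    intro s h0 h1
    apply D.mem.1
    have hxi : x ∈ closure Ω := frontier_subset_closure hx
    have hyi : y ∈ interior Ω := by rwa [D.isOpen.interior_eq]
    have := D.cv.combo_closure_interior_mem_interior hxi hyi (by linarith : 0 ≤ 1 - s) h0 (by ring)
    have h3 := interior_subset this
    convert h3 using 1
    ext i; simp; ring
  by_contra hc
  push Not at hc
  have := hd.hasDerivWithinAt (s := Ioi 0)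
  rw [hasDerivWithinAt_iff_tendsto_slope' (by simp)] at this
  have h3 := this.eventually (lt_mem_nhds hc)
  have h4 : ∀ᶠ s : ℝ in 𝓝[>] 0, s < 1 := nhdsWithin_le_nhds (gt_mem_nhds one_pos)
  obtain ⟨s, hs⟩ := (h3.and (h4.and self_mem_nhdsWithin)).exists
  obtain ⟨hs1, hs2, hs3⟩ := hs
  have hs3 : 0 < s := hs3
  have h5 := hneg s hs3 hs2.le
  rw [slope_def_field] at hs1
  simp only [zero_smul, add_zero, sub_zero, D.memfr.1 hx] at hs1
  exact absurd hs1 (not_lt.2 (div_nonpos_of_nonpos_of_nonneg h5.le hs3.le))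

lemma tangent_out (D : Dom Ω φ) {x w : V2} (hx : x ∈ frontier Ω)
    (hw : dot w (grad φ x) = 0) : 0 ≤ φ (x + w) := by
  by_contra hc
  push Not at hc
  have hm : x + w ∈ Ω := D.mem.2 hc
  -- move slightly in the direction of the gradient
  have hcont : Tendsto (fun s : ℝ => x + w + s • grad φ x) (𝓝[>] 0) (𝓝 (x + w)) := by
    have : Continuous (fun s : ℝ => x + w + s • grad φ x) := by fun_prop
    have h := this.tendsto 0
    simp only [zero_smul, add_zero] at h
    exact h.mono_left nhdsWithin_le_nhds
  obtain ⟨s, hs, hs0⟩ := ((hcont.eventually (D.isOpen.mem_nhds hm)).and self_mem_nhdsWithin).exists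
  have hs0 : 0 < s := hs0
  have h := D.normal_neg hx hs
  rw [fderiv_eq_pd] at h
  simp only [dot, grad, Fin.sum_univ_two, Pi.add_apply, Pi.sub_apply, Pi.smul_apply, smul_eq_mul] at h hw
  have h2 : s * (pd 0 φ x ^2 + pd 1 φ x ^2) ≤ 0 := by linarith
  have h3 : pd 0 φ x ^2 + pd 1 φ x ^2 ≤ 0 := by
    by_contra hh; push Not at hh; exact absurd h2 (not_le.2 (mul_pos hs0 hh))
  apply D.gr x hx
  ext i
  fin_cases i
  · show pd 0 φ x = 0
    nlinarith [sq_nonneg (pd 0 φ x), sq_nonneg (pd 1 φ x)]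
  · show pd 1 φ x = 0
    nlinarith [sq_nonneg (pd 0 φ x), sq_nonneg (pd 1 φ x)]

lemma line_deriv {f : V2 → ℝ} (hf : ContDiff ℝ (⊤ : ℕ∞) f) (x w : V2) (s : ℝ) :
    HasDerivAt (fun s : ℝ => f (x + s • w)) (pd 0 f (x + s • w) * w 0 + pd 1 f (x + s • w) * w 1) s := by
  rw [← fderiv_eq_pd]
  have h1 : HasDerivAt (fun s : ℝ => x + s • w) w s := by
    simpa using ((hasDerivAt_id s).smul_const w).const_add x
  exact (cd_da hf _).hasFDerivAt.comp_hasDerivAt s h1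

lemma hess_nonneg (D : Dom Ω φ) {x w : V2} (hx : x ∈ frontier Ω)
    (hw : dot w (grad φ x) = 0) :
    0 ≤ ∑ i, ∑ j, w i * w j * pd j (pd i φ) x := by
  set f : ℝ → ℝ := fun s => φ (x + s • w) with hf
  have hmin : ∀ s, 0 ≤ f s := fun s => D.tangent_out hx (by
    simp only [dot, Fin.sum_univ_two, Pi.smul_apply, smul_eq_mul] at hw ⊢
    linear_combination s * hw)
  have hf0 : f 0 = 0 := by simp [hf, D.memfr.1 hx]
  have hd1 : deriv f = fun s => pd 0 φ (x + s • w) * w 0 + pd 1 φ (x + s • w) * w 1 := by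
    ext s; exact (line_deriv D.sm x w s).deriv
  have hd2 : deriv (deriv f) 0 = ∑ i, ∑ j, w i * w j * pd j (pd i φ) x := by
    rw [hd1]
    have := ((line_deriv (cd_pd D.sm 0) x w 0).mul_const (w 0)).fun_add
      ((line_deriv (cd_pd D.sm 1) x w 0).mul_const (w 1))
    rw [HasDerivAt.deriv this]
    simp [Fin.sum_univ_two]; ring
  rw [← hd2]
  by_contra hc
  push Not at hc
  have hd0 : deriv f 0 = 0 := by
    rw [hd1]; simp only [dot, grad, Fin.sum_univ_two] at hw; simp; linarith
  have hcf : ContinuousAt f 0 := (line_deriv D.sm x w 0).continuousAt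
  have hmax := isLocalMax_of_deriv_deriv_neg hc hd0 hcf
  have hz : f =ᶠ[𝓝 0] fun _ => 0 := by
    filter_upwards [hmax] with s hs
    exact le_antisymm (by rw [← hf0]; exact hs) (hmin s)
  have hz2 : deriv (deriv f) 0 = 0 := by
    rw [hz.deriv.deriv_eq]; simp
  linarith

/-- `L²` gradient bound by the curl for solenoidal tangential fields on convex domains -/
lemma kadlec (D : Dom Ω φ) {w : V2 → V2} (hw : ∀ i, ContDiff ℝ (⊤ : ℕ∞) fun y => w y i)
    (hdiv : ∀ x ∈ Ω, div2 w x = 0) (ht : ∀ x ∈ frontier Ω, dot (w x) (grad φ x) = 0) :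
    ∫ x in Ω, gnsq w x ≤ ∫ x in Ω, (curl2 w x) ^ 2 := by
  set X : V2 → V2 := fun y i => w y 0 * pd 0 (fun z => w z i) y + w y 1 * pd 1 (fun z => w z i) y
    with hX
  have hXs : ∀ i, ContDiff ℝ (⊤ : ℕ∞) fun y => X y i := fun i =>
    ((hw 0).mul (cd_pd (hw i) 0)).add ((hw 1).mul (cd_pd (hw i) 1))
  have hpdX : ∀ i x, pd i (fun y => X y i) x =
      pd i (fun y => w y 0) x * pd 0 (fun z => w z i) x + w x 0 * pd i (pd 0 (fun z => w z i)) x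
      + (pd i (fun y => w y 1) x * pd 1 (fun z => w z i) x
        + w x 1 * pd i (pd 1 (fun z => w z i)) x) := by
    intro i x
    simp only [hX]
    rw [pd_add i (cd_da ((hw 0).mul (cd_pd (hw i) 0)) x) (cd_da ((hw 1).mul (cd_pd (hw i) 1)) x),
      pd_mul i (cd_da (hw 0) x) (cd_da (cd_pd (hw i) 0) x),
      pd_mul i (cd_da (hw 1) x) (cd_da (cd_pd (hw i) 1) x)]
  have hbd : ∀ x ∈ frontier Ω, dot (X x) (grad φ x) ≤ 0 := by
    intro x hx
    set g : V2 → ℝ := fun y => w y 0 * pd 0 φ y + w y 1 * pd 1 φ y with hg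
    have hgs : ContDiff ℝ (⊤ : ℕ∞) g :=
      ((hw 0).mul (cd_pd D.sm 0)).add ((hw 1).mul (cd_pd D.sm 1))
    have h1 := D.grad_tangent hgs (fun y hy => by
      have := ht y hy
      simpa [dot, grad, Fin.sum_univ_two, hg] using this) hx (ht x hx)
    have h2 := D.hess_nonneg hx (ht x hx)
    have h3 : ∀ j, pd j g x = pd j (fun y => w y 0) x * pd 0 φ x + w x 0 * pd j (pd 0 φ) x
        + (pd j (fun y => w y 1) x * pd 1 φ x + w x 1 * pd j (pd 1 φ) x) := by
      intro j
      rw [hg, pd_add j (cd_da ((hw 0).mul (cd_pd D.sm 0)) x) (cd_da ((hw 1).mul (cd_pd D.sm 1)) x),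
        pd_mul j (cd_da (hw 0) x) (cd_da (cd_pd D.sm 0) x),
        pd_mul j (cd_da (hw 1) x) (cd_da (cd_pd D.sm 1) x)]
    simp only [dot, grad, Fin.sum_univ_two, h3, hX] at h1 h2 ⊢
    nlinarith [h1, h2]
  have hle := D.div_le (fun i => cd_c1 (hXs i)) hbd
  have hcc : ∀ i j, Continuous (pd j fun z => w z i) := fun i j => (cd_pd (hw i) j).continuous
  have hcurl : Continuous fun x => (curl2 w x)^2 := by
    unfold curl2; exact ((hcc 1 0).sub (hcc 0 1)).pow 2
  have heq : ∫ x in Ω, gnsq w x = ∫ x in Ω, ((curl2 w x)^2 + div2 X x) := by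
    apply setIntegral_congr_fun D.meas
    intro x hx
    have hd := hdiv x hx
    have hdd : ∀ j, pd j (fun y => div2 w y) x = 0 := by
      intro j
      rw [pd_congr D.isOpen (g := fun _ => 0) (fun y hy => hdiv y hy) j hx, pd_const]
    have hdd2 : ∀ j, pd j (pd 0 (fun z => w z 0)) x + pd j (pd 1 (fun z => w z 1)) x = 0 := by
      intro j
      have := hdd j
      simp only [div2, Fin.sum_univ_two] at this
      rw [pd_add j (cd_da (cd_pd (hw 0) 0) x) (cd_da (cd_pd (hw 1) 1) x)] at this
      exact this
    have e0 := hdd2 0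
    have e1 := hdd2 1
    have c1 := pd_comm (hw 1) 0 1 x
    have c0 := pd_comm (hw 0) 0 1 x
    simp only [div2, Fin.sum_univ_two] at hd
    simp only [gnsq, curl2, div2, Fin.sum_univ_two, hpdX]
    rw [c1] at e0
    rw [← c0] at e1
    linear_combination - (w x 0) * e0 - (w x 1) * e1
  rw [heq, integral_add (D.intOn hcurl) (D.intOn (div2_cont fun i => cd_c1 (hXs i)))]
  linarith

/-- `H²` bound for Dirichlet functions on convex domains -/
lemma kadlec2 (D : Dom Ω φ) {k : V2 → ℝ} (hk : ContDiff ℝ (⊤ : ℕ∞) k)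
    (h0 : ∀ x ∈ frontier Ω, k x = 0) :
    ∫ x in Ω, ((pd 0 (pd 0 k) x)^2 + 2 * (pd 0 (pd 1 k) x)^2 + (pd 1 (pd 1 k) x)^2)
      ≤ ∫ x in Ω, (lap k x) ^ 2 := by
  set w : V2 → V2 := fun y => ![-(pd 1 k y), pd 0 k y] with hw
  have w0 : (fun y => w y 0) = fun y => -(pd 1 k y) := by ext y; simp [hw]
  have w1 : (fun y => w y 1) = fun y => pd 0 k y := by ext y; simp [hw]
  have hws : ∀ i, ContDiff ℝ (⊤ : ℕ∞) fun y => w y i := by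
    intro i; fin_cases i
    · show ContDiff ℝ (⊤ : ℕ∞) fun y => w y 0
      rw [w0]; exact (cd_pd hk 1).neg
    · show ContDiff ℝ (⊤ : ℕ∞) fun y => w y 1
      rw [w1]; exact cd_pd hk 0
  have := D.kadlec hws (fun x _ => by
      simp only [div2, Fin.sum_univ_two, w0, w1, pd_neg]
      rw [pd_comm hk 0 1]; simp) (fun x hx => by
      have h1 := D.grad_tangent hk h0 hx (w := ![-(pd 1 φ x), pd 0 φ x]) (by
        simp [dot, grad, Fin.sum_univ_two]; ring)
      simp [dot, grad, Fin.sum_univ_two, hw] at h1 ⊢; linarith)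
  convert this using 4 with x x
  · simp only [gnsq, Fin.sum_univ_two, w0, w1, pd_neg]
    rw [pd_comm hk 1 0]; ring
  · simp only [curl2, lap, Fin.sum_univ_two, w0, w1, pd_neg]; ring

end Dom

/-! ## Sobolev inequality -/

lemma lint_two {f : V2 → ENNReal} (hf : Measurable f) :
    ∫⁻ y, f y = ∫⁻ a : ℝ, ∫⁻ b : ℝ, f ![a, b] := by
  have h := (volume_preserving_finTwoArrow ℝ).symm
  have hm : Measurable fun z : ℝ × ℝ => f (MeasurableEquiv.finTwoArrow.symm z) :=
    hf.comp (MeasurableEquiv.measurable _)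
  rw [← h.lintegral_comp hf, Measure.volume_eq_prod, lintegral_prod _ hm.aemeasurable]
  rfl

/-- change of variables by a pair of independent directions -/
lemma lint_lin (e e' : V2) (hd : e 0 * e' 1 - e 1 * e' 0 ≠ 0) {f : V2 → ENNReal} (hf : Measurable f) :
    ∫⁻ y : V2, f (y 0 • e + y 1 • e')
      = ENNReal.ofReal |(e 0 * e' 1 - e 1 * e' 0)⁻¹| * ∫⁻ y, f y := by
  set T : V2 →ₗ[ℝ] V2 := Matrix.toLin' !![e 0, e' 0; e 1, e' 1] with hT
  have hdet : LinearMap.det T = e 0 * e' 1 - e 1 * e' 0 := by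
    rw [hT, LinearMap.det_toLin', Matrix.det_fin_two_of]; ring
  have hTy : ∀ y, T y = y 0 • e + y 1 • e' := by
    intro y
    rw [hT, Matrix.toLin'_apply]
    ext i; fin_cases i <;> simp [Matrix.mulVec, dotProduct, Fin.sum_univ_two] <;> ring
  have hmap := Measure.map_linearMap_addHaar_eq_smul_addHaar (volume : Measure V2)
    (f := T) (by rw [hdet]; exact hd)
  have hTm : Measurable T := (LinearMap.continuous_of_finiteDimensional T).measurable
  have : ∫⁻ y, f (T y) = ∫⁻ y, f y ∂(Measure.map T volume) := (lintegral_map hf hTm).symm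
  simp only [← hTy]
  rw [this, hmap, lintegral_smul_measure, hdet]
  rfl

lemma lw (e e' : V2) (hd : e 0 * e' 1 - e 1 * e' 0 ≠ 0) {g : V2 → ENNReal} (hg : Measurable g) :
    ∫⁻ x, (∫⁻ s : ℝ, g (x + s • e)) * (∫⁻ s : ℝ, g (x + s • e'))
      ≤ ENNReal.ofReal |(e 0 * e' 1 - e 1 * e' 0)⁻¹| * (∫⁻ x, g x) ^ 2 := by
  set d := e 0 * e' 1 - e 1 * e' 0 with hdd
  have hcm : ∀ v : V2, Measurable fun x : V2 => ∫⁻ s : ℝ, g (x + s • v) := by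
    intro v
    have : Measurable fun z : V2 × ℝ => g (z.1 + z.2 • v) :=
      hg.comp (by fun_prop)
    exact this.lintegral_prod_right'
  have hGm : Measurable fun z : ℝ × ℝ => g (z.1 • e + z.2 • e') := hg.comp (by fun_prop)
  have hGm' : Measurable fun z : ℝ × ℝ => g (z.2 • e + z.1 • e') := hg.comp (by fun_prop)
  set al : ℝ → ENNReal := fun b => ∫⁻ s : ℝ, g (s • e + b • e') with hal
  set be : ℝ → ENNReal := fun a => ∫⁻ s : ℝ, g (a • e + s • e') with hbe
  have halm : Measurable al := hGm'.lintegral_prod_right'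
  have hbem : Measurable be := hGm.lintegral_prod_right'
  have hgT : ∫⁻ a : ℝ, ∫⁻ b : ℝ, g (a • e + b • e') = ENNReal.ofReal |d⁻¹| * ∫⁻ y, g y := by
    rw [← lint_lin e e' hd hg, lint_two (f := fun y : V2 => g (y 0 • e + y 1 • e')) (hg.comp (by fun_prop))]
    simp
  have hb : ∫⁻ a, be a = ENNReal.ofReal |d⁻¹| * ∫⁻ y, g y := hgT
  have ha : ∫⁻ b, al b = ENNReal.ofReal |d⁻¹| * ∫⁻ y, g y := by
    rw [← hgT, hal]
    rw [lintegral_lintegral_swap hGm'.aemeasurable]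
  have key := lint_lin e e' hd ((hcm e).mul (hcm e'))
  have hA : ∀ a b : ℝ, (∫⁻ s : ℝ, g (a • e + b • e' + s • e)) = al b := by
    intro a b
    have : ∀ s : ℝ, g (a • e + b • e' + s • e) = (fun r : ℝ => g (r • e + b • e')) (s + a) := by
      intro s; simp only []; congr 1; rw [add_smul]; abel
    simp only [this]
    rw [lintegral_add_right_eq_self (fun r : ℝ => g (r • e + b • e')) a]
  have hA' : ∀ a b : ℝ, (∫⁻ s : ℝ, g (a • e + b • e' + s • e')) = be a := by
    intro a b
    have : ∀ s : ℝ, g (a • e + b • e' + s • e') = (fun r : ℝ => g (a • e + r • e')) (s + b) := by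
      intro s; simp only []; congr 1; rw [add_smul]; abel
    simp only [this]
    rw [lintegral_add_right_eq_self (fun r : ℝ => g (a • e + r • e')) b]
  have hL : ∫⁻ y : V2, ((fun x => ∫⁻ s : ℝ, g (x + s • e)) * (fun x => ∫⁻ s : ℝ, g (x + s • e')))
      (y 0 • e + y 1 • e') = (∫⁻ b, al b) * (∫⁻ a, be a) := by
    rw [lint_two]
    · simp only [Pi.mul_apply, Matrix.cons_val_zero, Matrix.cons_val_one, hA, hA']
      simp only [lintegral_mul_const _ halm, lintegral_const_mul _ hbem]
    · exact ((hcm e).mul (hcm e')).comp (by fun_prop)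
  rw [hL, ha, hb] at key
  set c := ENNReal.ofReal |d⁻¹| with hc
  have hc0 : c ≠ 0 := by
    rw [hc]; simp [hd]
  have hct : c ≠ ⊤ := ENNReal.ofReal_ne_top
  have h2 : c * (c * (∫⁻ x, g x)^2) = c * ∫⁻ x, (∫⁻ s : ℝ, g (x + s • e)) * (∫⁻ s : ℝ, g (x + s • e')) := by
    have : ∫⁻ y, ((fun x => ∫⁻ s : ℝ, g (x + s • e)) * (fun x => ∫⁻ s : ℝ, g (x + s • e'))) y =
      ∫⁻ x, (∫⁻ s : ℝ, g (x + s • e)) * (∫⁻ s : ℝ, g (x + s • e')) := rfl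
    rw [← this, ← key]; ring
  exact ((ENNReal.mul_right_inj hc0 hct).1 h2).ge

lemma line_deriv1 {f : V2 → ℝ} (hf : ContDiff ℝ 1 f) (x w : V2) (s : ℝ) :
    HasDerivAt (fun s : ℝ => f (x + s • w)) (pd 0 f (x + s • w) * w 0 + pd 1 f (x + s • w) * w 1) s := by
  rw [← fderiv_eq_pd]
  have h1 : HasDerivAt (fun s : ℝ => x + s • w) w s := by
    simpa using ((hasDerivAt_id s).smul_const w).const_add x
  exact ((hf.differentiable (by norm_num)) _).hasFDerivAt.comp_hasDerivAt s h1

/-- the `W^{1,1}` density -/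
def N1 (h : V2 → ℝ) (x : V2) : ℝ := |h x| + |pd 0 h x| + |pd 1 h x|

lemma N1_cont {h : V2 → ℝ} (hh : ContDiff ℝ 1 h) : Continuous (N1 h) :=
  (hh.continuous.abs.add (c1_pd hh 0).abs).add (c1_pd hh 1).abs

lemma N1_nonneg (h : V2 → ℝ) (x : V2) : 0 ≤ N1 h x := by unfold N1; positivity

lemma oned {f f' : ℝ → ℝ} (hf : ∀ s, HasDerivAt f (f' s) s) (hf' : Continuous f') :
    |f 0| ≤ ∫ s in (0:ℝ)..1, (|f s| + |f' s|) := by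
  have hfc : Continuous f := continuous_iff_continuousAt.2 fun s => (hf s).continuousAt
  have h1 : ∀ s ∈ Icc (0:ℝ) 1, |f 0| ≤ |f s| + ∫ r in (0:ℝ)..1, |f' r| := by
    intro s hs
    have e1 : ∫ r in (0:ℝ)..s, f' r = f s - f 0 :=
      intervalIntegral.integral_eq_sub_of_hasDerivAt (fun r _ => hf r) (hf'.intervalIntegrable _ _)
    have e2 : |∫ r in (0:ℝ)..s, f' r| ≤ ∫ r in (0:ℝ)..s, |f' r| :=
      intervalIntegral.abs_integral_le_integral_abs hs.1
    have e3 : ∫ r in (0:ℝ)..s, |f' r| ≤ ∫ r in (0:ℝ)..1, |f' r| := by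
      apply intervalIntegral.integral_mono_interval le_rfl hs.1 hs.2
      · exact Eventually.of_forall fun r => abs_nonneg _
      · exact hf'.abs.intervalIntegrable _ _
    have : |f 0| ≤ |f s| + |f s - f 0| := by
      have := abs_sub_abs_le_abs_sub (f 0) (f s)
      rw [abs_sub_comm] at this; linarith
    rw [e1] at e2; linarith
  have h2 : ∫ s in (0:ℝ)..1, |f 0| ≤ ∫ s in (0:ℝ)..1, (|f s| + ∫ r in (0:ℝ)..1, |f' r|) := by
    apply intervalIntegral.integral_mono_on zero_le_one
    · exact continuous_const.intervalIntegrable _ _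
    · exact (hfc.abs.add continuous_const).intervalIntegrable _ _
    · exact h1
  rw [intervalIntegral.integral_add (hfc.abs.intervalIntegrable _ _)
    (continuous_const.intervalIntegrable _ _)] at h2
  rw [intervalIntegral.integral_add (hfc.abs.intervalIntegrable _ _)
    (hf'.abs.intervalIntegrable _ _)]
  simpa using h2

lemma seg_bound {Ω : Set V2} {h : V2 → ℝ} (hh : ContDiff ℝ 1 h) {x e : V2} {M : ℝ}
    (hM : 1 ≤ M) (h0 : |e 0| ≤ M) (h1 : |e 1| ≤ M)
    (hx : ∀ s ∈ Icc (0:ℝ) 1, x + s • e ∈ Ω) :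
    ENNReal.ofReal |h x| ≤ ∫⁻ s : ℝ, Ω.indicator (fun y => ENNReal.ofReal (M * N1 h y)) (x + s • e) := by
  have hline : Continuous fun s : ℝ => x + s • e := by fun_prop
  have hc' : Continuous fun s : ℝ => pd 0 h (x + s • e) * e 0 + pd 1 h (x + s • e) * e 1 :=
    (((c1_pd hh 0).comp hline).mul continuous_const).add (((c1_pd hh 1).comp hline).mul continuous_const)
  have hb := oned (line_deriv1 hh x e) hc'
  have hcN : Continuous fun s : ℝ => M * N1 h (x + s • e) :=
    continuous_const.mul ((N1_cont hh).comp hline)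
  have hle : |h x| ≤ ∫ s in (0:ℝ)..1, M * N1 h (x + s • e) := by
    have : |h x| = |h (x + (0:ℝ) • e)| := by simp
    rw [this]
    refine hb.trans ?_
    apply intervalIntegral.integral_mono_on zero_le_one
    · exact (((hh.continuous.comp hline).abs).add hc'.abs).intervalIntegrable _ _
    · exact hcN.intervalIntegrable _ _
    · intro s _
      generalize x + s • e = y
      have a1 : |pd 0 h y * e 0 + pd 1 h y * e 1| ≤ |pd 0 h y| * M + |pd 1 h y| * M := by
        refine (abs_add_le _ _).trans ?_
        rw [abs_mul, abs_mul]
        gcongr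
      have a2 : |h y| ≤ M * |h y| := le_mul_of_one_le_left (abs_nonneg _) hM
      unfold N1; nlinarith
  calc ENNReal.ofReal |h x| ≤ ENNReal.ofReal (∫ s in (0:ℝ)..1, M * N1 h (x + s • e)) :=
        ENNReal.ofReal_le_ofReal hle
    _ = ∫⁻ s in Ioc (0:ℝ) 1, ENNReal.ofReal (M * N1 h (x + s • e)) := by
        rw [intervalIntegral.integral_of_le zero_le_one]
        apply ofReal_integral_eq_lintegral_ofReal
        · exact (hcN.integrableOn_Icc).mono_set Ioc_subset_Icc_self
        · exact Eventually.of_forall fun s => mul_nonneg (by linarith) (N1_nonneg h _)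
    _ = ∫⁻ s in Ioc (0:ℝ) 1, Ω.indicator (fun y => ENNReal.ofReal (M * N1 h y)) (x + s • e) := by
        apply setLIntegral_congr_fun measurableSet_Ioc
        intro s hs
        simp only []
        rw [indicator_of_mem (hx s ⟨hs.1.le, hs.2⟩)]
    _ ≤ _ := setLIntegral_le_lintegral _ _

lemma exists_dirs (z : V2) {r : ℝ} (hr : 0 < r) :
    ∃ e e' : V2, ‖e - z‖ < r ∧ ‖e' - z‖ < r ∧ e 0 * e' 1 - e 1 * e' 0 ≠ 0 := by
  by_cases hz : z = 0
  · subst hz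
    refine ⟨![r/2, 0], ![0, r/2], ?_, ?_, ?_⟩
    · rw [pi_norm_lt_iff hr]
      intro i; fin_cases i <;> simp [abs_of_pos hr, hr]
    · rw [pi_norm_lt_iff hr]
      intro i; fin_cases i <;> simp [abs_of_pos hr, hr]
    · simp; exact hr.ne'
  · have hn : 0 < ‖z‖ := norm_pos_iff.2 hz
    set δ := r / (2 * ‖z‖) with hδ
    have hδ0 : 0 < δ := by positivity
    have hb : ∀ i, δ * |z i| < r := by
      intro i
      have : |z i| ≤ ‖z‖ := norm_le_pi_norm z i
      calc δ * |z i| ≤ δ * ‖z‖ := by gcongr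
        _ = r/2 := by rw [hδ]; field_simp
        _ < r := by linarith
    refine ⟨z, ![z 0 - δ * z 1, z 1 + δ * z 0], by simpa using hr, ?_, ?_⟩
    · rw [pi_norm_lt_iff hr]
      intro i; fin_cases i
      · simp [abs_of_pos hδ0]; exact hb 1
      · simp [abs_of_pos hδ0]; exact hb 0
    · simp only [Matrix.cons_val_zero, Matrix.cons_val_one]
      have : z 0 * (z 1 + δ * z 0) - z 1 * (z 0 - δ * z 1) = δ * (z 0 ^2 + z 1 ^2) := by ring
      rw [this]
      have h2 : 0 < z 0 ^2 + z 1 ^2 := by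
        by_contra hc
        apply hz
        have h0 : z 0 = 0 := by nlinarith [sq_nonneg (z 0), sq_nonneg (z 1)]
        have h1 : z 1 = 0 := by nlinarith [sq_nonneg (z 0), sq_nonneg (z 1)]
        ext i; fin_cases i <;> simp [h0, h1]
      positivity

namespace Dom
variable {Ω : Set V2} {φ : V2 → ℝ}

lemma sob_local (D : Dom Ω φ) (x0 : V2) : ∃ U ∈ 𝓝 x0, ∃ K : ℝ, 0 ≤ K ∧ ∀ h : V2 → ℝ, ContDiff ℝ 1 h →
    ∫⁻ x in U ∩ Ω, ENNReal.ofReal (h x ^ 2)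
      ≤ ENNReal.ofReal K * (∫⁻ x in Ω, ENNReal.ofReal (N1 h x)) ^ 2 := by
  obtain ⟨c, hc⟩ := D.ne
  obtain ⟨r, hr, hball⟩ := Metric.isOpen_iff.1 D.isOpen c hc
  obtain ⟨e, e', h1, h2, hd⟩ := exists_dirs (c - x0) (half_pos hr)
  have hseg : ∀ e : V2, ‖e - (c - x0)‖ < r/2 → ∀ x ∈ Metric.ball x0 (r/2) ∩ Ω,
      ∀ s ∈ Icc (0:ℝ) 1, x + s • e ∈ Ω := by
    intro e he x hx s hs
    have hxe : x + e ∈ Ω := by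
      apply hball
      rw [Metric.mem_ball, dist_eq_norm]
      have : x + e - c = (e - (c - x0)) + (x - x0) := by abel
      rw [this]
      have h3 := hx.1
      rw [Metric.mem_ball, dist_eq_norm] at h3
      linarith [norm_add_le (e - (c - x0)) (x - x0)]
    have := D.cv hx.2 hxe (by linarith [hs.2] : 0 ≤ 1 - s) hs.1 (by ring)
    convert this using 1
    ext i; simp; ring
  set M : ℝ := 1 + |e 0| + |e 1| + |e' 0| + |e' 1| with hM
  have p1 := abs_nonneg (e 0)
  have p2 := abs_nonneg (e 1)
  have p3 := abs_nonneg (e' 0)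
  have p4 := abs_nonneg (e' 1)
  have hM1 : 1 ≤ M := by linarith
  refine ⟨Metric.ball x0 (r/2), Metric.ball_mem_nhds _ (half_pos hr),
    |(e 0 * e' 1 - e 1 * e' 0)⁻¹| * M^2, by positivity, ?_⟩
  intro h hh
  set g : V2 → ENNReal := Ω.indicator (fun y => ENNReal.ofReal (M * N1 h y)) with hg
  have hgm : Measurable g :=
    ((continuous_const.mul (N1_cont hh)).measurable.ennreal_ofReal).indicator D.meas
  calc ∫⁻ x in Metric.ball x0 (r/2) ∩ Ω, ENNReal.ofReal (h x ^ 2)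
      ≤ ∫⁻ x in Metric.ball x0 (r/2) ∩ Ω, (∫⁻ s : ℝ, g (x + s • e)) * (∫⁻ s : ℝ, g (x + s • e')) := by
        apply setLIntegral_mono' (Metric.isOpen_ball.measurableSet.inter D.meas)
        intro x hx
        rw [← sq_abs, sq, ENNReal.ofReal_mul (abs_nonneg _)]
        exact mul_le_mul' (seg_bound hh hM1 (by linarith) (by linarith) (hseg e h1 x hx))
          (seg_bound hh hM1 (by linarith) (by linarith) (hseg e' h2 x hx))
    _ ≤ ∫⁻ x, (∫⁻ s : ℝ, g (x + s • e)) * (∫⁻ s : ℝ, g (x + s • e')) := setLIntegral_le_lintegral _ _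
    _ ≤ ENNReal.ofReal |(e 0 * e' 1 - e 1 * e' 0)⁻¹| * (∫⁻ x, g x) ^ 2 := lw e e' hd hgm
    _ = _ := by
        have : ∫⁻ x, g x = ENNReal.ofReal M * ∫⁻ x in Ω, ENNReal.ofReal (N1 h x) := by
          rw [hg, lintegral_indicator D.meas, ← lintegral_const_mul]
          · congr 1; ext x; rw [ENNReal.ofReal_mul (by linarith)]
          · exact (N1_cont hh).measurable.ennreal_ofReal
        rw [this, mul_pow, ENNReal.ofReal_mul (abs_nonneg _), ENNReal.ofReal_pow (by linarith)]
        ring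

lemma sob_l (D : Dom Ω φ) : ∃ K : ℝ, 0 ≤ K ∧ ∀ h : V2 → ℝ, ContDiff ℝ 1 h →
    ∫⁻ x in Ω, ENNReal.ofReal (h x ^ 2)
      ≤ ENNReal.ofReal K * (∫⁻ x in Ω, ENNReal.ofReal (N1 h x)) ^ 2 := by
  have := D.cpt.induction_on (p := fun s => ∃ K : ℝ, 0 ≤ K ∧ ∀ h : V2 → ℝ, ContDiff ℝ 1 h →
    ∫⁻ x in s ∩ Ω, ENNReal.ofReal (h x ^ 2)
      ≤ ENNReal.ofReal K * (∫⁻ x in Ω, ENNReal.ofReal (N1 h x)) ^ 2)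
    ⟨0, le_rfl, by intro h _; simp⟩
    (by
      rintro s t hst ⟨K, hK, H⟩
      exact ⟨K, hK, fun h hh => (lintegral_mono_set (inter_subset_inter_left _ hst)).trans (H h hh)⟩)
    (by
      rintro s t ⟨K, hK, H⟩ ⟨K', hK', H'⟩
      refine ⟨K + K', by positivity, fun h hh => ?_⟩
      rw [union_inter_distrib_right, ENNReal.ofReal_add hK hK', add_mul]
      exact (lintegral_union_le _ _ _).trans (add_le_add (H h hh) (H' h hh)))
    (by
      intro x _
      obtain ⟨U, hU, K, hK, H⟩ := D.sob_local x
      exact ⟨U, mem_nhdsWithin_of_mem_nhds hU, K, hK, H⟩)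
  obtain ⟨K, hK, H⟩ := this
  refine ⟨K, hK, fun h hh => ?_⟩
  have := H h hh
  rwa [inter_eq_self_of_subset_right subset_closure] at this

/-- Sobolev `W^{1,1} ⊂ L²`. -/
lemma sob (D : Dom Ω φ) : ∃ K : ℝ, 0 ≤ K ∧ ∀ h : V2 → ℝ, ContDiff ℝ 1 h →
    ∫ x in Ω, h x ^ 2 ≤ K * (∫ x in Ω, N1 h x) ^ 2 := by
  obtain ⟨K, hK, H⟩ := D.sob_l
  refine ⟨K, hK, fun h hh => ?_⟩
  have h1 := H h hh
  rw [← ofReal_integral_eq_lintegral_ofReal (f := fun x => h x ^ 2) (D.intOn (hh.continuous.pow 2))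
      (Eventually.of_forall fun x => sq_nonneg _),
    ← ofReal_integral_eq_lintegral_ofReal (D.intOn (N1_cont hh))
      (Eventually.of_forall fun x => N1_nonneg h x),
    ← ENNReal.ofReal_pow (integral_nonneg fun x => N1_nonneg h x),
    ← ENNReal.ofReal_mul hK, ENNReal.ofReal_le_ofReal_iff (by positivity)] at h1
  exact h1

end Dom

/-! ## Gagliardo–Nirenberg and Poincaré -/

lemma cs_int {α : Type*} [MeasurableSpace α] {m : Measure α} {a b : α → ℝ}
    (ha : Integrable (fun x => a x ^ 2) m) (hb : Integrable (fun x => b x ^ 2) m)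
    (hab : Integrable (fun x => a x * b x) m) :
    (∫ x, a x * b x ∂m) ^ 2 ≤ (∫ x, a x ^ 2 ∂m) * (∫ x, b x ^ 2 ∂m) := by
  have h : ∀ t : ℝ, 0 ≤ (∫ x, b x ^ 2 ∂m) * (t * t) + (2 * ∫ x, a x * b x ∂m) * t + ∫ x, a x ^ 2 ∂m := by
    intro t
    have h0 : 0 ≤ ∫ x, (a x + t * b x) ^ 2 ∂m := integral_nonneg fun x => sq_nonneg _
    have h1 : ∀ x, (a x + t * b x) ^ 2 = a x ^ 2 + (2 * t) * (a x * b x) + (t*t) * (b x ^ 2) := by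
      intro x; ring
    simp only [h1] at h0
    have hs : Integrable (fun x => a x ^ 2 + (2 * t) * (a x * b x)) m := ha.add (hab.const_mul _)
    rw [integral_add hs (hb.const_mul _), integral_add ha (hab.const_mul _),
      integral_const_mul, integral_const_mul] at h0
    linarith
  have := discrim_le_zero h
  unfold discrim at this
  nlinarith

/-- squared `H¹` density -/
def q1 (f : V2 → ℝ) (x : V2) : ℝ := pd 0 f x ^ 2 + pd 1 f x ^ 2

lemma q1_cont {f : V2 → ℝ} (hf : ContDiff ℝ 1 f) : Continuous (q1 f) :=
  ((c1_pd hf 0).pow 2).add ((c1_pd hf 1).pow 2)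

lemma q1_nonneg (f : V2 → ℝ) (x : V2) : 0 ≤ q1 f x := by unfold q1; positivity

namespace Dom
variable {Ω : Set V2} {φ : V2 → ℝ}

lemma cs (D : Dom Ω φ) {a b : V2 → ℝ} (ha : Continuous a) (hb : Continuous b) :
    (∫ x in Ω, a x * b x) ^ 2 ≤ (∫ x in Ω, a x ^ 2) * (∫ x in Ω, b x ^ 2) :=
  cs_int (D.intOn (ha.pow 2)) (D.intOn (hb.pow 2)) (D.intOn (ha.mul hb))

lemma pd_pow {f : V2 → ℝ} (hf : ContDiff ℝ 1 f) (m : ℕ) (i : Fin 2) (x : V2) :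
    pd i (fun y => f y ^ (m+1)) x = (m+1) * f x ^ m * pd i f x := by
  have h := (hf.differentiable (by norm_num) x).hasFDerivAt.pow (m+1)
  unfold pd
  have h2 : fderiv ℝ (fun y => f y ^ (m+1)) x = _ := h.fderiv
  rw [h2]; simp

lemma gn_even (D : Dom Ω φ) (m : ℕ) : ∃ C : ℝ, 0 ≤ C ∧ ∀ f : V2 → ℝ, ContDiff ℝ 1 f →
    ∫ x in Ω, f x ^ (2*(m+1)) ≤ C * (∫ x in Ω, f x ^ 2) * (∫ x in Ω, (f x ^ 2 + q1 f x)) ^ m := by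
  obtain ⟨K, hK, HK⟩ := D.sob
  induction m with
  | zero => exact ⟨1, zero_le_one, fun f _ => by simp⟩
  | succ m ih =>
    obtain ⟨C, hC, H⟩ := ih
    refine ⟨K * (m+2)^2 * 3 * C, by positivity, fun f hf => ?_⟩
    have hfc := hf.continuous
    have h1 := HK (fun y => f y ^ (m+1+1)) (hf.pow _)
    have hN : ∀ x, N1 (fun y => f y ^ (m+1+1)) x ≤ |f x|^(m+1) * ((m+2) * N1 f x) := by
      intro x
      unfold N1
      rw [pd_pow hf, pd_pow hf, abs_mul, abs_mul, abs_mul, abs_mul, abs_pow, abs_pow, pow_succ]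
      push_cast
      have e1 : |(m:ℝ) + 1 + 1| = m + 2 := by rw [abs_of_nonneg (by positivity)]; ring
      rw [e1]
      have : 0 ≤ |f x|^(m+1) * |f x| * ((m:ℝ)+1) := by positivity
      nlinarith
    have hNc := N1_cont hf
    have h2 : ∫ x in Ω, N1 (fun y => f y ^ (m+1+1)) x
        ≤ ∫ x in Ω, |f x|^(m+1) * ((m+2) * N1 f x) := by
      apply integral_mono (D.intOn (N1_cont (hf.pow _)))
        (D.intOn ((hfc.abs.pow _).mul (continuous_const.mul hNc)))
      exact hN
    have h3 := D.cs (a := fun x => |f x|^(m+1)) (b := fun x => ((m:ℝ)+2) * N1 f x)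
      (hfc.abs.pow (m+1)) (continuous_const.mul hNc)
    have h4 : ∫ x in Ω, ((|f x|^(m+1))^2) = ∫ x in Ω, f x ^ (2*(m+1)) := by
      congr 1; ext x; rw [← abs_pow, sq_abs, ← pow_mul]; ring_nf
    have h5 : ∫ x in Ω, (((m:ℝ)+2) * N1 f x)^2 ≤ ∫ x in Ω, (m+2)^2*3 * (f x ^2 + q1 f x) := by
      apply integral_mono (D.intOn ((continuous_const.mul hNc).pow 2))
        (D.intOn (continuous_const.mul ((hfc.pow 2).add (q1_cont hf))))
      intro x
      show (((m:ℝ)+2) * N1 f x)^2 ≤ (m+2)^2*3 * (f x ^2 + q1 f x)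
      rw [mul_pow, mul_assoc]
      apply mul_le_mul_of_nonneg_left _ (by positivity)
      unfold N1 q1
      rw [← sq_abs (f x), ← sq_abs (pd 0 f x), ← sq_abs (pd 1 f x)]
      nlinarith [sq_nonneg (|f x| - |pd 0 f x|), sq_nonneg (|f x| - |pd 1 f x|),
        sq_nonneg (|pd 0 f x| - |pd 1 f x|)]
    rw [integral_const_mul] at h5
    have h0 : 0 ≤ ∫ x in Ω, N1 (fun y => f y ^ (m+1+1)) x := integral_nonneg fun x => N1_nonneg _ x
    have hI : 0 ≤ ∫ x in Ω, f x ^ (2*(m+1)) := integral_nonneg fun x => by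
      rw [pow_mul]; positivity
    have hH : 0 ≤ ∫ x in Ω, (f x ^2 + q1 f x) := integral_nonneg fun x =>
      add_nonneg (sq_nonneg _) (q1_nonneg _ _)
    have h6 : ∫ x in Ω, f x ^ (2*(m+1+1)) = ∫ x in Ω, (f x ^ (m+1+1))^2 := by
      congr 1; ext x; rw [← pow_mul]; ring_nf
    rw [h6]
    calc ∫ x in Ω, (f x ^ (m+1+1))^2 ≤ K * (∫ x in Ω, N1 (fun y => f y ^ (m+1+1)) x)^2 := h1
      _ ≤ K * (∫ x in Ω, |f x|^(m+1) * ((m+2) * N1 f x))^2 := by gcongr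
      _ ≤ K * ((∫ x in Ω, f x ^ (2*(m+1))) * ((m+2)^2*3 * ∫ x in Ω, (f x ^2 + q1 f x))) := by
          apply mul_le_mul_of_nonneg_left _ hK
          refine h3.trans ?_
          rw [h4]
          exact mul_le_mul_of_nonneg_left h5 hI
      _ ≤ K * ((C * (∫ x in Ω, f x ^ 2) * (∫ x in Ω, (f x ^ 2 + q1 f x)) ^ m) *
            ((m+2)^2*3 * ∫ x in Ω, (f x ^2 + q1 f x))) := by
          apply mul_le_mul_of_nonneg_left _ hK
          apply mul_le_mul_of_nonneg_right (H f hf)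
          positivity
      _ = _ := by rw [pow_succ (∫ x in Ω, (f x ^ 2 + q1 f x)) m]; ring

lemma memLp (D : Dom Ω φ) {f : V2 → ℝ} (hf : Continuous f) (p : ENNReal) :
    MemLp f p (volume.restrict Ω) := by
  have : IsFiniteMeasure (volume.restrict Ω) := ⟨by
    rw [Measure.restrict_apply_univ]; exact D.bdd.measure_lt_top⟩
  obtain ⟨M, hM⟩ := (D.cpt.image hf.norm).bddAbove
  refine MemLp.of_bound hf.aestronglyMeasurable M ?_
  filter_upwards [ae_restrict_mem D.meas] with x hx
  exact hM ⟨x, subset_closure hx, rfl⟩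

lemma gn_real (D : Dom Ω φ) {p : ℝ} (hp : 2 ≤ p) : ∃ C : ℝ, 0 ≤ C ∧ ∀ f : V2 → ℝ, ContDiff ℝ 1 f →
    ∫ x in Ω, |f x| ^ p ≤ C * (∫ x in Ω, f x ^ 2) * (∫ x in Ω, (f x ^ 2 + q1 f x)) ^ ((p-2)/2) := by
  rcases hp.eq_or_lt with rfl | hp
  · exact ⟨1, zero_le_one, fun f _ => by simp⟩
  set m := ⌈p⌉₊ with hm
  have hpm : p ≤ m := Nat.le_ceil p
  have hm0 : (0:ℝ) < m := by linarith
  set θ := (p-2)/(2*m) with hθ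
  have hθ0 : 0 < θ := by apply div_pos <;> linarith
  have hθ1 : θ < 1 := by rw [hθ, div_lt_one (by linarith)]; linarith
  obtain ⟨C, hC, H⟩ := D.gn_even m
  refine ⟨C ^ θ, by positivity, fun f hf => ?_⟩
  have hfc := hf.continuous
  have hconj : (1/(1-θ)).HolderConjugate (1/θ) := by
    rw [Real.holderConjugate_iff]
    constructor
    · rw [lt_div_iff₀ (by linarith)]; linarith
    · simp
  have hca : ∀ {r : ℝ}, 0 ≤ r → Continuous fun x => |f x| ^ r := fun hr =>
    hfc.abs.rpow_const fun x => Or.inr hr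
  have hh := integral_mul_le_Lp_mul_Lq_of_nonneg (μ := volume.restrict Ω) hconj
    (f := fun x => |f x| ^ (2*(1-θ))) (g := fun x => |f x| ^ (2*(m+1)*θ))
    (Eventually.of_forall fun x => by positivity) (Eventually.of_forall fun x => by positivity)
    (D.memLp (hca (by nlinarith)) _) (D.memLp (hca (by positivity)) _)
  have e1 : ∀ x, |f x| ^ (2*(1-θ)) * |f x| ^ (2*(m+1)*θ) = |f x| ^ p := by
    intro x
    rw [← rpow_add_of_nonneg (abs_nonneg _) (by nlinarith) (by positivity)]
    congr 1
    rw [hθ]; field_simp; ring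
  have e2 : ∀ x, (|f x| ^ (2*(1-θ))) ^ (1/(1-θ)) = f x ^ 2 := by
    intro x
    rw [← rpow_mul (abs_nonneg _)]
    have : 2*(1-θ)*(1/(1-θ)) = 2 := by
      have : 1 - θ ≠ 0 := by linarith
      field_simp
    rw [this]; simp
  have e3 : ∀ x, (|f x| ^ (2*(m+1)*θ)) ^ (1/θ) = f x ^ (2*(m+1)) := by
    intro x
    rw [← rpow_mul (abs_nonneg _)]
    have : 2*((m:ℝ)+1)*θ*(1/θ) = ((2*(m+1) : ℕ) : ℝ) := by
      push_cast; field_simp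
    rw [this, rpow_natCast, pow_mul, sq_abs, ← pow_mul]
  simp only [e1, e2, e3, one_div_one_div] at hh
  set I := ∫ x in Ω, f x ^ 2 with hI
  set E := ∫ x in Ω, (f x ^ 2 + q1 f x) with hE
  have hI0 : 0 ≤ I := integral_nonneg fun x => sq_nonneg _
  have hE0 : 0 ≤ E := integral_nonneg fun x => add_nonneg (sq_nonneg _) (q1_nonneg _ _)
  have hJ0 : 0 ≤ ∫ x in Ω, f x ^ (2*(m+1)) := integral_nonneg fun x => by
    rw [pow_mul]; positivity
  calc ∫ x in Ω, |f x| ^ p ≤ I ^ (1-θ) * (∫ x in Ω, f x ^ (2*(m+1))) ^ θ := hh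
    _ ≤ I ^ (1-θ) * (C * I * E^m) ^ θ := by
        gcongr
        exact H f hf
    _ = C ^ θ * (I ^ (1-θ) * I ^ θ) * (E^m)^θ := by
        rw [mul_rpow (by positivity) (by positivity), mul_rpow hC hI0]; ring
    _ = C ^ θ * I * E ^ ((p-2)/2) := by
        rw [← rpow_add_of_nonneg hI0 (by linarith) hθ0.le, ← rpow_natCast E m, ← rpow_mul hE0]
        have : (m:ℝ) * θ = (p-2)/2 := by rw [hθ]; field_simp
        rw [this]; simp

/-- Gagliardo–Nirenberg in norm form -/
lemma gn (D : Dom Ω φ) {p : ℝ} (hp : 2 ≤ p) : ∃ C : ℝ, 0 ≤ C ∧ ∀ f : V2 → ℝ, ContDiff ℝ 1 f →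
    LpS p Ω f ≤ C * (√(∫ x in Ω, f x ^ 2)) ^ (2/p) *
      (√(∫ x in Ω, (f x ^ 2 + q1 f x))) ^ (1 - 2/p) := by
  obtain ⟨C, hC, H⟩ := D.gn_real hp
  have hp0 : 0 < p := by linarith
  refine ⟨C ^ (1/p), by positivity, fun f hf => ?_⟩
  set I := ∫ x in Ω, f x ^ 2 with hI
  set E := ∫ x in Ω, (f x ^ 2 + q1 f x) with hE
  have hI0 : 0 ≤ I := integral_nonneg fun x => sq_nonneg _
  have hE0 : 0 ≤ E := integral_nonneg fun x => add_nonneg (sq_nonneg _) (q1_nonneg _ _)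
  unfold LpS
  calc (∫ x in Ω, |f x| ^ p) ^ (1/p) ≤ (C * I * E ^ ((p-2)/2)) ^ (1/p) := by
        apply rpow_le_rpow (integral_nonneg fun x => by positivity) (H f hf) (by positivity)
    _ = C ^ (1/p) * I ^ (1/p) * (E ^ ((p-2)/2)) ^ (1/p) := by
        rw [mul_rpow (by positivity) (by positivity), mul_rpow hC hI0]
    _ = _ := by
        rw [sqrt_eq_rpow, sqrt_eq_rpow, ← rpow_mul hE0, ← rpow_mul hI0, ← rpow_mul hE0]
        congr 2
        · congr 1; field_simp
        · field_simp

lemma lint_scale (a : V2) {s : ℝ} (hs : 1/2 ≤ s) {g : V2 → ENNReal} (hg : Measurable g) :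
    ∫⁻ y, g (a + s • y) ≤ 4 * ∫⁻ y, g y := by
  have hs0 : 0 < s := by linarith
  have h := lint_lin ![s, 0] ![0, s] (by simp; exact hs0.ne') (f := fun z => g (a + z))
    (hg.comp (by fun_prop))
  have e : ∀ y : V2, a + (y 0 • ![s, 0] + y 1 • ![0, s]) = a + s • y := by
    intro y; ext i; fin_cases i <;> simp <;> ring
  simp only [e] at h
  rw [h, lintegral_add_left_eq_self g a]
  gcongr
  have : |((![s, 0] : V2) 0 * (![0, s] : V2) 1 - (![s, 0] : V2) 1 * (![0, s] : V2) 0)⁻¹| ≤ 4 := by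
    simp
    rw [abs_of_pos hs0, ← mul_inv]
    rw [inv_le_comm₀ (by positivity) (by norm_num)]
    nlinarith
  calc _ ≤ ENNReal.ofReal 4 := ENNReal.ofReal_le_ofReal this
    _ = 4 := by norm_num

lemma jensen1 {f : V2 → ℝ} (hf : ContDiff ℝ 1 f) (x y : V2) :
    (f y - f x)^2 ≤ ∫ s in (0:ℝ)..1, ((y-x) 0 ^2 + (y-x) 1 ^2) * q1 f (x + s • (y - x)) := by
  set w := y - x with hw
  have hline : Continuous fun s : ℝ => x + s • w := by fun_prop
  set F' : ℝ → ℝ := fun s => pd 0 f (x + s • w) * w 0 + pd 1 f (x + s • w) * w 1 with hF'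
  have hc' : Continuous F' :=
    (((c1_pd hf 0).comp hline).mul continuous_const).add (((c1_pd hf 1).comp hline).mul continuous_const)
  have e1 : ∫ r in (0:ℝ)..1, F' r = f y - f x := by
    have := intervalIntegral.integral_eq_sub_of_hasDerivAt (fun r _ => line_deriv1 hf x w r)
      (hc'.intervalIntegrable 0 1)
    rw [this, hw]; simp
  rw [← e1]
  rw [intervalIntegral.integral_of_le zero_le_one, intervalIntegral.integral_of_le zero_le_one]
  have hio : ∀ {g : ℝ → ℝ}, Continuous g → Integrable g (volume.restrict (Ioc (0:ℝ) 1)) := fun hg =>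
    hg.integrableOn_Icc.mono_set Ioc_subset_Icc_self
  have h := cs_int (m := volume.restrict (Ioc (0:ℝ) 1)) (a := F') (b := fun _ => 1)
    (hio (hc'.pow 2)) (by simp) (by simpa using hio hc')
  simp only [mul_one, one_pow, integral_const] at h
  simp at h
  refine h.trans ?_
  apply integral_mono (hio (hc'.pow 2)) (hio (continuous_const.mul ((q1_cont hf).comp hline)))
  intro s
  show F' s ^ 2 ≤ (w 0^2 + w 1^2) * q1 f (x + s • w)
  simp only [hF', q1]
  nlinarith [sq_nonneg (pd 0 f (x + s • w) * w 1 - pd 1 f (x + s • w) * w 0)]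

lemma poincare (D : Dom Ω φ) : ∃ C : ℝ, 0 ≤ C ∧ ∀ f : V2 → ℝ, ContDiff ℝ 1 f →
    ∫ x in Ω, f x = 0 → ∫ x in Ω, f x ^ 2 ≤ C * ∫ x in Ω, q1 f x := by
  set d := Metric.diam Ω with hd
  set R := 2 * d^2 with hR
  have hR0 : 0 ≤ R := by positivity
  have : IsFiniteMeasure (volume.restrict Ω) := ⟨by
    rw [Measure.restrict_apply_univ]; exact D.bdd.measure_lt_top⟩
  set μ := (volume : Measure V2).restrict Ω with hμ
  refine ⟨2 * R, by positivity, fun f hf hmean => ?_⟩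
  have hfc := hf.continuous
  set g : V2 → ENNReal := Ω.indicator (fun y => ENNReal.ofReal (q1 f y)) with hg
  have hgm : Measurable g := ((q1_cont hf).measurable.ennreal_ofReal).indicator D.meas
  have hG : ∫⁻ x, g x = ENNReal.ofReal (∫ x in Ω, q1 f x) := by
    rw [hg, lintegral_indicator D.meas, ofReal_integral_eq_lintegral_ofReal (D.intOn (q1_cont hf))
      (Eventually.of_forall fun x => q1_nonneg _ _)]
  -- pointwise bound
  have hpt : ∀ x ∈ Ω, ∀ y ∈ Ω, ENNReal.ofReal ((f y - f x)^2)
      ≤ ENNReal.ofReal R * ∫⁻ s in Ioc (0:ℝ) 1, g (x + s • (y - x)) := by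
    intro x hx y hy
    have hline : Continuous fun s : ℝ => x + s • (y - x) := by fun_prop
    have hb : ∀ i, (y - x) i ^ 2 ≤ d^2 := by
      intro i
      rw [← sq_abs]
      have h1 : |(y - x) i| ≤ ‖y - x‖ := norm_le_pi_norm (y - x) i
      have h2 : ‖y - x‖ ≤ d := by rw [← dist_eq_norm]; exact Metric.dist_le_diam_of_mem D.bdd hy hx
      gcongr
      linarith
    have h1 : (f y - f x)^2 ≤ ∫ s in Ioc (0:ℝ) 1, R * q1 f (x + s • (y - x)) := by
      refine (jensen1 hf x y).trans ?_
      rw [← intervalIntegral.integral_of_le zero_le_one]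
      apply intervalIntegral.integral_mono_on zero_le_one
      · exact (continuous_const.mul ((q1_cont hf).comp hline)).intervalIntegrable _ _
      · exact (continuous_const.mul ((q1_cont hf).comp hline)).intervalIntegrable _ _
      · intro s _
        apply mul_le_mul_of_nonneg_right _ (q1_nonneg _ _)
        linarith [hb 0, hb 1]
    refine (ENNReal.ofReal_le_ofReal h1).trans ?_
    rw [ofReal_integral_eq_lintegral_ofReal, ← lintegral_const_mul]
    · apply le_of_eq
      apply setLIntegral_congr_fun measurableSet_Ioc
      intro s hs
      have hm : x + s • (y - x) ∈ Ω := by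
        have := D.cv hx hy (by linarith [hs.2] : 0 ≤ 1 - s) hs.1.le (by ring)
        convert this using 1
        ext i; simp; ring
      simp only []
      rw [hg, indicator_of_mem hm, ENNReal.ofReal_mul hR0]
    · exact hgm.comp hline.measurable
    · exact (continuous_const.mul ((q1_cont hf).comp hline)).integrableOn_Icc.mono_set
        Ioc_subset_Icc_self
    · exact Eventually.of_forall fun s => mul_nonneg hR0 (q1_nonneg _ _)
  -- J(s)
  have hJ : ∀ s : ℝ, ∫⁻ z, g (z.1 + s • (z.2 - z.1)) ∂(μ.prod μ) ≤ volume Ω * (4 * ∫⁻ x, g x) := by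
    intro s
    have hm : Measurable fun z : V2 × V2 => g (z.1 + s • (z.2 - z.1)) := hgm.comp (by fun_prop)
    rcases le_total (1/2) s with hs | hs
    · rw [lintegral_prod _ hm.aemeasurable]
      calc _ ≤ ∫⁻ x, (4 * ∫⁻ x, g x) ∂μ := by
            apply lintegral_mono
            intro x
            calc ∫⁻ y, g (x + s • (y - x)) ∂μ ≤ ∫⁻ y, g (x + s • (y - x)) := setLIntegral_le_lintegral _ _
              _ = ∫⁻ y, g ((x - s • x) + s • y) := by
                  congr 1; ext y; congr 1; rw [smul_sub]; abel
              _ ≤ _ := lint_scale _ hs hgm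
        _ = _ := by rw [lintegral_const, hμ, Measure.restrict_apply_univ, mul_comm]
    · rw [lintegral_prod_symm _ hm.aemeasurable]
      calc _ ≤ ∫⁻ x, (4 * ∫⁻ x, g x) ∂μ := by
            apply lintegral_mono
            intro y
            calc ∫⁻ x, g (x + s • (y - x)) ∂μ ≤ ∫⁻ x, g (x + s • (y - x)) := setLIntegral_le_lintegral _ _
              _ = ∫⁻ x, g (s • y + (1 - s) • x) := by
                  congr 1; ext x; congr 1; rw [smul_sub, sub_smul, one_smul]; abel
              _ ≤ _ := lint_scale _ (by linarith) hgm
        _ = _ := by rw [lintegral_const, hμ, Measure.restrict_apply_univ, mul_comm]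
  have hmain : ∫⁻ z, ENNReal.ofReal ((f z.2 - f z.1)^2) ∂(μ.prod μ)
      ≤ ENNReal.ofReal R * (volume Ω * (4 * ∫⁻ x, g x)) := by
    have hm3 : Measurable fun w : (V2 × V2) × ℝ => g (w.1.1 + w.2 • (w.1.2 - w.1.1)) :=
      hgm.comp (by fun_prop)
    calc _ ≤ ∫⁻ z : V2 × V2, (ENNReal.ofReal R * ∫⁻ s in Ioc (0:ℝ) 1, g (z.1 + s • (z.2 - z.1))) ∂(μ.prod μ) := by
          apply lintegral_mono_ae
          rw [hμ, Measure.prod_restrict]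
          filter_upwards [ae_restrict_mem (D.meas.prod D.meas)] with z hz
          exact hpt z.1 hz.1 z.2 hz.2
      _ = ENNReal.ofReal R * ∫⁻ z : V2 × V2, (∫⁻ s in Ioc (0:ℝ) 1, g (z.1 + s • (z.2 - z.1))) ∂(μ.prod μ) := by
          rw [lintegral_const_mul _ hm3.lintegral_prod_right']
      _ = ENNReal.ofReal R * ∫⁻ s in Ioc (0:ℝ) 1, (∫⁻ z : V2 × V2, g (z.1 + s • (z.2 - z.1)) ∂(μ.prod μ)) := by
          rw [lintegral_lintegral_swap hm3.aemeasurable]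
      _ ≤ ENNReal.ofReal R * ∫⁻ s in Ioc (0:ℝ) 1, (volume Ω * (4 * ∫⁻ x, g x)) := by
          gcongr with s
          exact hJ s
      _ = _ := by simp
  -- expansion
  have hvol : 0 < (volume Ω).toReal :=
    ENNReal.toReal_pos (D.isOpen.measure_pos volume D.ne).ne' D.bdd.measure_lt_top.ne
  have i1 : Integrable f μ := D.intOn hfc
  have i2 : Integrable (fun x => f x ^2) μ := D.intOn (hfc.pow 2)
  have ic : Integrable (fun _ : V2 => (1:ℝ)) μ := integrable_const _
  have j1 : Integrable (fun z : V2 × V2 => f z.1 * f z.2) (μ.prod μ) := i1.mul_prod i1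
  have j2 : Integrable (fun z : V2 × V2 => f z.1 ^2 * 1) (μ.prod μ) := i2.mul_prod ic
  have j3 : Integrable (fun z : V2 × V2 => 1 * f z.2 ^2) (μ.prod μ) := ic.mul_prod i2
  have hexp : ∀ z : V2 × V2, (f z.2 - f z.1)^2 = f z.1 ^2 * 1 + 1 * f z.2 ^ 2 - 2 * (f z.1 * f z.2) := by
    intro z; ring
  have hIntc : Integrable (fun z : V2 × V2 => (f z.2 - f z.1)^2) (μ.prod μ) := by
    simp only [hexp]; exact (j2.add j3).sub (j1.const_mul 2)
  have hval : ∫ z, (f z.2 - f z.1)^2 ∂(μ.prod μ) = 2 * (volume Ω).toReal * ∫ x in Ω, f x ^2 := by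
    simp only [hexp]
    have j23 : Integrable (fun z : V2 × V2 => f z.1 ^2 * 1 + 1 * f z.2 ^2) (μ.prod μ) := j2.add j3
    rw [integral_sub j23 (j1.const_mul 2), integral_add j2 j3,
      integral_prod_mul (fun x => f x ^2) (fun _ => (1:ℝ)), integral_prod_mul (fun _ => (1:ℝ)) (fun x => f x ^2),
      integral_const_mul, integral_prod_mul f f, hmean]
    simp [hμ, Measure.real]; ring
  rw [← ofReal_integral_eq_lintegral_ofReal hIntc (Eventually.of_forall fun z => sq_nonneg _), hval, hG,
    ← ENNReal.ofReal_toReal (D.bdd.measure_lt_top (μ := volume)).ne] at hmain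
  have h4 : (4 : ENNReal) = ENNReal.ofReal 4 := by norm_num
  have hq : 0 ≤ ∫ x in Ω, q1 f x := integral_nonneg fun x => q1_nonneg _ _
  rw [h4, ← ENNReal.ofReal_mul (by norm_num), ← ENNReal.ofReal_mul ENNReal.toReal_nonneg,
    ← ENNReal.ofReal_mul hR0, ENNReal.ofReal_le_ofReal_iff (by positivity)] at hmain
  rw [ENNReal.toReal_ofReal ENNReal.toReal_nonneg] at hmain
  have : (volume Ω).toReal * (2 * ∫ x in Ω, f x ^2) ≤ (volume Ω).toReal * (4 * R * ∫ x in Ω, q1 f x) := by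
    linarith
  have := le_of_mul_le_mul_left this hvol
  linarith

end Dom

/-! ## `H²` bound for divergence free tangential fields -/

lemma cs8 {M : ℝ} (c0 c1 c2 c3 c4 c5 c6 c7 s0 s1 s2 s3 s4 s5 s6 s7 : ℝ)
    (h0 : |c0| ≤ M) (h1 : |c1| ≤ M) (h2 : |c2| ≤ M) (h3 : |c3| ≤ M)
    (h4 : |c4| ≤ M) (h5 : |c5| ≤ M) (h6 : |c6| ≤ M) (h7 : |c7| ≤ M) :
    (c0*s0+c1*s1+c2*s2+c3*s3+c4*s4+c5*s5+c6*s6+c7*s7)^2 ≤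
      8*M^2*(s0^2+s1^2+s2^2+s3^2+s4^2+s5^2+s6^2+s7^2) := by
  have h := Finset.sum_mul_sq_le_sq_mul_sq (Finset.univ : Finset (Fin 8))
    ![c0,c1,c2,c3,c4,c5,c6,c7] ![s0,s1,s2,s3,s4,s5,s6,s7]
  simp [Fin.sum_univ_eight] at h
  refine h.trans ?_
  apply mul_le_mul_of_nonneg_right _ (by positivity)
  have sq : ∀ {c : ℝ}, |c| ≤ M → c^2 ≤ M^2 := fun hc => by
    rw [← sq_abs]; gcongr
  linarith [sq h0, sq h1, sq h2, sq h3, sq h4, sq h5, sq h6, sq h7]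

lemma pd2_mul {f g : V2 → ℝ} (hf : ContDiff ℝ (⊤ : ℕ∞) f) (hg : ContDiff ℝ (⊤ : ℕ∞) g)
    (i j : Fin 2) (x : V2) :
    pd i (pd j (fun y => f y * g y)) x = pd i (pd j f) x * g x + pd j f x * pd i g x
      + (pd i f x * pd j g x + f x * pd i (pd j g) x) := by
  have e : pd j (fun y => f y * g y) = fun y => pd j f y * g y + f y * pd j g y := by
    ext y; exact pd_mul j (cd_da hf y) (cd_da hg y)
  rw [e, pd_add i (cd_da ((cd_pd hf j).mul hg) x) (cd_da (hf.mul (cd_pd hg j)) x),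
    pd_mul i (cd_da (cd_pd hf j) x) (cd_da hg x), pd_mul i (cd_da hf x) (cd_da (cd_pd hg j) x)]

lemma pd2_add {f g : V2 → ℝ} (hf : ContDiff ℝ (⊤ : ℕ∞) f) (hg : ContDiff ℝ (⊤ : ℕ∞) g)
    (i j : Fin 2) (x : V2) :
    pd i (pd j (fun y => f y + g y)) x = pd i (pd j f) x + pd i (pd j g) x := by
  have e : pd j (fun y => f y + g y) = fun y => pd j f y + pd j g y := by
    ext y; exact pd_add j (cd_da hf y) (cd_da hg y)
  rw [e, pd_add i (cd_da (cd_pd hf j) x) (cd_da (cd_pd hg j) x)]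

/-- curl of a smooth field -/
lemma cd_curl {v : V2 → V2} (hv : ∀ i, ContDiff ℝ (⊤ : ℕ∞) fun y => v y i) :
    ContDiff ℝ (⊤ : ℕ∞) (curl2 v) :=
  (cd_pd (hv 1) 0).sub (cd_pd (hv 0) 1)

lemma pd_curl {v : V2 → V2} (hv : ∀ i, ContDiff ℝ (⊤ : ℕ∞) fun y => v y i) (j : Fin 2) (x : V2) :
    pd j (curl2 v) x = pd j (pd 0 fun y => v y 1) x - pd j (pd 1 fun y => v y 0) x :=
  pd_sub j (cd_da (cd_pd (hv 1) 0) x) (cd_da (cd_pd (hv 0) 1) x)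

lemma cd_div {v : V2 → V2} (hv : ∀ i, ContDiff ℝ (⊤ : ℕ∞) fun y => v y i) :
    ContDiff ℝ (⊤ : ℕ∞) (div2 v) := by
  have : div2 v = fun x => pd 0 (fun y => v y 0) x + pd 1 (fun y => v y 1) x := by
    ext x; simp [div2]
  rw [this]
  exact (cd_pd (hv 0) 0).add (cd_pd (hv 1) 1)

lemma pd_div {v : V2 → V2} (hv : ∀ i, ContDiff ℝ (⊤ : ℕ∞) fun y => v y i) (j : Fin 2) (x : V2) :
    pd j (div2 v) x = pd j (pd 0 fun y => v y 0) x + pd j (pd 1 fun y => v y 1) x := by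
  have : div2 v = fun x => pd 0 (fun y => v y 0) x + pd 1 (fun y => v y 1) x := by
    ext x; simp [div2]
  rw [this]
  exact pd_add j (cd_da (cd_pd (hv 0) 0) x) (cd_da (cd_pd (hv 1) 1) x)

/-- first order part of the `H²` right-hand side -/
def SS (v : V2 → V2) (x : V2) : ℝ := q1 (curl2 v) x + gnsq v x + nsq (v x)

lemma gnsq_cont {v : V2 → V2} (hv : ∀ i, ContDiff ℝ 1 fun y => v y i) : Continuous (gnsq v) := by
  unfold gnsq
  exact continuous_finsetSum _ fun i _ => continuous_finsetSum _ fun j _ => (c1_pd (hv i) j).pow 2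

lemma nsq_cont {v : V2 → V2} (hv : ∀ i, Continuous fun y => v y i) : Continuous fun x => nsq (v x) := by
  unfold nsq
  exact continuous_finsetSum _ fun i _ => (hv i).pow 2

lemma gnsq_nonneg (v : V2 → V2) (x : V2) : 0 ≤ gnsq v x := by unfold gnsq; positivity
lemma nsq_nonneg (v : V2) : 0 ≤ nsq v := by unfold nsq; positivity

namespace Dom
variable {Ω : Set V2} {φ : V2 → ℝ}

lemma bnd (D : Dom Ω φ) {ι : Type*} [Fintype ι] {c : ι → V2 → ℝ} (hc : ∀ k, Continuous (c k)) :
    ∃ M, 0 ≤ M ∧ ∀ k, ∀ x ∈ Ω, |c k x| ≤ M := by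
  have h : Continuous fun x k => c k x := continuous_pi hc
  obtain ⟨M, hM⟩ := (D.cpt.image h.norm).bddAbove
  refine ⟨max M 0, le_max_right _ _, fun k x hx => ?_⟩
  exact (norm_le_pi_norm (fun k => c k x) k).trans
    ((hM ⟨x, subset_closure hx, rfl⟩).trans (le_max_left _ _))

lemma lower (D : Dom Ω φ) : ∃ c, 0 < c ∧ ∀ x ∈ Ω, c ≤ φ x ^2 + q1 φ x := by
  have hc : Continuous fun x => φ x ^2 + q1 φ x := (D.sm.continuous.pow 2).add (q1_cont (cd_c1 D.sm))
  obtain ⟨x0, hx0, hmin⟩ := D.cpt.exists_isMinOn D.ne.closure hc.continuousOn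
  refine ⟨_, ?_, fun x hx => hmin (subset_closure hx)⟩
  by_cases h : φ x0 = 0
  · have hg := D.gr x0 (D.memfr.2 h)
    have : 0 < q1 φ x0 := by
      refine lt_of_le_of_ne (q1_nonneg _ _) fun h0 => hg ?_
      unfold q1 at h0
      have a0 : pd 0 φ x0 = 0 := by nlinarith [sq_nonneg (pd 0 φ x0), sq_nonneg (pd 1 φ x0)]
      have a1 : pd 1 φ x0 = 0 := by nlinarith [sq_nonneg (pd 0 φ x0), sq_nonneg (pd 1 φ x0)]
      ext i; fin_cases i
      · exact a0
      · exact a1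
    positivity
  · have := q1_nonneg φ x0
    positivity

set_option maxHeartbeats 4000000 in
lemma h2v (D : Dom Ω φ) : ∃ C, 0 ≤ C ∧ ∀ v : V2 → V2, (∀ i, ContDiff ℝ (⊤ : ℕ∞) fun y => v y i) →
    (∀ x ∈ Ω, div2 v x = 0) → (∀ x ∈ frontier Ω, dot (v x) (grad φ x) = 0) →
    ∫ x in Ω, q1 (pd 0 fun y => v y 0) x ≤ C * ∫ x in Ω, SS v x := by
  have hφ := D.sm
  obtain ⟨M0, hM0, B0⟩ := D.bnd (ι := Unit) (c := fun _ => φ) (fun _ => hφ.continuous)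
  obtain ⟨M1, hM1, B1⟩ := D.bnd (c := fun i : Fin 2 => pd i φ) (fun i => (cd_pd hφ i).continuous)
  obtain ⟨M2, hM2, B2⟩ := D.bnd (c := fun i : Fin 2 × Fin 2 => pd i.1 (pd i.2 φ))
    (fun i => (cd_pd (cd_pd hφ _) _).continuous)
  obtain ⟨M3, hM3, B3⟩ := D.bnd (c := fun i : Fin 2 × Fin 2 × Fin 2 => pd i.1 (pd i.2.1 (pd i.2.2 φ)))
    (fun i => (cd_pd (cd_pd (cd_pd hφ _) _) _).continuous)
  obtain ⟨c, hc, hlow⟩ := D.lower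
  set M := M0 + M1 + M2 + M3 with hM
  set N := 4 * M with hN
  have hN0 : 0 ≤ N := by positivity
  set K := 8 * N^2 with hK
  have hK0 : 0 ≤ K := by positivity
  refine ⟨c⁻¹ * (12 * K), by positivity, fun v hv hdiv hbd => ?_⟩
  set f : V2 → ℝ := fun y => v y 0 with hf'
  set g : V2 → ℝ := fun y => v y 1 with hg'
  have hf : ContDiff ℝ (⊤ : ℕ∞) f := hv 0
  have hg : ContDiff ℝ (⊤ : ℕ∞) g := hv 1
  have p0 := cd_pd hφ 0
  have p1 := cd_pd hφ 1
  set k1 : V2 → ℝ := fun y => f y * pd 0 φ y + g y * pd 1 φ y with hk1'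
  set k2 : V2 → ℝ := fun y => φ y * f y with hk2'
  have hk1 : ContDiff ℝ (⊤ : ℕ∞) k1 := (hf.mul p0).add (hg.mul p1)
  have hk2 : ContDiff ℝ (⊤ : ℕ∞) k2 := hφ.mul hf
  have kad1 := D.kadlec2 hk1 (fun x hx => by
    have := hbd x hx
    simpa [dot, grad] using this)
  have kad2 := D.kadlec2 hk2 (fun x hx => by simp [hk2', D.memfr.1 hx])
  have i1 : Integrable (fun x => pd 0 (pd 0 k1) x ^ 2 + 2 * pd 0 (pd 1 k1) x ^ 2 + pd 1 (pd 1 k1) x ^ 2)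
      (volume.restrict Ω) := D.intOn (((((cd_pd (cd_pd hk1 _) _).continuous.pow 2)).add
      (continuous_const.mul ((cd_pd (cd_pd hk1 _) _).continuous.pow 2))).add
      ((cd_pd (cd_pd hk1 _) _).continuous.pow 2))
  have i2 : Integrable (fun x => pd 0 (pd 0 k2) x ^ 2 + 2 * pd 0 (pd 1 k2) x ^ 2 + pd 1 (pd 1 k2) x ^ 2)
      (volume.restrict Ω) := D.intOn (((((cd_pd (cd_pd hk2 _) _).continuous.pow 2)).add
      (continuous_const.mul ((cd_pd (cd_pd hk2 _) _).continuous.pow 2))).add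
      ((cd_pd (cd_pd hk2 _) _).continuous.pow 2))
  have hSc : Continuous (SS v) := ((q1_cont (cd_c1 (cd_curl hv))).add
    (gnsq_cont fun i => cd_c1 (hv i))).add (nsq_cont fun i => (hv i).continuous)
  have iS : Integrable (SS v) (volume.restrict Ω) := D.intOn hSc
  -- pointwise facts
  have key : ∀ x ∈ Ω, lap k1 x ^ 2 ≤ K * SS v x ∧ lap k2 x ^2 ≤ K * SS v x ∧
      (φ x ^2 + q1 φ x) * q1 (pd 0 f) x ≤
        2 * (pd 0 (pd 0 k1) x ^ 2 + 2 * pd 0 (pd 1 k1) x ^ 2 + pd 1 (pd 1 k1) x ^ 2)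
        + 2 * (pd 0 (pd 0 k2) x ^ 2 + 2 * pd 0 (pd 1 k2) x ^ 2 + pd 1 (pd 1 k2) x ^ 2)
        + 8 * K * SS v x := by
    intro x hx
    have d0 : pd 0 (pd 0 f) x + pd 0 (pd 1 g) x = 0 := by
      rw [← pd_div hv, pd_congr D.isOpen (g := fun _ => 0) hdiv 0 hx, pd_const]
    have d1 : pd 1 (pd 0 f) x + pd 1 (pd 1 g) x = 0 := by
      rw [← pd_div hv, pd_congr D.isOpen (g := fun _ => 0) hdiv 1 hx, pd_const]
    have w0 := pd_curl hv 0 x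
    have w1 := pd_curl hv 1 x
    have cf := pd_comm hf 1 0 x
    have cg := pd_comm hg 1 0 x
    rw [← hf', ← hg'] at w0 w1
    rw [cf] at d1
    rw [cg] at w1
    have hS : SS v x = (pd 0 (curl2 v) x)^2 + (pd 1 (curl2 v) x)^2 + (pd 0 f x)^2 + (pd 1 f x)^2
        + (pd 0 g x)^2 + (pd 1 g x)^2 + (f x)^2 + (g x)^2 := by
      simp [SS, q1, gnsq, nsq, hf', hg']; ring
    have b0 := abs_le.1 (B0 () x hx)
    have b1 := fun i => abs_le.1 (B1 i x hx)
    have b2 := fun i j => abs_le.1 (B2 (i,j) x hx)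
    have b3 := fun i j k => abs_le.1 (B3 (i,j,k) x hx)
    simp only at b0 b1 b2 b3
    have e1 : ∀ i j, pd i (pd j k1) x = pd i (pd j f) x * pd 0 φ x + pd i (pd j g) x * pd 1 φ x +
        (pd j f x * pd i (pd 0 φ) x + pd i f x * pd j (pd 0 φ) x + f x * pd i (pd j (pd 0 φ)) x
        + pd j g x * pd i (pd 1 φ) x + pd i g x * pd j (pd 1 φ) x + g x * pd i (pd j (pd 1 φ)) x) := by
      intro i j
      rw [hk1', pd2_add (hf.mul p0) (hg.mul p1), pd2_mul hf p0, pd2_mul hg p1]; ring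
    have e2 : ∀ i j, pd i (pd j k2) x = φ x * pd i (pd j f) x + (pd j φ x * pd i f x + pd i φ x * pd j f x
        + pd i (pd j φ) x * f x) := by
      intro i j
      rw [hk2', pd2_mul hφ hf]; ring
    have hlap : ∀ k, lap k x = pd 0 (pd 0 k) x + pd 1 (pd 1 k) x := by intro k; simp [lap]
    have f11 : pd 1 (pd 1 f) x = - pd 0 (pd 0 f) x - pd 1 (curl2 v) x := by linarith
    have g00 : pd 0 (pd 0 g) x = pd 0 (pd 1 f) x + pd 0 (curl2 v) x := by linarith
    have g01 : pd 0 (pd 1 g) x = - pd 0 (pd 0 f) x := by linarith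
    have g11 : pd 1 (pd 1 g) x = - pd 0 (pd 1 f) x := by linarith
    have Z : |(0:ℝ)| ≤ N := by simpa using hN0
    refine ⟨?_, ?_, ?_⟩
    · rw [hlap, e1, e1, f11, g00, g11, hS]
      have := cs8 (M := N) (pd 1 φ x) (- pd 0 φ x) (2 * pd 0 (pd 0 φ) x) (2 * pd 1 (pd 0 φ) x)
        (2 * pd 0 (pd 1 φ) x) (2 * pd 1 (pd 1 φ) x) (pd 0 (pd 0 (pd 0 φ)) x + pd 1 (pd 1 (pd 0 φ)) x)
        (pd 0 (pd 0 (pd 1 φ)) x + pd 1 (pd 1 (pd 1 φ)) x)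
        (pd 0 (curl2 v) x) (pd 1 (curl2 v) x) (pd 0 f x) (pd 1 f x) (pd 0 g x) (pd 1 g x) (f x) (g x)
        (abs_le.2 ⟨by linarith [b1 1], by linarith [b1 1]⟩)
        (abs_le.2 ⟨by linarith [b1 0], by linarith [b1 0]⟩)
        (abs_le.2 ⟨by linarith [b2 0 0], by linarith [b2 0 0]⟩)
        (abs_le.2 ⟨by linarith [b2 1 0], by linarith [b2 1 0]⟩)
        (abs_le.2 ⟨by linarith [b2 0 1], by linarith [b2 0 1]⟩)
        (abs_le.2 ⟨by linarith [b2 1 1], by linarith [b2 1 1]⟩)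
        (abs_le.2 ⟨by linarith [b3 0 0 0, b3 1 1 0], by linarith [b3 0 0 0, b3 1 1 0]⟩)
        (abs_le.2 ⟨by linarith [b3 0 0 1, b3 1 1 1], by linarith [b3 0 0 1, b3 1 1 1]⟩)
      refine le_trans (le_of_eq ?_) this
      congr 1; ring
    · rw [hlap, e2, e2, f11, hS]
      have := cs8 (M := N) 0 (- φ x) (2 * pd 0 φ x) (2 * pd 1 φ x) 0 0
        (pd 0 (pd 0 φ) x + pd 1 (pd 1 φ) x) 0
        (pd 0 (curl2 v) x) (pd 1 (curl2 v) x) (pd 0 f x) (pd 1 f x) (pd 0 g x) (pd 1 g x) (f x) (g x)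
        Z
        (abs_le.2 ⟨by linarith, by linarith⟩)
        (abs_le.2 ⟨by linarith [b1 0], by linarith [b1 0]⟩)
        (abs_le.2 ⟨by linarith [b1 1], by linarith [b1 1]⟩)
        Z Z
        (abs_le.2 ⟨by linarith [b2 0 0, b2 1 1], by linarith [b2 0 0, b2 1 1]⟩) Z
      refine le_trans (le_of_eq ?_) this
      congr 1; ring
    · have q := q1_nonneg (pd 0 f) x
      have hq1 : q1 (pd 0 f) x = pd 0 (pd 0 f) x ^2 + pd 0 (pd 1 f) x ^2 := by unfold q1; rw [cf]
      have hq2 : q1 φ x = pd 0 φ x ^2 + pd 1 φ x ^2 := rfl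
      -- error terms
      have r1 := cs8 (M := N) (pd 1 φ x) 0 (2 * pd 0 (pd 0 φ) x) 0
        (2 * pd 0 (pd 1 φ) x) 0 (pd 0 (pd 0 (pd 0 φ)) x) (pd 0 (pd 0 (pd 1 φ)) x)
        (pd 0 (curl2 v) x) (pd 1 (curl2 v) x) (pd 0 f x) (pd 1 f x) (pd 0 g x) (pd 1 g x) (f x) (g x)
        (abs_le.2 ⟨by linarith [b1 1], by linarith [b1 1]⟩) Z
        (abs_le.2 ⟨by linarith [b2 0 0], by linarith [b2 0 0]⟩) Z
        (abs_le.2 ⟨by linarith [b2 0 1], by linarith [b2 0 1]⟩) Z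
        (abs_le.2 ⟨by linarith [b3 0 0 0], by linarith [b3 0 0 0]⟩)
        (abs_le.2 ⟨by linarith [b3 0 0 1], by linarith [b3 0 0 1]⟩)
      have r2 := cs8 (M := N) 0 0 (pd 1 (pd 0 φ) x) (pd 0 (pd 0 φ) x)
        (pd 1 (pd 1 φ) x) (pd 0 (pd 1 φ) x) (pd 0 (pd 1 (pd 0 φ)) x) (pd 0 (pd 1 (pd 1 φ)) x)
        (pd 0 (curl2 v) x) (pd 1 (curl2 v) x) (pd 0 f x) (pd 1 f x) (pd 0 g x) (pd 1 g x) (f x) (g x)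
        Z Z
        (abs_le.2 ⟨by linarith [b2 1 0], by linarith [b2 1 0]⟩)
        (abs_le.2 ⟨by linarith [b2 0 0], by linarith [b2 0 0]⟩)
        (abs_le.2 ⟨by linarith [b2 1 1], by linarith [b2 1 1]⟩)
        (abs_le.2 ⟨by linarith [b2 0 1], by linarith [b2 0 1]⟩)
        (abs_le.2 ⟨by linarith [b3 0 1 0], by linarith [b3 0 1 0]⟩)
        (abs_le.2 ⟨by linarith [b3 0 1 1], by linarith [b3 0 1 1]⟩)
      have r3 := cs8 (M := N) 0 0 (2 * pd 0 φ x) 0 0 0 (pd 0 (pd 0 φ) x) 0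
        (pd 0 (curl2 v) x) (pd 1 (curl2 v) x) (pd 0 f x) (pd 1 f x) (pd 0 g x) (pd 1 g x) (f x) (g x)
        Z Z (abs_le.2 ⟨by linarith [b1 0], by linarith [b1 0]⟩) Z Z Z
        (abs_le.2 ⟨by linarith [b2 0 0], by linarith [b2 0 0]⟩) Z
      have r4 := cs8 (M := N) 0 0 (pd 1 φ x) (pd 0 φ x) 0 0 (pd 0 (pd 1 φ) x) 0
        (pd 0 (curl2 v) x) (pd 1 (curl2 v) x) (pd 0 f x) (pd 1 f x) (pd 0 g x) (pd 1 g x) (f x) (g x)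
        Z Z (abs_le.2 ⟨by linarith [b1 1], by linarith [b1 1]⟩)
        (abs_le.2 ⟨by linarith [b1 0], by linarith [b1 0]⟩) Z Z
        (abs_le.2 ⟨by linarith [b2 0 1], by linarith [b2 0 1]⟩) Z
      rw [← hS] at r1 r2 r3 r4
      set E1 := pd 1 φ x * pd 0 (curl2 v) x + 0 * pd 1 (curl2 v) x + 2 * pd 0 (pd 0 φ) x * pd 0 f x + 0 * pd 1 f x + 2 * pd 0 (pd 1 φ) x * pd 0 g x + 0 * pd 1 g x + pd 0 (pd 0 (pd 0 φ)) x * f x + pd 0 (pd 0 (pd 1 φ)) x * g x with hE1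
      set E2 := 0 * pd 0 (curl2 v) x + 0 * pd 1 (curl2 v) x + pd 1 (pd 0 φ) x * pd 0 f x + pd 0 (pd 0 φ) x * pd 1 f x + pd 1 (pd 1 φ) x * pd 0 g x + pd 0 (pd 1 φ) x * pd 1 g x + pd 0 (pd 1 (pd 0 φ)) x * f x + pd 0 (pd 1 (pd 1 φ)) x * g x with hE2
      set E3 := 0 * pd 0 (curl2 v) x + 0 * pd 1 (curl2 v) x + 2 * pd 0 φ x * pd 0 f x + 0 * pd 1 f x + 0 * pd 0 g x + 0 * pd 1 g x + pd 0 (pd 0 φ) x * f x + 0 * g x with hE3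
      set E4 := 0 * pd 0 (curl2 v) x + 0 * pd 1 (curl2 v) x + pd 1 φ x * pd 0 f x + pd 0 φ x * pd 1 f x + 0 * pd 0 g x + 0 * pd 1 g x + pd 0 (pd 1 φ) x * f x + 0 * g x with hE4
      have t1 : pd 0 φ x * pd 0 (pd 0 f) x + pd 1 φ x * pd 0 (pd 1 f) x = pd 0 (pd 0 k1) x - E1 := by
        rw [e1, g00, hE1]; ring
      have t2 : pd 0 φ x * pd 0 (pd 1 f) x - pd 1 φ x * pd 0 (pd 0 f) x = pd 0 (pd 1 k1) x - E2 := by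
        rw [e1, g01, hE2]; ring
      have t3 : φ x * pd 0 (pd 0 f) x = pd 0 (pd 0 k2) x - E3 := by rw [e2, hE3]; ring
      have t4 : φ x * pd 0 (pd 1 f) x = pd 0 (pd 1 k2) x - E4 := by rw [e2, hE4]; ring
      have sqb : ∀ s t : ℝ, (s - t)^2 ≤ 2*s^2 + 2*t^2 := fun s t => by nlinarith [sq_nonneg (s+t)]
      have lhs : (φ x ^2 + q1 φ x) * q1 (pd 0 f) x = (pd 0 (pd 0 k1) x - E1)^2
          + (pd 0 (pd 1 k1) x - E2)^2 + (pd 0 (pd 0 k2) x - E3)^2 + (pd 0 (pd 1 k2) x - E4)^2 := by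
        rw [← t1, ← t2, ← t3, ← t4, hq1, hq2]; ring
      rw [lhs]
      linarith [sqb (pd 0 (pd 0 k1) x) E1, sqb (pd 0 (pd 1 k1) x) E2, sqb (pd 0 (pd 0 k2) x) E3,
        sqb (pd 0 (pd 1 k2) x) E4, sq_nonneg (pd 0 (pd 1 k1) x), sq_nonneg (pd 1 (pd 1 k1) x),
        sq_nonneg (pd 0 (pd 1 k2) x), sq_nonneg (pd 1 (pd 1 k2) x)]
  have hlc : ∀ {k : V2 → ℝ}, ContDiff ℝ (⊤ : ℕ∞) k → Continuous (fun x => lap k x ^2) := by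
    intro k hk
    unfold lap
    exact (continuous_finsetSum _ fun i _ => (cd_pd (cd_pd hk i) i).continuous).pow 2
  have l1 : ∫ x in Ω, lap k1 x ^2 ≤ K * ∫ x in Ω, SS v x := by
    rw [← integral_const_mul]
    exact setIntegral_mono_on (D.intOn (hlc hk1)) (iS.const_mul K) D.meas fun x hx => (key x hx).1
  have l2 : ∫ x in Ω, lap k2 x ^2 ≤ K * ∫ x in Ω, SS v x := by
    rw [← integral_const_mul]
    exact setIntegral_mono_on (D.intOn (hlc hk2)) (iS.const_mul K) D.meas fun x hx => (key x hx).2.1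
  have iq : Integrable (q1 (pd 0 f)) (volume.restrict Ω) := D.intOn (q1_cont (cd_c1 (cd_pd hf 0)))
  have i12 : Integrable (fun x => 2 * (pd 0 (pd 0 k1) x ^ 2 + 2 * pd 0 (pd 1 k1) x ^ 2 + pd 1 (pd 1 k1) x ^ 2)
        + 2 * (pd 0 (pd 0 k2) x ^ 2 + 2 * pd 0 (pd 1 k2) x ^ 2 + pd 1 (pd 1 k2) x ^ 2))
        (volume.restrict Ω) := (i1.const_mul 2).add (i2.const_mul 2)
  have fin : c * ∫ x in Ω, q1 (pd 0 f) x ≤ ∫ x in Ω,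
      (2 * (pd 0 (pd 0 k1) x ^ 2 + 2 * pd 0 (pd 1 k1) x ^ 2 + pd 1 (pd 1 k1) x ^ 2)
        + 2 * (pd 0 (pd 0 k2) x ^ 2 + 2 * pd 0 (pd 1 k2) x ^ 2 + pd 1 (pd 1 k2) x ^ 2)
        + 8 * K * SS v x) := by
    rw [← integral_const_mul]
    apply setIntegral_mono_on (iq.const_mul c) (i12.add (iS.const_mul (8*K))) D.meas
    intro x hx
    exact (mul_le_mul_of_nonneg_right (hlow x hx) (q1_nonneg _ _)).trans (key x hx).2.2
  rw [integral_add i12 (iS.const_mul _), integral_add (i1.const_mul _) (i2.const_mul _),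
    integral_const_mul, integral_const_mul, integral_const_mul] at fin
  rw [mul_assoc, ← div_eq_inv_mul, le_div_iff₀ hc]
  linarith

end Dom

/-! ## Norm manipulations and the estimate of the solenoidal part -/

lemma LpS_two (Ω : Set V2) (f : V2 → ℝ) : LpS 2 Ω f = √(∫ x in Ω, f x ^ 2) := by
  unfold LpS
  rw [sqrt_eq_rpow]
  congr 2; ext x; rw [rpow_two, sq_abs]

lemma LpV_two (Ω : Set V2) (f : V2 → V2) : LpV 2 Ω f = √(∫ x in Ω, nsq (f x)) := by
  unfold LpV
  rw [sqrt_eq_rpow]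
  congr 2; ext x; rw [div_self two_ne_zero, rpow_one]

lemma LpG_two (Ω : Set V2) (f : V2 → V2) : LpG 2 Ω f = √(∫ x in Ω, gnsq f x) := by
  unfold LpG
  rw [sqrt_eq_rpow]
  congr 2; ext x; rw [div_self two_ne_zero, rpow_one]

lemma LpS_nonneg (p : ℝ) (Ω : Set V2) (f : V2 → ℝ) : 0 ≤ LpS p Ω f :=
  rpow_nonneg (integral_nonneg fun x => by positivity) _

lemma LpS_le_iff {p : ℝ} (hp : 0 < p) {Ω : Set V2} {f : V2 → ℝ} {A : ℝ}
    (h : LpS p Ω f ≤ A) : ∫ x in Ω, |f x| ^ p ≤ A ^ p := by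
  have h0 : 0 ≤ ∫ x in Ω, |f x| ^ p := integral_nonneg fun x => by positivity
  have := rpow_le_rpow (LpS_nonneg p Ω f) h hp.le
  unfold LpS at this
  rwa [← rpow_mul h0, one_div_mul_cancel hp.ne', rpow_one] at this

lemma gnsq_eq (v : V2 → V2) (x : V2) : gnsq v x = q1 (fun y => v y 0) x + q1 (fun y => v y 1) x := by
  simp [gnsq, q1]

namespace Dom
variable {Ω : Set V2} {φ : V2 → ℝ}

lemma LpG_le (D : Dom Ω φ) {p : ℝ} (hp : 2 ≤ p) {v : V2 → V2}
    (hv : ∀ i, ContDiff ℝ (⊤ : ℕ∞) fun y => v y i) {A : ℝ}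
    (h : ∀ i j, LpS p Ω (pd j fun y => v y i) ≤ A) : LpG p Ω v ≤ 2 * A := by
  have hA : 0 ≤ A := (LpS_nonneg _ _ _).trans (h 0 0)
  have hp0 : 0 < p := by linarith
  set H : Fin 2 × Fin 2 → V2 → ℝ := fun k => pd k.2 fun y => v y k.1 with hH
  have hHc : ∀ k, Continuous (H k) := fun k => (cd_pd (hv k.1) k.2).continuous
  have hHp : ∀ k, Continuous fun x => |H k x| ^ p := fun k =>
    (hHc k).abs.rpow_const fun x => Or.inr hp0.le
  have hpt : ∀ x, gnsq v x ^ (p/2) ≤ 4 ^ (p/2-1) * ∑ k, |H k x| ^ p := by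
    intro x
    have := Real.rpow_sum_le_const_mul_sum_rpow (Finset.univ : Finset (Fin 2 × Fin 2))
      (fun k => H k x ^ 2) (p := p/2) (by linarith)
    have e : ∑ k : Fin 2 × Fin 2, |H k x ^ 2| = gnsq v x := by
      simp [gnsq, hH, Fintype.sum_prod_type]
    rw [e] at this
    have e2 : ∀ k, |H k x ^ 2| ^ (p/2) = |H k x| ^ p := by
      intro k
      rw [abs_pow, ← rpow_two, ← rpow_mul (abs_nonneg _)]
      congr 1; ring
    simp only [e2] at this
    simpa using this
  have hI : ∫ x in Ω, gnsq v x ^ (p/2) ≤ 4 ^ (p/2-1) * (4 * A^p) := by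
    calc ∫ x in Ω, gnsq v x ^ (p/2) ≤ ∫ x in Ω, 4 ^ (p/2-1) * ∑ k, |H k x| ^ p := by
          apply integral_mono (D.intOn ((gnsq_cont fun i => cd_c1 (hv i)).rpow_const
            fun x => Or.inr (by positivity))) (D.intOn (continuous_const.mul
              (continuous_finsetSum _ fun k _ => hHp k)))
          exact hpt
      _ = 4 ^ (p/2-1) * ∑ k, ∫ x in Ω, |H k x| ^ p := by
          rw [integral_const_mul, integral_finsetSum _ fun k _ => D.intOn (hHp k)]
      _ ≤ 4 ^ (p/2-1) * ∑ _k : Fin 2 × Fin 2, A^p := by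
          gcongr with k
          exact LpS_le_iff hp0 (h k.1 k.2)
      _ = _ := by simp
  unfold LpG
  calc _ ≤ ((4:ℝ) ^ (p/2-1) * (4 * A^p)) ^ (1/p) := by
        apply rpow_le_rpow (integral_nonneg fun x => rpow_nonneg (gnsq_nonneg _ _) _) hI (by positivity)
    _ = 2 * A := by
        have : (4:ℝ) ^ (p/2-1) * (4 * A^p) = (2 * A)^p := by
          rw [mul_rpow (by norm_num) hA, ← mul_assoc, ← rpow_add_one (by norm_num)]
          congr 1
          rw [show (4:ℝ) = 2^(2:ℝ) by norm_num, ← rpow_mul (by norm_num)]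
          congr 1; ring
        rw [this, ← rpow_mul (by positivity), mul_one_div_cancel hp0.ne', rpow_one]

lemma LpS_add_le (D : Dom Ω φ) {p : ℝ} (hp : 2 ≤ p) {f g : V2 → ℝ}
    (hf : Continuous f) (hg : Continuous g) :
    LpS p Ω (fun x => f x + g x) ≤ 2 * (LpS p Ω f + LpS p Ω g) := by
  have hp0 : 0 < p := by linarith
  set A := LpS p Ω f + LpS p Ω g with hA'
  have hA : 0 ≤ A := add_nonneg (LpS_nonneg _ _ _) (LpS_nonneg _ _ _)
  have h1 := LpS_le_iff hp0 (le_add_of_nonneg_right (LpS_nonneg p Ω g) : LpS p Ω f ≤ A)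
  have h2 := LpS_le_iff hp0 (le_add_of_nonneg_left (LpS_nonneg p Ω f) : LpS p Ω g ≤ A)
  have hc : ∀ {h : V2 → ℝ}, Continuous h → Continuous fun x => |h x| ^ p := fun hh =>
    hh.abs.rpow_const fun x => Or.inr hp0.le
  have hpt : ∀ x, |f x + g x| ^ p ≤ 2 ^ (p-1) * (|f x| ^ p + |g x| ^ p) := by
    intro x
    have := Real.rpow_sum_le_const_mul_sum_rpow (Finset.univ : Finset (Fin 2))
      ![f x, g x] (p := p) (by linarith)
    simp at this
    exact (rpow_le_rpow (abs_nonneg _) (abs_add_le _ _) hp0.le).trans this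
  have hI : ∫ x in Ω, |f x + g x| ^ p ≤ 2 ^ (p-1) * (A^p + A^p) := by
    calc _ ≤ ∫ x in Ω, 2 ^ (p-1) * (|f x| ^ p + |g x| ^ p) := by
          apply integral_mono (D.intOn (hc (hf.add hg))) (D.intOn (continuous_const.mul
              ((hc hf).add (hc hg))))
          exact hpt
      _ = 2 ^ (p-1) * (∫ x in Ω, |f x| ^ p) + 2 ^ (p-1) * ∫ x in Ω, |g x| ^ p := by
          rw [integral_const_mul, integral_add (D.intOn (hc hf)) (D.intOn (hc hg))]; ring
      _ ≤ 2 ^ (p-1) * A^p + 2^(p-1) * A^p := by gcongr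
      _ = _ := by ring
  calc LpS p Ω (fun x => f x + g x) ≤ ((2:ℝ) ^ (p-1) * (A^p+A^p)) ^ (1/p) := by
        apply rpow_le_rpow (integral_nonneg fun x => by positivity) hI (by positivity)
    _ = 2 * A := by
        have : (2:ℝ) ^ (p-1) * (A^p+A^p) = (2 * A)^p := by
          rw [mul_rpow (by norm_num) hA, ← two_mul, ← mul_assoc, ← rpow_add_one (by norm_num)]
          congr 2; ring
        rw [this, ← rpow_mul (by positivity), mul_one_div_cancel hp0.ne', rpow_one]

lemma mean_v (D : Dom Ω φ) {v : V2 → V2} (hv : ∀ i, ContDiff ℝ (⊤ : ℕ∞) fun y => v y i)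
    (hdiv : ∀ x ∈ Ω, div2 v x = 0) (hbd : ∀ x ∈ frontier Ω, dot (v x) (grad φ x) = 0) (i : Fin 2) :
    ∫ x in Ω, v x i = 0 := by
  have hx : ContDiff ℝ (⊤ : ℕ∞) fun y : V2 => y i := contDiff_apply ℝ ℝ i
  have h := D.div_eq (X := fun y j => y i * v y j) (fun j => cd_c1 (hx.mul (hv j))) (by
    intro x hx
    have := hbd x hx
    have e : dot (fun j => x i * v x j) (grad φ x) = x i * dot (v x) (grad φ x) := by
      simp [dot]; ring
    rw [e, this, mul_zero])
  rw [← h]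
  apply setIntegral_congr_fun D.meas
  intro x hxx
  have hd := hdiv x hxx
  unfold div2 at hd ⊢
  simp only [Fin.sum_univ_two] at hd
  simp only [Fin.sum_univ_two]
  rw [pd_mul 0 (cd_da hx x) (cd_da (hv 0) x), pd_mul 1 (cd_da hx x) (cd_da (hv 1) x), pd_coord, pd_coord]
  have : x i * pd 0 (fun y => v y 0) x + x i * pd 1 (fun y => v y 1) x = 0 := by
    rw [← mul_add, hd, mul_zero]
  fin_cases i <;> simp at this ⊢ <;> linarith

lemma q1_second (D : Dom Ω φ) {v : V2 → V2} (hv : ∀ i, ContDiff ℝ (⊤ : ℕ∞) fun y => v y i)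
    (hdiv : ∀ x ∈ Ω, div2 v x = 0) {x : V2} (hx : x ∈ Ω) (i j : Fin 2) :
    q1 (pd j fun y => v y i) x ≤ 2 * (q1 (pd 0 fun y => v y 0) x + q1 (curl2 v) x) := by
  set f : V2 → ℝ := fun y => v y 0 with hf'
  set g : V2 → ℝ := fun y => v y 1 with hg'
  have hf : ContDiff ℝ (⊤ : ℕ∞) f := hv 0
  have hg : ContDiff ℝ (⊤ : ℕ∞) g := hv 1
  have d0 : pd 0 (pd 0 f) x + pd 0 (pd 1 g) x = 0 := by
    rw [← pd_div hv, pd_congr D.isOpen (g := fun _ => 0) hdiv 0 hx, pd_const]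
  have d1 : pd 1 (pd 0 f) x + pd 1 (pd 1 g) x = 0 := by
    rw [← pd_div hv, pd_congr D.isOpen (g := fun _ => 0) hdiv 1 hx, pd_const]
  have w0 := pd_curl hv 0 x
  have w1 := pd_curl hv 1 x
  have cf := pd_comm hf 1 0 x
  have cg := pd_comm hg 1 0 x
  rw [← hf', ← hg'] at w0 w1
  rw [cf] at d1
  rw [cg] at w1
  have f11 : pd 1 (pd 1 f) x = - pd 0 (pd 0 f) x - pd 1 (curl2 v) x := by linarith
  have g00 : pd 0 (pd 0 g) x = pd 0 (pd 1 f) x + pd 0 (curl2 v) x := by linarith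
  have g01 : pd 0 (pd 1 g) x = - pd 0 (pd 0 f) x := by linarith
  have g11 : pd 1 (pd 1 g) x = - pd 0 (pd 1 f) x := by linarith
  unfold q1
  generalize pd 0 (curl2 v) x = W0 at *
  generalize pd 1 (curl2 v) x = W1 at *
  generalize hA : pd 0 (pd 0 f) x = A at *
  generalize hB : pd 0 (pd 1 f) x = B at *
  have k1 := sq_nonneg A
  have k2 := sq_nonneg B
  have k3 := sq_nonneg W0
  have k4 := sq_nonneg W1
  fin_cases i <;> fin_cases j
  · show pd 0 (pd 0 f) x ^2 + pd 1 (pd 0 f) x ^2 ≤ _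
    rw [cf, hA]; linarith
  · show pd 0 (pd 1 f) x ^2 + pd 1 (pd 1 f) x ^2 ≤ _
    rw [cf, f11, hB]; nlinarith [sq_nonneg (A - W1)]
  · show pd 0 (pd 0 g) x ^2 + pd 1 (pd 0 g) x ^2 ≤ _
    rw [cf, cg, g01, g00]; nlinarith [sq_nonneg (B - W0)]
  · show pd 0 (pd 1 g) x ^2 + pd 1 (pd 1 g) x ^2 ≤ _
    rw [cf, g01, g11]; linarith

/-- the `Lᵖ` estimate of the gradient of a solenoidal tangential field -/
lemma vest (D : Dom Ω φ) {p : ℝ} (hp : 2 ≤ p) : ∃ C, 0 ≤ C ∧ ∀ v : V2 → V2,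
    (∀ i, ContDiff ℝ (⊤ : ℕ∞) fun y => v y i) →
    (∀ x ∈ Ω, div2 v x = 0) → (∀ x ∈ frontier Ω, dot (v x) (grad φ x) = 0) →
    LpG p Ω v ≤ C * (√(∫ x in Ω, curl2 v x ^ 2)) ^ (2/p) *
      (√((∫ x in Ω, curl2 v x ^ 2) + ∫ x in Ω, q1 (curl2 v) x)) ^ (1 - 2/p) := by
  obtain ⟨C1, hC1, H1⟩ := D.gn hp
  obtain ⟨C2, hC2, H2⟩ := D.h2v
  obtain ⟨C3, hC3, H3⟩ := D.poincare
  have hp0 : 0 < p := by linarith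
  set K := 1 + 2 * (C2 * (1 + C3) + 1) with hK
  have hK1 : 0 ≤ K := by positivity
  refine ⟨2 * (C1 * (√K) ^ (1 - 2/p)), by positivity, fun v hv hdiv hbd => ?_⟩
  have kd := D.kadlec hv hdiv hbd
  set I := ∫ x in Ω, curl2 v x ^ 2 with hI
  set Q := ∫ x in Ω, q1 (curl2 v) x with hQ
  have hI0 : 0 ≤ I := integral_nonneg fun x => sq_nonneg _
  have hQ0 : 0 ≤ Q := integral_nonneg fun x => q1_nonneg _ _
  have iq : ∀ {f : V2 → ℝ}, ContDiff ℝ (⊤ : ℕ∞) f → Integrable (q1 f) (volume.restrict Ω) :=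
    fun hf => D.intOn (q1_cont (cd_c1 hf))
  have is : ∀ {f : V2 → ℝ}, ContDiff ℝ (⊤ : ℕ∞) f → Integrable (fun x => f x ^ 2) (volume.restrict Ω) :=
    fun hf => D.intOn (hf.continuous.pow 2)
  have ig : Integrable (gnsq v) (volume.restrict Ω) := D.intOn (gnsq_cont fun i => cd_c1 (hv i))
  have hv2 : ∫ x in Ω, nsq (v x) ≤ C3 * I := by
    have e : ∀ x, nsq (v x) = v x 0 ^ 2 + v x 1 ^ 2 := by intro x; simp [nsq]
    simp only [e]
    rw [integral_add (is (hv 0)) (is (hv 1))]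
    have a0 := H3 (fun y => v y 0) (cd_c1 (hv 0)) (D.mean_v hv hdiv hbd 0)
    have a1 := H3 (fun y => v y 1) (cd_c1 (hv 1)) (D.mean_v hv hdiv hbd 1)
    simp only [gnsq_eq] at kd
    rw [integral_add (iq (hv 0)) (iq (hv 1))] at kd
    have := mul_le_mul_of_nonneg_left kd hC3
    linarith
  have hSS : ∫ x in Ω, SS v x ≤ (1 + C3) * (I + Q) := by
    unfold SS
    have i1 : Integrable (fun x => q1 (curl2 v) x + gnsq v x) (volume.restrict Ω) :=
      (iq (cd_curl hv)).add ig
    have i2 : Integrable (fun x => nsq (v x)) (volume.restrict Ω) :=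
      D.intOn (nsq_cont fun i => (hv i).continuous)
    rw [integral_add i1 i2, integral_add (iq (cd_curl hv)) ig]
    nlinarith [mul_nonneg hC3 hQ0]
  have hA := H2 v hv hdiv hbd
  have hA2 : ∫ x in Ω, q1 (pd 0 fun y => v y 0) x ≤ C2 * (1 + C3) * (I + Q) := by
    refine hA.trans ?_
    rw [mul_assoc]
    exact mul_le_mul_of_nonneg_left hSS hC2
  rw [mul_assoc 2, mul_assoc 2]
  apply D.LpG_le hp hv
  intro i j
  set h := pd j fun y => v y i with hh
  have hsm : ContDiff ℝ (⊤ : ℕ∞) h := cd_pd (hv i) j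
  have h1 : ∫ x in Ω, h x ^ 2 ≤ I := by
    refine le_trans ?_ kd
    apply integral_mono (is hsm) ig
    intro x
    show h x ^ 2 ≤ gnsq v x
    simp only [gnsq, hh]
    fin_cases i <;> fin_cases j <;> simp [Fin.sum_univ_two] <;> nlinarith [sq_nonneg (pd 0 (fun y => v y 0) x),
      sq_nonneg (pd 1 (fun y => v y 0) x), sq_nonneg (pd 0 (fun y => v y 1) x), sq_nonneg (pd 1 (fun y => v y 1) x)]
  have h2 : ∫ x in Ω, q1 h x ≤ 2 * (C2 * (1 + C3) + 1) * (I + Q) := by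
    calc ∫ x in Ω, q1 h x ≤ ∫ x in Ω, 2 * (q1 (pd 0 fun y => v y 0) x + q1 (curl2 v) x) := by
          apply setIntegral_mono_on (iq hsm)
            (((iq (cd_pd (hv 0) 0)).add (iq (cd_curl hv))).const_mul 2) D.meas
          intro x hx
          exact D.q1_second hv hdiv hx i j
      _ = 2 * ((∫ x in Ω, q1 (pd 0 fun y => v y 0) x) + Q) := by
          rw [integral_const_mul, integral_add (iq (cd_pd (hv 0) 0)) (iq (cd_curl hv))]
      _ ≤ _ := by linarith
  have h3 : ∫ x in Ω, (h x ^ 2 + q1 h x) ≤ K * (I + Q) := by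
    rw [integral_add (is hsm) (iq hsm), hK]; linarith
  have hθ : 0 ≤ 1 - 2/p := by
    rw [sub_nonneg, div_le_one hp0]; exact hp
  calc LpS p Ω h ≤ _ := H1 h (cd_c1 hsm)
    _ ≤ C1 * √I ^ (2/p) * (√(K * (I + Q))) ^ (1 - 2/p) := by gcongr
    _ = _ := by
      rw [sqrt_mul hK1, mul_rpow (sqrt_nonneg _) (sqrt_nonneg _)]; ring

end Dom

/-! ## Abstract versions of the three estimates -/

lemma interp {p L S k J Y : ℝ} (hp : 2 ≤ p) (hL : 0 ≤ L) (hS : 0 ≤ S) (hk : 0 ≤ k) (hJ0 : 0 ≤ J)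
    (hJ : J ≤ 2 * L) (hY0 : 0 ≤ Y) (hY : Y ≤ 2 * L + k * S) :
    J ^ (2/p) * Y ^ (1 - 2/p) ≤ 2 * L + 2 ^ (2/p) * k ^ (1-2/p) * (S ^ (1-2/p) * L ^ (2/p)) := by
  have hp0 : 0 < p := by linarith
  have hθ : 0 ≤ 1 - 2/p := by rw [sub_nonneg, div_le_one hp0]; exact hp
  have hs : 0 ≤ 2/p := by positivity
  have h1 : Y ^ (1-2/p) ≤ (2*L)^(1-2/p) + (k*S)^(1-2/p) :=
    (rpow_le_rpow hY0 hY hθ).trans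
      (Real.rpow_add_le_add_rpow (by positivity) (by positivity) hθ (by linarith))
  calc J ^ (2/p) * Y ^ (1 - 2/p) ≤ (2*L)^(2/p) * ((2*L)^(1-2/p) + (k*S)^(1-2/p)) := by gcongr
    _ = (2*L)^(2/p) * (2*L)^(1-2/p) + (2*L)^(2/p) * (k*S)^(1-2/p) := by ring
    _ = 2 * L + 2 ^ (2/p) * k ^ (1-2/p) * (S ^ (1-2/p) * L ^ (2/p)) := by
      have : 2/p + (1 - 2/p) = 1 := by ring
      rw [← rpow_add_of_nonneg (by positivity) hs hθ, this, rpow_one, mul_rpow (by norm_num) hL,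
        mul_rpow hk hS]
      ring

namespace Dom
variable {Ω : Set V2} {φ : V2 → ℝ}

lemma intSq (D : Dom Ω φ) {f : V2 → ℝ} (hf : Continuous f) :
    Integrable (fun x => f x ^ 2) (volume.restrict Ω) := D.intOn (hf.pow 2)

lemma hodge (D : Dom Ω φ) {F ω : V2 → ℝ} (hF : ContDiff ℝ 1 F) (hω : ContDiff ℝ (⊤ : ℕ∞) ω)
    (h0 : ∀ x ∈ frontier Ω, ω x = 0) :
    ∫ x in Ω, (pd 1 F x * pd 0 ω x - pd 0 F x * pd 1 ω x) = 0 := by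
  have hX : ∀ i : Fin 2, ContDiff ℝ 1 fun y => (![- (F y * pd 1 ω y), F y * pd 0 ω y] : V2) i := by
    intro i; fin_cases i
    · exact (hF.mul (cd_c1 (cd_pd hω 1))).neg
    · exact hF.mul (cd_c1 (cd_pd hω 0))
  have h := D.div_eq (X := fun y => ![- (F y * pd 1 ω y), F y * pd 0 ω y]) hX (by
    intro x hx
    have := D.grad_tangent hω h0 hx (w := ![pd 1 φ x, - pd 0 φ x]) (by simp [dot, grad]; ring)
    simp [dot, grad] at this ⊢
    linear_combination F x * this)
  rw [← h]
  congr 1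
  ext x
  have hd : DifferentiableAt ℝ F x := hF.differentiable (by norm_num) x
  show _ = ∑ i, pd i (fun y => (![- (F y * pd 1 ω y), F y * pd 0 ω y] : V2) i) x
  rw [Fin.sum_univ_two]
  show _ = pd 0 (fun y => - (F y * pd 1 ω y)) x + pd 1 (fun y => F y * pd 0 ω y) x
  rw [pd_neg, pd_mul 0 hd (cd_da (cd_pd hω 1) x), pd_mul 1 hd (cd_da (cd_pd hω 0) x), pd_comm hω 0 1]
  ring

lemma core (D : Dom Ω φ) {μ : ℝ} (hμ : 0 < μ) {F ω : V2 → ℝ} (hF : ContDiff ℝ 1 F)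
    (hω : ContDiff ℝ (⊤ : ℕ∞) ω) (h0 : ∀ x ∈ frontier Ω, ω x = 0) {m b : V2 → V2}
    (hb : ∀ i, Continuous fun x => b x i)
    (hm0 : ∀ x ∈ Ω, m x 0 = pd 0 F x - μ * pd 1 ω x + b x 0)
    (hm1 : ∀ x ∈ Ω, m x 1 = pd 1 F x + μ * pd 0 ω x + b x 1) :
    √(∫ x in Ω, q1 F x) ≤ 2 * (LpV 2 Ω m + LpV 2 Ω b) ∧
    √(∫ x in Ω, q1 ω x) ≤ (2 / μ) * (LpV 2 Ω m + LpV 2 Ω b) := by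
  have hω1 := cd_c1 hω
  have cF := c1_pd hF
  have cω := c1_pd hω1
  rw [LpV_two, LpV_two]
  have em : ∫ x in Ω, nsq (m x) = ∫ x in Ω, ((pd 0 F x - μ * pd 1 ω x + b x 0)^2
      + (pd 1 F x + μ * pd 0 ω x + b x 1)^2) := by
    apply setIntegral_congr_fun D.meas
    intro x hx
    simp [nsq, hm0 x hx, hm1 x hx]
  have hmc : Continuous fun x => (pd 0 F x - μ * pd 1 ω x + b x 0)^2
      + (pd 1 F x + μ * pd 0 ω x + b x 1)^2 :=
    ((((cF 0).sub (continuous_const.mul (cω 1))).add (hb 0)).pow 2).add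
      ((((cF 1).add (continuous_const.mul (cω 0))).add (hb 1)).pow 2)
  rw [em]
  have hmain : (∫ x in Ω, q1 F x) + μ^2 * ∫ x in Ω, q1 ω x ≤
      2 * (∫ x in Ω, ((pd 0 F x - μ * pd 1 ω x + b x 0)^2
      + (pd 1 F x + μ * pd 0 ω x + b x 1)^2)) + 2 * ∫ x in Ω, nsq (b x) := by
    have i1 : Integrable (q1 F) (volume.restrict Ω) := D.intOn (q1_cont hF)
    have i2 : Integrable (q1 ω) (volume.restrict Ω) := D.intOn (q1_cont hω1)
    have i3 : Integrable (fun x => pd 1 F x * pd 0 ω x - pd 0 F x * pd 1 ω x) (volume.restrict Ω) :=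
      D.intOn (((cF 1).mul (cω 0)).sub ((cF 0).mul (cω 1)))
    have i4 : Integrable (fun x => nsq (b x)) (volume.restrict Ω) := D.intOn (nsq_cont hb)
    have i12 : Integrable (fun x => q1 F x + μ^2 * q1 ω x) (volume.restrict Ω) := i1.add (i2.const_mul _)
    have e : (∫ x in Ω, q1 F x) + μ^2 * ∫ x in Ω, q1 ω x = ∫ x in Ω, (q1 F x + μ^2 * q1 ω x
        + 2 * μ * (pd 1 F x * pd 0 ω x - pd 0 F x * pd 1 ω x)) := by
      rw [integral_add i12 (i3.const_mul _), integral_add i1 (i2.const_mul _), integral_const_mul,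
        integral_const_mul, D.hodge hF hω h0]; ring
    rw [e, ← integral_const_mul, ← integral_const_mul,
      ← integral_add ((D.intOn hmc).const_mul _) (i4.const_mul _)]
    apply integral_mono (i12.add (i3.const_mul _)) (((D.intOn hmc).const_mul _).add (i4.const_mul _))
    intro x
    show q1 F x + μ^2 * q1 ω x + 2 * μ * (pd 1 F x * pd 0 ω x - pd 0 F x * pd 1 ω x) ≤
      2 * ((pd 0 F x - μ * pd 1 ω x + b x 0)^2 + (pd 1 F x + μ * pd 0 ω x + b x 1)^2) + 2 * nsq (b x)
    simp only [q1, nsq, Fin.sum_univ_two]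
    nlinarith [sq_nonneg (pd 0 F x - μ * pd 1 ω x + 2 * b x 0), sq_nonneg (pd 1 F x + μ * pd 0 ω x + 2 * b x 1)]
  set X := ∫ x in Ω, ((pd 0 F x - μ * pd 1 ω x + b x 0)^2 + (pd 1 F x + μ * pd 0 ω x + b x 1)^2) with hX
  set Y := ∫ x in Ω, nsq (b x) with hY
  have hX0 : 0 ≤ X := integral_nonneg fun x => by positivity
  have hY0 : 0 ≤ Y := integral_nonneg fun x => nsq_nonneg _
  have hF0 : 0 ≤ ∫ x in Ω, q1 F x := integral_nonneg fun x => q1_nonneg _ _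
  have hω0 : 0 ≤ ∫ x in Ω, q1 ω x := integral_nonneg fun x => q1_nonneg _ _
  have sX := sq_sqrt hX0
  have sY := sq_sqrt hY0
  have pX := sqrt_nonneg X
  have pY := sqrt_nonneg Y
  have hμ2 : 0 ≤ μ^2 * ∫ x in Ω, q1 ω x := by positivity
  have bd : 2 * X + 2 * Y ≤ (2 * (√X + √Y))^2 := by nlinarith [mul_nonneg pX pY]
  constructor
  · apply sqrt_le_iff.2 ⟨by positivity, by linarith⟩
  · apply sqrt_le_iff.2 ⟨by positivity, ?_⟩
    have : (2 / μ * (√X + √Y))^2 = (2 * (√X + √Y))^2 / μ^2 := by field_simp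
    rw [this, le_div_iff₀ (by positivity)]
    linarith

lemma part1 (D : Dom Ω φ) {μ p : ℝ} (hμ : 0 < μ) (hp : 2 ≤ p) : ∃ C, 0 ≤ C ∧
    ∀ (U : V2 → V2) (S : ℝ), (∀ i, ContDiff ℝ (⊤ : ℕ∞) fun y => U y i) → 0 ≤ S →
    √(∫ x in Ω, q1 (curl2 U) x) ≤ (2 / μ) * S →
    ∀ (v : V2 → V2) (q : V2 → ℝ),
          (∀ i, ContDiff ℝ (⊤ : ℕ∞) fun y => v y i) → ContDiff ℝ (⊤ : ℕ∞) q →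
          (∀ x ∈ Ω, U x = v x + grad q x) →
          (∀ x ∈ Ω, div2 v x = 0) →
          (∀ x ∈ frontier Ω, dot (v x) (grad φ x) = 0) →
    LpG p Ω v + LpS p Ω (curl2 U) ≤ C * (S ^ (1-2/p) * LpG 2 Ω U ^ (2/p)) + C * LpG 2 Ω U := by
  obtain ⟨C1, hC1, H1⟩ := D.gn hp
  obtain ⟨C2, hC2, H2⟩ := D.vest hp
  have hk : 0 ≤ (2:ℝ) ^ (2/p) * (2/μ) ^ (1-2/p) := by positivity
  refine ⟨(C1 + C2) * (2 + 2 ^ (2/p) * (2/μ) ^ (1-2/p)), by positivity, ?_⟩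
  intro U S hU hS hQ v q hv hq hdec hdiv hbd
  have hcurl : ∀ x ∈ Ω, curl2 v x = curl2 U x := by
    intro x hx
    have hc : ∀ i j : Fin 2, pd j (fun y => U y i) x = pd j (fun y => v y i) x + pd j (pd i q) x := by
      intro i j
      rw [← pd_add j (cd_da (hv i) x) (cd_da (cd_pd hq i) x)]
      exact pd_congr D.isOpen (fun y hy => by rw [hdec y hy]; rfl) j hx
    unfold curl2
    rw [hc, hc, pd_comm hq 0 1]; ring
  set L := LpG 2 Ω U with hL
  have hL0 : 0 ≤ L := by rw [hL, LpG_two]; exact sqrt_nonneg _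
  have e1 : ∫ x in Ω, curl2 v x ^ 2 = ∫ x in Ω, curl2 U x ^ 2 :=
    setIntegral_congr_fun D.meas fun x hx => by simp only [hcurl x hx]
  have e2 : ∫ x in Ω, q1 (curl2 v) x = ∫ x in Ω, q1 (curl2 U) x :=
    setIntegral_congr_fun D.meas fun x hx => by
      simp only [q1, pd_congr D.isOpen hcurl 0 hx, pd_congr D.isOpen hcurl 1 hx]
  have a2 := H2 v hv hdiv hbd
  rw [e1, e2] at a2
  have a1 := H1 (curl2 U) (cd_c1 (cd_curl hU))
  rw [integral_add (D.intSq (cd_curl hU).continuous) (D.intOn (q1_cont (cd_c1 (cd_curl hU))))] at a1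
  set I := ∫ x in Ω, curl2 U x ^ 2 with hI
  set Q := ∫ x in Ω, q1 (curl2 U) x with hQ'
  have hI0 : 0 ≤ I := integral_nonneg fun x => sq_nonneg _
  have hQ0 : 0 ≤ Q := integral_nonneg fun x => q1_nonneg _ _
  have hIL : √I ≤ 2 * L := by
    rw [hL, LpG_two]
    have : (2:ℝ) = √4 := by rw [show (4:ℝ) = 2^2 by norm_num, sqrt_sq (by norm_num)]
    rw [this, ← sqrt_mul (by norm_num)]
    apply sqrt_le_sqrt
    rw [← integral_const_mul]
    apply integral_mono (D.intSq (cd_curl hU).continuous)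
      ((D.intOn (gnsq_cont fun i => cd_c1 (hU i))).const_mul 4)
    intro x
    show curl2 U x ^ 2 ≤ 4 * gnsq U x
    simp only [curl2, gnsq, Fin.sum_univ_two]
    nlinarith [sq_nonneg (pd 0 (fun y => U y 1) x + pd 1 (fun y => U y 0) x),
      sq_nonneg (pd 0 (fun y => U y 1) x), sq_nonneg (pd 1 (fun y => U y 0) x),
      sq_nonneg (pd 0 (fun y => U y 0) x), sq_nonneg (pd 1 (fun y => U y 1) x)]
  have hsum : √(I + Q) ≤ 2 * L + 2/μ * S := by
    have : √(I+Q) ≤ √I + √Q := by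
      apply sqrt_le_iff.2 ⟨by positivity, ?_⟩
      nlinarith [sq_sqrt hI0, sq_sqrt hQ0, mul_nonneg (sqrt_nonneg I) (sqrt_nonneg Q)]
    linarith
  have hin := interp hp hL0 hS (k := 2/μ) (by positivity) (sqrt_nonneg I) hIL (sqrt_nonneg (I+Q)) hsum
  set Z := S ^ (1-2/p) * L ^ (2/p) with hZ
  have hZ0 : 0 ≤ Z := by positivity
  set k := (2:ℝ) ^ (2/p) * (2/μ) ^ (1-2/p) with hk'
  have b1 := mul_le_mul_of_nonneg_left hin hC1
  have b2 := mul_le_mul_of_nonneg_left hin hC2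
  have c1 : 0 ≤ (C1 + C2) * (2 * Z + k * L) := by positivity
  rw [mul_assoc] at a1 a2
  nlinarith

lemma part2 (D : Dom Ω φ) : ∃ C, 0 ≤ C ∧
    ∀ (F : V2 → ℝ) (b : V2 → V2), ContDiff ℝ 1 F → (∀ i, Continuous fun y => b y i) →
    ∫ x in Ω, F x = - (∫ x in Ω, nsq (b x)) / 2 →
    LpS 2 Ω F ≤ C * √(∫ x in Ω, q1 F x) + LpV 4 Ω b ^ 2 := by
  obtain ⟨C, hC, H⟩ := D.poincare
  refine ⟨√(2*C), sqrt_nonneg _, fun F b hF hb hmean => ?_⟩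
  have hfin : IsFiniteMeasure (volume.restrict Ω) := ⟨by
    rw [Measure.restrict_apply_univ]; exact D.bdd.measure_lt_top⟩
  have hvol : 0 < (volume Ω).toReal :=
    ENNReal.toReal_pos (D.isOpen.measure_pos volume D.ne).ne' D.bdd.measure_lt_top.ne
  set V := (volume Ω).toReal with hV
  set c := (∫ x in Ω, F x) / V with hc
  have hIntc : ∀ r : ℝ, ∫ _x in Ω, r = V * r := by
    intro r; simp [hV, Measure.real]
  have hFc := hF.continuous
  have hg : ContDiff ℝ 1 fun x => F x - c := hF.sub contDiff_const
  have hq : q1 (fun x => F x - c) = q1 F := by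
    ext x
    have hd : DifferentiableAt ℝ F x := hF.differentiable (by norm_num) x
    unfold q1
    rw [pd_sub 0 hd (differentiableAt_const _), pd_sub 1 hd (differentiableAt_const _), pd_const, pd_const]
    simp
  have hp := H _ hg (by
    rw [integral_sub (D.intOn hFc) (integrable_const _), hIntc, hc]; field_simp; ring)
  rw [hq] at hp
  have hF2 : ∫ x in Ω, F x ^2 ≤ 2 * (∫ x in Ω, (F x - c)^2) + V * (2 * c^2) := by
    rw [← hIntc, ← integral_const_mul, ← integral_add ((D.intSq hg.continuous).const_mul 2) (integrable_const _)]
    apply integral_mono (D.intOn (hFc.pow 2)) (((D.intSq hg.continuous).const_mul 2).add (integrable_const _))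
    intro x
    show F x ^2 ≤ 2 * (F x - c)^2 + 2 * c^2
    nlinarith [sq_nonneg (F x - 2 * c)]
  have hnc := nsq_cont hb
  have hcs := D.cs hnc (continuous_const (y := (1:ℝ)))
  simp only [mul_one, one_pow, hIntc] at hcs
  have hn : LpV 4 Ω b ^ 2 = √(∫ x in Ω, nsq (b x) ^ 2) := by
    unfold LpV
    have h0 : 0 ≤ ∫ x in Ω, nsq (b x) ^ ((4:ℝ)/2) := integral_nonneg fun x => rpow_nonneg (nsq_nonneg _) _
    rw [← rpow_two, ← rpow_mul h0, sqrt_eq_rpow]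
    norm_num
  have hcV : V * (2 * c^2) ≤ ∫ x in Ω, nsq (b x) ^ 2 := by
    have hcm : V * c = - (∫ x in Ω, nsq (b x)) / 2 := by rw [hc, ← hmean]; field_simp
    have h0 : 0 ≤ ∫ x in Ω, nsq (b x) ^ 2 := integral_nonneg fun x => sq_nonneg _
    have : V * (V * (2 * c^2)) ≤ V * ∫ x in Ω, nsq (b x) ^ 2 := by
      have e : V * (V * (2 * c^2)) = 2 * (V*c)^2 := by ring
      rw [e, hcm]; nlinarith
    exact le_of_mul_le_mul_left this hvol
  rw [LpS_two, hn, ← sqrt_mul (by positivity)]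
  have h0 : 0 ≤ ∫ x in Ω, nsq (b x) ^ 2 := integral_nonneg fun x => sq_nonneg _
  have h1 : 0 ≤ ∫ x in Ω, q1 F x := integral_nonneg fun x => q1_nonneg _ _
  apply sqrt_le_iff.2 ⟨by positivity, ?_⟩
  have k1 : 0 ≤ 2 * C * ∫ x in Ω, q1 F x := by positivity
  nlinarith [sq_sqrt h0, sq_sqrt k1, mul_nonneg (sqrt_nonneg (2 * C * ∫ x in Ω, q1 F x))
    (sqrt_nonneg (∫ x in Ω, nsq (b x) ^ 2))]

lemma part3 (D : Dom Ω φ) {p : ℝ} (hp : 2 ≤ p) : ∃ C, 0 ≤ C ∧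
    ∀ (G : V2 → ℝ), ContDiff ℝ 1 G → ∫ x in Ω, G x = 0 →
    LpS p Ω G ≤ C * LpS 2 Ω G ^ (2/p) * (√(∫ x in Ω, q1 G x)) ^ (1-2/p) := by
  obtain ⟨C1, hC1, H1⟩ := D.gn hp
  obtain ⟨C2, hC2, H2⟩ := D.poincare
  refine ⟨C1 * (√(1 + C2)) ^ (1-2/p), by positivity, fun G hG hm => ?_⟩
  have hp0 : 0 < p := by linarith
  have hθ : 0 ≤ 1 - 2/p := by rw [sub_nonneg, div_le_one hp0]; exact hp
  have a1 := H1 G hG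
  have a2 := H2 G hG hm
  rw [integral_add (D.intSq hG.continuous) (D.intOn (q1_cont hG)), ← LpS_two] at a1
  have h0 : 0 ≤ LpS 2 Ω G := LpS_nonneg _ _ _
  calc LpS p Ω G ≤ _ := a1
    _ ≤ C1 * LpS 2 Ω G ^ (2/p) * (√((1 + C2) * ∫ x in Ω, q1 G x)) ^ (1-2/p) := by
        gcongr
        linarith
    _ = _ := by
        rw [sqrt_mul (by positivity), mul_rpow (sqrt_nonneg _) (sqrt_nonneg _)]; ring

end Dom

/-! ## The momentum equation in terms of the effective viscous flux -/

lemma sp {f : ℝ → V2 → ℝ} (hf : Smooth2 f) (t : ℝ) : ContDiff ℝ (⊤ : ℕ∞) (f t) := by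
  have : ContDiff ℝ (⊤ : ℕ∞) fun x : V2 => ((t, x) : ℝ × V2) := contDiff_const.prodMk contDiff_id
  exact hf.comp this

lemma ti {f : ℝ → V2 → ℝ} (hf : Smooth2 f) (t : ℝ) (x : V2) : DifferentiableAt ℝ (fun s => f s x) t := by
  have h : ContDiff ℝ (⊤ : ℕ∞) fun s : ℝ => ((s, x) : ℝ × V2) := contDiff_id.prodMk contDiff_const
  have h2 : ContDiff ℝ (⊤ : ℕ∞) fun s : ℝ => f s x := hf.comp h
  exact h2.differentiable (by simp) t

lemma cd_nsq {b : V2 → V2} (hb : ∀ i, ContDiff ℝ (⊤ : ℕ∞) fun y => b y i) :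
    ContDiff ℝ (⊤ : ℕ∞) fun x => nsq (b x) := by
  unfold nsq
  exact ContDiff.sum fun i _ => (hb i).pow 2

lemma press_c1 {a γ : ℝ} (hγ : 1 < γ) {r : V2 → ℝ} (hr : ContDiff ℝ (⊤ : ℕ∞) r) :
    ContDiff ℝ 1 fun x => a * r x ^ γ := by
  have h : ContDiff ℝ 1 fun s : ℝ => s ^ γ :=
    Real.contDiff_rpow_const_of_le (n := 1) (by exact_mod_cast hγ.le)
  exact contDiff_const.mul (h.comp (cd_c1 hr))

lemma lap_zero {U : V2 → V2} (hU : ∀ i, ContDiff ℝ (⊤ : ℕ∞) fun y => U y i) (x : V2) :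
    lap (fun y => U y 0) x = pd 0 (div2 U) x - pd 1 (curl2 U) x := by
  rw [pd_div hU, pd_curl hU, pd_comm (hU 1) 1 0]
  simp [lap]
  ring

lemma lap_one {U : V2 → V2} (hU : ∀ i, ContDiff ℝ (⊤ : ℕ∞) fun y => U y i) (x : V2) :
    lap (fun y => U y 1) x = pd 1 (div2 U) x + pd 0 (curl2 U) x := by
  rw [pd_div hU, pd_curl hU, pd_comm (hU 0) 1 0]
  simp [lap]
  ring

lemma mom {Ω : Set V2} {n : V2 → V2} {a γ μ lam ν : ℝ} {I : Set ℝ} {ρ : ℝ → V2 → ℝ} {u B : ℝ → V2 → V2}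
    (hγ : 1 < γ) (hρ : Smooth2 ρ) (hu : Smooth2V u) (hB : Smooth2V B)
    (hs : IsMHDSol Ω n a γ μ lam ν I ρ u B) {t : ℝ} (ht : t ∈ I) {x : V2} (hx : x ∈ Ω) (i : Fin 2) :
    ρ t x * matD u t x i = pd i (Fflux Ω a γ μ lam ρ u B t) x + dot (B t x) (grad (fun y => B t y i) x)
      + μ * (lap (fun y => u t y i) x - pd i (div2 (u t)) x) := by
  have r := sp hρ t
  have U := fun i => sp (hu i) t
  have Bs := fun i => sp (hB i) t
  have hm := hs.mass t ht x hx
  have hp := hs.momentum t ht x hx i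
  have e1 : dt (fun s y => ρ s y * u s y i) t x = dt ρ t x * u t x i + ρ t x * dt (fun s y => u s y i) t x :=
    deriv_fun_mul (ti hρ t x) (ti (hu i) t x)
  have e2 : ∀ j, pd j (fun y => ρ t y * u t y i * u t y j) x
      = pd j (fun y => u t y i) x * (ρ t x * u t x j) + u t x i * pd j (fun y => ρ t y * u t y j) x := by
    intro j
    rw [← pd_mul j (cd_da (U i) x) (cd_da (r.mul (U j)) x)]
    congr 1; ext y; ring
  have e3 : pd i (Fflux Ω a γ μ lam ρ u B t) x = (2 * μ + lam) * pd i (div2 (u t)) x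
      - pd i (fun y => a * ρ t y ^ γ) x - pd i (fun y => nsq (B t y)) x / 2 := by
    have hP : DifferentiableAt ℝ (fun y => a * ρ t y ^ γ) x := (press_c1 hγ r).differentiable (by norm_num) x
    have hD := cd_da (cd_div U) x
    have hN := cd_da (cd_nsq Bs) x
    have f1 : Fflux Ω a γ μ lam ρ u B t = fun x => (2 * μ + lam) * div2 (u t) x
        - (a * ρ t x ^ γ - Pbar Ω a γ ρ t) - (1/2) * nsq (B t x) := by
      ext x; unfold Fflux; ring
    have h1 : DifferentiableAt ℝ (fun y => (2 * μ + lam) * div2 (u t) y) x := hD.const_mul _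
    have h2 : DifferentiableAt ℝ (fun y => a * ρ t y ^ γ - Pbar Ω a γ ρ t) x :=
      hP.sub (differentiableAt_const _)
    have h12 : DifferentiableAt ℝ
        (fun y => (2 * μ + lam) * div2 (u t) y - (a * ρ t y ^ γ - Pbar Ω a γ ρ t)) x := h1.sub h2
    have h3 : DifferentiableAt ℝ (fun y => (1/2) * nsq (B t y)) x := hN.const_mul _
    rw [f1, pd_sub i h12 h3, pd_sub i h1 h2,
      pd_sub i hP (differentiableAt_const _), pd_mul i (differentiableAt_const _) hD,
      pd_mul i (differentiableAt_const _) hN, pd_const, pd_const, pd_const]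
    ring
  simp only [e2, Fin.sum_univ_two] at hp
  rw [e1] at hp
  rw [e3]
  simp only [div2, Fin.sum_univ_two] at hm
  unfold matD
  simp only [dot, grad, Fin.sum_univ_two] at hp ⊢
  have hdv : pd i (fun y => div2 (u t) y) x = pd i (div2 (u t)) x := rfl
  rw [hdv] at hp
  linear_combination hp - u t x i * hm

lemma BgB {b : V2 → V2} (x : V2) :
    nsq (fun k => dot (b x) (grad (fun y => b y k) x)) ≤ nsq (b x) * gnsq b x := by
  simp only [nsq, gnsq, dot, grad, Fin.sum_univ_two]
  nlinarith [sq_nonneg (b x 0 * pd 1 (fun y => b y 0) x - b x 1 * pd 0 (fun y => b y 0) x),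
    sq_nonneg (b x 0 * pd 1 (fun y => b y 1) x - b x 1 * pd 0 (fun y => b y 1) x)]

lemma q1_nsq {b : V2 → V2} (hb : ∀ i, ContDiff ℝ (⊤ : ℕ∞) fun y => b y i) (x : V2) :
    q1 (fun y => (1/2) * nsq (b y)) x ≤ nsq (b x) * gnsq b x := by
  have e : ∀ i, pd i (fun y => (1/2) * nsq (b y)) x
      = b x 0 * pd i (fun y => b y 0) x + b x 1 * pd i (fun y => b y 1) x := by
    intro i
    have : (fun y => (1/2) * nsq (b y)) = fun y => (1/2) * (b y 0 * b y 0 + b y 1 * b y 1) := by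
      ext y; simp [nsq]; ring
    rw [this, pd_mul i (differentiableAt_const _) (cd_da (((hb 0).mul (hb 0)).add ((hb 1).mul (hb 1))) x),
      pd_add i (cd_da ((hb 0).mul (hb 0)) x) (cd_da ((hb 1).mul (hb 1)) x),
      pd_mul i (cd_da (hb 0) x) (cd_da (hb 0) x), pd_mul i (cd_da (hb 1) x) (cd_da (hb 1) x), pd_const]
    ring
  unfold q1
  rw [e, e]
  simp only [nsq, gnsq, Fin.sum_univ_two]
  nlinarith [sq_nonneg (b x 0 * pd 0 (fun y => b y 1) x - b x 1 * pd 0 (fun y => b y 0) x),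
    sq_nonneg (b x 0 * pd 1 (fun y => b y 1) x - b x 1 * pd 1 (fun y => b y 0) x)]

lemma LpV_nonneg (p : ℝ) (Ω : Set V2) (f : V2 → V2) : 0 ≤ LpV p Ω f :=
  rpow_nonneg (integral_nonneg fun x => rpow_nonneg (nsq_nonneg _) _) _

lemma LpG_nonneg (p : ℝ) (Ω : Set V2) (f : V2 → V2) : 0 ≤ LpG p Ω f :=
  rpow_nonneg (integral_nonneg fun x => rpow_nonneg (gnsq_nonneg _ _) _) _

lemma LpS_const_mul {p : ℝ} (hp : 0 < p) (Ω : Set V2) {c : ℝ} (hc : 0 ≤ c) (f : V2 → ℝ) :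
    LpS p Ω (fun x => c * f x) = c * LpS p Ω f := by
  unfold LpS
  have : ∀ x, |c * f x| ^ p = c^p * |f x| ^ p := by
    intro x; rw [abs_mul, abs_of_nonneg hc, mul_rpow hc (abs_nonneg _)]
  simp only [this]
  rw [integral_const_mul, mul_rpow (by positivity) (integral_nonneg fun x => by positivity),
    ← rpow_mul hc, mul_one_div_cancel hp.ne', rpow_one]

lemma LpS_neg (p : ℝ) (Ω : Set V2) (f : V2 → ℝ) : LpS p Ω (fun x => - f x) = LpS p Ω f := by
  unfold LpS; simp only [abs_neg]

lemma LpS_nsq {p : ℝ} (hp : 0 < p) (Ω : Set V2) (b : V2 → V2) :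
    LpS p Ω (fun x => nsq (b x)) = LpV (2*p) Ω b ^ 2 := by
  unfold LpS LpV
  have e : ∀ x, |nsq (b x)| ^ p = nsq (b x) ^ (2*p/2) := by
    intro x; rw [abs_of_nonneg (nsq_nonneg _)]; congr 1; ring
  simp only [e]
  rw [← rpow_two, ← rpow_mul (integral_nonneg fun x => rpow_nonneg (nsq_nonneg _) _)]
  congr 1; field_simp

lemma dot_normal {w g m : V2} (hg : g ≠ 0) (hm : m = (√(nsq g))⁻¹ • g) (h : dot w m = 0) : dot w g = 0 := by
  have hpos : 0 < nsq g := by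
    rcases (nsq_nonneg g).lt_or_eq with h | h
    · exact h
    · exfalso; apply hg
      simp only [nsq, Fin.sum_univ_two] at h
      ext i; fin_cases i
      · simp; nlinarith [sq_nonneg (g 0), sq_nonneg (g 1)]
      · simp; nlinarith [sq_nonneg (g 0), sq_nonneg (g 1)]
  have h2 : dot w m = (√(nsq g))⁻¹ * dot w g := by
    rw [hm]; simp [dot]; ring
  rw [h2] at h
  rcases mul_eq_zero.1 h with h | h
  · have := inv_pos.2 (sqrt_pos.2 hpos); linarith
  · exact h

lemma sqrt_two_le {X Q R : ℝ} (hQ : 0 ≤ Q) (hR : 0 ≤ R) (h : X ≤ 2 * Q + 2 * R) :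
    √X ≤ 2 * √Q + 2 * √R := by
  rw [sqrt_le_iff]
  refine ⟨by positivity, ?_⟩
  nlinarith [sq_sqrt hQ, sq_sqrt hR, mul_nonneg (sqrt_nonneg Q) (sqrt_nonneg R)]

lemma Dom.int_press {Ω : Set V2} {φ : V2 → ℝ} (D : Dom Ω φ) {f : V2 → ℝ} (hf : Continuous f) :
    ∫ x in Ω, (f x - avg Ω f) = 0 := by
  rw [integral_sub (D.intOn hf) (D.intOn continuous_const)]
  have h1 : (volume Ω).toReal ≠ 0 :=
    (ENNReal.toReal_pos (D.isOpen.measure_pos volume D.ne).ne' D.bdd.measure_lt_top.ne).ne'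
  simp only [integral_const, smul_eq_mul, measureReal_restrict_apply_univ, Measure.real, avg]
  field_simp
  simp

lemma bb_sq {Ω : Set V2} (b : V2 → V2) :
    LpS 2 Ω (fun x => √(nsq (b x)) * √(gnsq b x)) = √(∫ x in Ω, nsq (b x) * gnsq b x) := by
  rw [LpS_two]
  congr 2; ext x
  rw [mul_pow, sq_sqrt (nsq_nonneg _), sq_sqrt (gnsq_nonneg _ _)]

lemma Dom.main {Ω : Set V2} {φ : V2 → ℝ} (D : Dom Ω φ) {n : V2 → V2} (hn : ∀ x ∈ frontier Ω,
      n x = (√(nsq (grad φ x)))⁻¹ • grad φ x) {a γ μ lam ν T : ℝ} (hμ : 0 < μ)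
    {ρ : ℝ → V2 → ℝ} {u B : ℝ → V2 → V2} (hγ : 1 < γ)
    (hρ : Smooth2 ρ) (hu : Smooth2V u) (hB : Smooth2V B)
    (hs : IsMHDSol Ω n a γ μ lam ν (Ioc 0 T) ρ u B) {t : ℝ} (ht : t ∈ Ioc 0 T) :
    √(∫ x in Ω, q1 (Fflux Ω a γ μ lam ρ u B t) x) ≤ 2 * (LpV 2 Ω (fun x k => ρ t x * matD u t x k)
        + LpV 2 Ω (fun x k => dot (B t x) (grad (fun y => B t y k) x))) ∧
    √(∫ x in Ω, q1 (curl2 (u t)) x) ≤ (2/μ) * (LpV 2 Ω (fun x k => ρ t x * matD u t x k)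
        + LpV 2 Ω (fun x k => dot (B t x) (grad (fun y => B t y k) x))) ∧
    LpV 2 Ω (fun x k => dot (B t x) (grad (fun y => B t y k) x)) ≤
      LpS 2 Ω (fun x => √(nsq (B t x)) * √(gnsq (B t) x)) ∧
    ContDiff ℝ 1 (fun x => (2 * μ + lam) * div2 (u t) x - (a * ρ t x ^ γ - Pbar Ω a γ ρ t)) ∧
    ContDiff ℝ 1 (Fflux Ω a γ μ lam ρ u B t) ∧
    ∫ x in Ω, ((2 * μ + lam) * div2 (u t) x - (a * ρ t x ^ γ - Pbar Ω a γ ρ t)) = 0 ∧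
    ∫ x in Ω, Fflux Ω a γ μ lam ρ u B t x = -(∫ x in Ω, nsq (B t x)) / 2 ∧
    √(∫ x in Ω, q1 (fun x => (2 * μ + lam) * div2 (u t) x - (a * ρ t x ^ γ - Pbar Ω a γ ρ t)) x) ≤
      2 * √(∫ x in Ω, q1 (Fflux Ω a γ μ lam ρ u B t) x)
        + 2 * LpS 2 Ω (fun x => √(nsq (B t x)) * √(gnsq (B t) x)) := by
  have r := sp hρ t
  have U := fun i => sp (hu i) t
  have Bs := fun i => sp (hB i) t
  have hP : ContDiff ℝ 1 (fun x => a * ρ t x ^ γ) := press_c1 hγ r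
  have hG : ContDiff ℝ 1 (fun x => (2 * μ + lam) * div2 (u t) x - (a * ρ t x ^ γ - Pbar Ω a γ ρ t)) :=
    (contDiff_const.mul (cd_c1 (cd_div U))).sub (hP.sub contDiff_const)
  have hN : ContDiff ℝ 1 (fun x => (1/2) * nsq (B t x)) := contDiff_const.mul (cd_c1 (cd_nsq Bs))
  have hFe : Fflux Ω a γ μ lam ρ u B t = fun x =>
      ((2 * μ + lam) * div2 (u t) x - (a * ρ t x ^ γ - Pbar Ω a γ ρ t)) - (1/2) * nsq (B t x) := by
    ext x; unfold Fflux; ring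
  have hF : ContDiff ℝ 1 (Fflux Ω a γ μ lam ρ u B t) := by rw [hFe]; exact hG.sub hN
  have hbc : ∀ i, Continuous fun x => dot (B t x) (grad (fun y => B t y i) x) := by
    intro i
    unfold dot grad
    exact continuous_finsetSum _ fun j _ => (Bs j).continuous.mul (c1_pd (cd_c1 (Bs i)) j)
  have hns : Continuous fun x => nsq (B t x) := nsq_cont fun i => (Bs i).continuous
  have hgn : Continuous (gnsq (B t)) := gnsq_cont fun i => cd_c1 (Bs i)
  have hI : IntegrableOn (fun x => nsq (B t x) * gnsq (B t) x) Ω := D.intOn (hns.mul hgn)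
  have hcore := D.core (F := Fflux Ω a γ μ lam ρ u B t) (ω := curl2 (u t))
    (b := fun x k => dot (B t x) (grad (fun y => B t y k) x))
    (m := fun x k => ρ t x * matD u t x k) hμ hF (cd_curl U)
    (fun x hx => (hs.slipU t ht x hx).2) hbc
    (fun x hx => by
      have := mom hγ hρ hu hB hs ht hx 0
      rw [lap_zero U] at this; linarith)
    (fun x hx => by
      have := mom hγ hρ hu hB hs ht hx 1
      rw [lap_one U] at this; linarith)
  have hGi : ∫ x in Ω, ((2 * μ + lam) * div2 (u t) x - (a * ρ t x ^ γ - Pbar Ω a γ ρ t)) = 0 := by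
    have i1 : IntegrableOn (fun x => (2 * μ + lam) * div2 (u t) x) Ω :=
      D.intOn (continuous_const.mul (cd_div U).continuous)
    have i2 : IntegrableOn (fun x => a * ρ t x ^ γ - Pbar Ω a γ ρ t) Ω :=
      D.intOn (hP.continuous.sub continuous_const)
    rw [integral_sub i1 i2, integral_const_mul,
      D.div_eq (fun i => cd_c1 (U i)) fun x hx => dot_normal (D.gr x hx) (hn x hx) (hs.slipU t ht x hx).1]
    have := D.int_press hP.continuous
    unfold Pbar
    rw [this]; ring
  refine ⟨hcore.1, hcore.2, ?_, hG, hF, hGi, ?_, ?_⟩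
  · rw [LpV_two, bb_sq]
    apply sqrt_le_sqrt
    exact integral_mono (D.intOn (nsq_cont hbc)) hI fun x => BgB x
  · rw [hFe]
    rw [integral_sub (D.intOn hG.continuous) (D.intOn hN.continuous), hGi, integral_const_mul]
    ring
  · rw [bb_sq]
    apply sqrt_two_le (integral_nonneg fun x => q1_nonneg _ _)
      (integral_nonneg fun x => mul_nonneg (nsq_nonneg _) (gnsq_nonneg _ _))
    have iQ : IntegrableOn (fun x => 2 * q1 (Fflux Ω a γ μ lam ρ u B t) x) Ω :=
      D.intOn (continuous_const.mul (q1_cont hF))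
    have iR : IntegrableOn (fun x => 2 * (nsq (B t x) * gnsq (B t) x)) Ω :=
      D.intOn (continuous_const.mul (hns.mul hgn))
    rw [← integral_const_mul, ← integral_const_mul, ← integral_add iQ iR]
    refine integral_mono (D.intOn (q1_cont hG)) (iQ.add iR) fun x => ?_
    have e : (fun x => (2 * μ + lam) * div2 (u t) x - (a * ρ t x ^ γ - Pbar Ω a γ ρ t))
        = fun x => Fflux Ω a γ μ lam ρ u B t x + (1/2) * nsq (B t x) := by
      ext x; rw [hFe]; ring
    have h1 := q1_nsq Bs x
    have da : DifferentiableAt ℝ (Fflux Ω a γ μ lam ρ u B t) x := hF.differentiable (by norm_num) x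
    have db : DifferentiableAt ℝ (fun x => (1/2) * nsq (B t x)) x := hN.differentiable (by norm_num) x
    show q1 _ x ≤ 2 * q1 (Fflux Ω a γ μ lam ρ u B t) x + 2 * (nsq (B t x) * gnsq (B t) x)
    rw [e]
    unfold q1 at h1 ⊢
    rw [pd_add 0 da db, pd_add 1 da db]
    nlinarith [sq_nonneg (pd 0 (Fflux Ω a γ μ lam ρ u B t) x - pd 0 (fun x => (1/2) * nsq (B t x)) x),
      sq_nonneg (pd 1 (Fflux Ω a γ μ lam ρ u B t) x - pd 1 (fun x => (1/2) * nsq (B t x)) x)]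

/-- Lemma 2.7, estimates (2.5)–(2.7).
For smooth solutions of compressible MHD with Navier-slip boundary conditions and
`2 ≤ p < ∞`, with `C = C(p, μ, Ω)`:
(i) `‖∇𝒫u‖_{L^p} + ‖ω‖_{L^p} ≤ C(‖ρu̇‖_{L²}+‖B·∇B‖_{L²})^{1−2/p}‖∇u‖_{L²}^{2/p} + C‖∇u‖_{L²}`;
(ii) `‖F‖_{H¹} ≤ C(‖ρu̇‖_{L²}+‖∇u‖_{L²}+‖|B||∇B|‖_{L²}+‖B‖²_{L⁴})`;
(iii) `‖F‖_{L^p} ≤ C[(2μ+λ)‖div u‖_{L²}+‖P−P̄‖_{L²}]^{2/p}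
        (‖ρu̇‖_{L²}+‖∇u‖_{L²}+‖|B||∇B|‖_{L²})^{1−2/p} + C‖B‖²_{L^{2p}}`,
`𝒫u` being expressed through a Helmholtz decomposition `u = v + ∇q`. -/
theorem stmt_9
    (Ω : Set V2) (n : V2 → V2) (hΩ : SmoothDomain Ω n) (hconv : Convex ℝ Ω)
    (μ : ℝ) (hμ : 0 < μ) (p : ℝ) (hp : 2 ≤ p) :
    ∃ C > (0:ℝ), ∀ (a γ lam ν T : ℝ) (ρ : ℝ → V2 → ℝ) (u B : ℝ → V2 → V2),
      0 < a → 1 < γ → 0 ≤ μ + lam → 0 < ν → 0 < T →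
      Smooth2 ρ → Smooth2V u → Smooth2V B →
      IsMHDSol Ω n a γ μ lam ν (Ioc 0 T) ρ u B →
      ∀ t ∈ Ioc 0 T,
        (∀ (v : V2 → V2) (q : V2 → ℝ),
          (∀ i, ContDiff ℝ (⊤ : ℕ∞) fun y => v y i) → ContDiff ℝ (⊤ : ℕ∞) q →
          (∀ x ∈ Ω, u t x = v x + grad q x) →
          (∀ x ∈ Ω, div2 v x = 0) →
          (∀ x ∈ frontier Ω, dot (v x) (n x) = 0) →
          LpG p Ω v + LpS p Ω (curl2 (u t))
            ≤ C * (LpV 2 Ω (fun x k => ρ t x * matD u t x k)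
                  + LpV 2 Ω (fun x k => dot (B t x) (grad (fun y => B t y k) x)))
                    ^ (1 - 2 / p)
                * (LpG 2 Ω (u t)) ^ (2 / p)
              + C * LpG 2 Ω (u t)) ∧
        (LpS 2 Ω (Fflux Ω a γ μ lam ρ u B t)
            + LpV 2 Ω (grad (Fflux Ω a γ μ lam ρ u B t))
          ≤ C * (LpV 2 Ω (fun x k => ρ t x * matD u t x k)
              + LpG 2 Ω (u t)
              + LpS 2 Ω (fun x => Real.sqrt (nsq (B t x)) * Real.sqrt (gnsq (B t) x))
              + (LpV 4 Ω (B t)) ^ 2)) ∧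
        (LpS p Ω (Fflux Ω a γ μ lam ρ u B t)
          ≤ C * ((2 * μ + lam) * LpS 2 Ω (div2 (u t))
                + LpS 2 Ω (fun x => a * ρ t x ^ γ - Pbar Ω a γ ρ t)) ^ (2 / p)
              * (LpV 2 Ω (fun x k => ρ t x * matD u t x k)
                + LpG 2 Ω (u t)
                + LpS 2 Ω (fun x => Real.sqrt (nsq (B t x)) * Real.sqrt (gnsq (B t) x)))
                  ^ (1 - 2 / p)
            + C * (LpV (2 * p) Ω (B t)) ^ 2) := by
  obtain ⟨φ, hφ, heq, hfr, hgr, hn⟩ := hΩ.defining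
  have D : Dom Ω φ := ⟨hΩ.nonempty, hΩ.bounded, hφ, heq, hfr, hgr, hconv⟩
  have hp0 : 0 < p := by linarith
  obtain ⟨C1, hC1, H1⟩ := D.part1 hμ hp
  obtain ⟨C2, hC2, H2⟩ := D.part2
  obtain ⟨C3, hC3, H3⟩ := D.part3 hp
  set K := 2 * C3 * 2 ^ (2/p) * 6 ^ (1-2/p) with hK
  have hK0 : 0 ≤ K := by positivity
  refine ⟨1 + C1 + 2 * (C2 + 1) + K, by positivity, ?_⟩
  intro a γ lam ν T ρ u B ha hγ hml hν hT hρ hu hB hs t ht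
  set C := 1 + C1 + 2 * (C2 + 1) + K with hC
  obtain ⟨m1, m2, m3, hG, hF, hGi, hFi, m4⟩ := D.main hn hμ hγ hρ hu hB hs ht
  have U := fun i => sp (hu i) t
  have Bs := fun i => sp (hB i) t
  have hP : ContDiff ℝ 1 (fun x => a * ρ t x ^ γ) := press_c1 hγ (sp hρ t)
  have a1 := LpV_nonneg 2 Ω (fun x k => ρ t x * matD u t x k)
  have a2 := LpV_nonneg 2 Ω (fun x k => dot (B t x) (grad (fun y => B t y k) x))
  have a3 := LpG_nonneg 2 Ω (u t)
  have a4 := LpS_nonneg 2 Ω (fun x => Real.sqrt (nsq (B t x)) * Real.sqrt (gnsq (B t) x))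
  refine ⟨?_, ?_, ?_⟩
  · intro v q hv hq hdec hdiv hbd
    refine (H1 (u t) _ U (add_nonneg a1 a2) m2 v q hv hq hdec hdiv
      fun x hx => dot_normal (D.gr x hx) (hn x hx) (hbd x hx)).trans ?_
    rw [mul_assoc C]
    have hCC : C1 ≤ C := by rw [hC]; linarith
    gcongr
  · have h1 := H2 _ (B t) hF (fun i => (Bs i).continuous) hFi
    have h2 : LpV 2 Ω (grad (Fflux Ω a γ μ lam ρ u B t))
        = √(∫ x in Ω, q1 (Fflux Ω a γ μ lam ρ u B t) x) := by
      rw [LpV_two]; congr 2; ext x; simp [nsq, grad, q1]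
    rw [h2]
    have h3 := mul_le_mul_of_nonneg_left (m1.trans
      (mul_le_mul_of_nonneg_left (add_le_add_right m3 _) zero_le_two)) (by linarith : 0 ≤ C2 + 1)
    have h5 : 0 ≤ LpV 4 Ω (B t) ^ 2 := by positivity
    set A1 := LpV 2 Ω (fun x k => ρ t x * matD u t x k)
    set A3 := LpG 2 Ω (u t)
    set A4 := LpS 2 Ω (fun x => Real.sqrt (nsq (B t x)) * Real.sqrt (gnsq (B t) x))
    set A5 := LpV 4 Ω (B t) ^ 2
    have hCC : 2 * (C2 + 1) ≤ C := by rw [hC]; linarith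
    have h6 : 2 * (C2 + 1) * (A1 + A3 + A4 + A5) ≤ C * (A1 + A3 + A4 + A5) := by gcongr
    have h7 := mul_nonneg hC2 a3
    have h8 := mul_nonneg hC2 h5
    linarith
  · have hl : 0 ≤ 2 * μ + lam := by linarith
    have hFe : Fflux Ω a γ μ lam ρ u B t = fun x =>
        ((2 * μ + lam) * div2 (u t) x - (a * ρ t x ^ γ - Pbar Ω a γ ρ t)) + -((1/2) * nsq (B t x)) := by
      ext x; unfold Fflux; ring
    have hnc : Continuous fun x => -((1/2) * nsq (B t x)) :=
      (continuous_const.mul (cd_nsq Bs).continuous).neg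
    have b1 : LpS p Ω (Fflux Ω a γ μ lam ρ u B t) ≤ 2 * (LpS p Ω (fun x =>
        (2 * μ + lam) * div2 (u t) x - (a * ρ t x ^ γ - Pbar Ω a γ ρ t)) + (1/2) * LpV (2 * p) Ω (B t) ^ 2) := by
      rw [hFe]
      have := D.LpS_add_le hp hG.continuous hnc
      rwa [LpS_neg, LpS_const_mul hp0 Ω (by norm_num), LpS_nsq hp0] at this
    have b2 : LpS 2 Ω (fun x => (2 * μ + lam) * div2 (u t) x - (a * ρ t x ^ γ - Pbar Ω a γ ρ t))
        ≤ 2 * ((2 * μ + lam) * LpS 2 Ω (div2 (u t))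
          + LpS 2 Ω (fun x => a * ρ t x ^ γ - Pbar Ω a γ ρ t)) := by
      have i1 : Continuous (fun x => (2 * μ + lam) * div2 (u t) x) :=
        continuous_const.mul (cd_div U).continuous
      have i2 : Continuous (fun x => -(a * ρ t x ^ γ - Pbar Ω a γ ρ t)) :=
        (hP.continuous.sub continuous_const).neg
      have := D.LpS_add_le le_rfl i1 i2
      rw [LpS_neg, LpS_const_mul two_pos Ω hl] at this
      simpa only [← sub_eq_add_neg] using this
    have b3 := H3 _ hG hGi
    have a5 := LpS_nonneg 2 Ω (fun x => (2 * μ + lam) * div2 (u t) x - (a * ρ t x ^ γ - Pbar Ω a γ ρ t))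
    have a6 := LpS_nonneg 2 Ω (div2 (u t))
    have a7 := LpS_nonneg 2 Ω (fun x => a * ρ t x ^ γ - Pbar Ω a γ ρ t)
    have a8 : 0 ≤ LpV (2 * p) Ω (B t) ^ 2 := by positivity
    set A1 := LpV 2 Ω (fun x k => ρ t x * matD u t x k)
    set A2 := LpV 2 Ω (fun x k => dot (B t x) (grad (fun y => B t y k) x))
    set A3 := LpG 2 Ω (u t)
    set A4 := LpS 2 Ω (fun x => Real.sqrt (nsq (B t x)) * Real.sqrt (gnsq (B t) x))
    set A5 := LpS 2 Ω (fun x => (2 * μ + lam) * div2 (u t) x - (a * ρ t x ^ γ - Pbar Ω a γ ρ t))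
    set A8 := LpV (2 * p) Ω (B t) ^ 2
    set A := (2 * μ + lam) * LpS 2 Ω (div2 (u t))
          + LpS 2 Ω (fun x => a * ρ t x ^ γ - Pbar Ω a γ ρ t) with hA
    have hA0 : 0 ≤ A := add_nonneg (mul_nonneg hl a6) a7
    set E := A1 + A3 + A4 with hE
    have hE0 : 0 ≤ E := by positivity
    set Q := √(∫ x in Ω, q1 (fun x => (2 * μ + lam) * div2 (u t) x - (a * ρ t x ^ γ - Pbar Ω a γ ρ t)) x)
      with hQ
    have hQ0 : 0 ≤ Q := sqrt_nonneg _
    have b4 : Q ≤ 6 * E := by rw [hE]; linarith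
    have hth : 0 ≤ 2/p := by positivity
    have hth2 : 0 ≤ 1 - 2/p := by
      rw [sub_nonneg, div_le_one hp0]; exact hp
    have b5 : A5 ^ (2/p) ≤ 2 ^ (2/p) * A ^ (2/p) := by
      rw [← mul_rpow zero_le_two hA0]; exact rpow_le_rpow a5 b2 hth
    have b6 : Q ^ (1-2/p) ≤ 6 ^ (1-2/p) * E ^ (1-2/p) := by
      rw [← mul_rpow (by norm_num) hE0]; exact rpow_le_rpow hQ0 b4 hth2
    have b7 : C3 * A5 ^ (2/p) * Q ^ (1-2/p) ≤
        C3 * (2 ^ (2/p) * A ^ (2/p)) * (6 ^ (1-2/p) * E ^ (1-2/p)) := by gcongr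
    have hCK : K ≤ C := by rw [hC]; linarith
    have hC1' : 1 ≤ C := by rw [hC]; linarith
    have b8 : K * (A ^ (2/p) * E ^ (1-2/p)) ≤ C * (A ^ (2/p) * E ^ (1-2/p)) := by gcongr
    have b9 : 1 * A8 ≤ C * A8 := by gcongr
    have b10 : K * (A ^ (2/p) * E ^ (1-2/p)) =
        2 * (C3 * (2 ^ (2/p) * A ^ (2/p)) * (6 ^ (1-2/p) * E ^ (1-2/p))) := by rw [hK]; ring
    rw [mul_assoc C]
    linarith

end MHD
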